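/- arXiv:math/0702156 — 2 statements merged into one kernel-verified Lean document; each statement's English description precedes it below -/
import Mathlib

section
/- Let p ≥ 7 be an odd integer and let n ≥ 0 be an integer. Then there exists a function u : ℝ → ℝ that is real-analytic on a neighborhood of the interval [0,1], satisfies the self-similar profile equation (1−ρ²)u''(ρ) + (2/ρ − (2+2α)ρ)u'(ρ) − α(α+1)u(ρ) + u(ρ)^p = 0 for all ρ ∈ (0,1), satisfies u'(0) = 0, and is such that the set { ρ ∈ (0,1) : u(ρ) = b∞ ρ^{−α} } has exactly n+1 elements. -/
open Set Real Filter

/-- The exponent `α = 2/(p-1)`. -/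
noncomputable def alphaP (p : ℕ) : ℝ := 2 / ((p : ℝ) - 1)

/-- `b₀ = (2(p+1)/(p-1)²)^(1/(p-1))`, the constant solution. -/
noncomputable def bZero (p : ℕ) : ℝ :=
  (2 * ((p : ℝ) + 1) / ((p : ℝ) - 1) ^ 2) ^ ((1 : ℝ) / ((p : ℝ) - 1))

/-- `b∞ = (2(p-3)/(p-1)²)^(1/(p-1))`. -/
noncomputable def bInfty (p : ℕ) : ℝ :=
  (2 * ((p : ℝ) - 3) / ((p : ℝ) - 1) ^ 2) ^ ((1 : ℝ) / ((p : ℝ) - 1))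

/-- The singular static solution `u∞(ρ) = b∞ ρ^(-α)`. -/
noncomputable def uInfty (p : ℕ) (ρ : ℝ) : ℝ := bInfty p * ρ ^ (-(alphaP p))

/-- The self-similar profile equation
`(1-ρ²)u'' + (2/ρ - (2+2α)ρ)u' - α(α+1)u + u^p = 0` at the point `ρ`. -/
def ProfileEq (p : ℕ) (u : ℝ → ℝ) (ρ : ℝ) : Prop :=
  (1 - ρ ^ 2) * deriv (deriv u) ρ + (2 / ρ - (2 + 2 * alphaP p) * ρ) * deriv u ρ
    - alphaP p * (alphaP p + 1) * u ρ + u ρ ^ p = 0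


namespace SS
open Set Real Filter Topology
open scoped ContDiff unitInterval

theorem ift_curve {X : Type*} [NormedAddCommGroup X] [NormedSpace ℝ X] [CompleteSpace X]
    (Ψ : ℝ × X → X) (Y0 : X) (hΨ : ContDiffAt ℝ ω Ψ (0, Y0)) (h0 : Ψ (0, Y0) = 0)
    (D : X ≃L[ℝ] X) (hD : HasFDerivAt (fun Y => Ψ (0, Y)) (D : X →L[ℝ] X) Y0)
    (l : Filter ℝ) (hl : l ≤ 𝓝 0) (Y : ℝ → X) (hY : Tendsto Y l (𝓝 Y0))
    (hYe : ∀ᶠ x in l, Ψ (x, Y x) = 0) :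
    ∃ Z : ℝ → X, AnalyticAt ℝ Z 0 ∧ Z 0 = Y0 ∧ ∀ᶠ x in l, Y x = Z x := by
  have hn : (ω : WithTop ℕ∞) ≠ 0 := by simp
  have hdiff : HasFDerivAt Ψ (fderiv ℝ Ψ (0, Y0)) (0, Y0) :=
    (hΨ.differentiableAt hn).hasFDerivAt
  have hcomp : HasFDerivAt (fun Y => Ψ (0, Y))
      (fderiv ℝ Ψ (0, Y0) ∘L .inr ℝ ℝ X) Y0 := by
    have h2 : HasFDerivAt (fun Y : X => ((0:ℝ), Y)) (ContinuousLinearMap.inr ℝ ℝ X) Y0 :=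
      (ContinuousLinearMap.inr ℝ ℝ X).hasFDerivAt
    exact HasFDerivAt.comp Y0 hdiff h2
  have heq : fderiv ℝ Ψ (0, Y0) ∘L .inr ℝ ℝ X = (D : X →L[ℝ] X) := hcomp.unique hD
  have hinv : (fderiv ℝ Ψ (0, Y0) ∘L .inr ℝ ℝ X).IsInvertible := ⟨D, heq.symm⟩
  refine ⟨hΨ.implicitFunction hn hinv, ?_, hΨ.implicitFunction_apply_self hn hinv, ?_⟩
  · exact (hΨ.contDiffAt_implicitFunction hn hinv).analyticAt
  · have ht : Tendsto (fun x => (x, Y x)) l (𝓝 ((0:ℝ), Y0)) := by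
      rw [nhds_prod_eq]
      exact (tendsto_id.mono_right hl).prodMk hY
    have := ht.eventually (hΨ.eventually_apply_eq_iff_implicitFunction hn hinv)
    filter_upwards [this, hYe] with x hx hx2
    exact (hx.1 (by rw [hx2, h0])).symm

/-- Hardy averaging -/
noncomputable def hardyFun (a : ℝ) (f : C(I, ℝ)) (t : ℝ) : ℝ :=
  ∫ r in (0:ℝ)..1, r ^ (a - 1) * IccExtend zero_le_one f (t * r)

theorem rpow_ii {a : ℝ} (ha : 0 < a) :
    IntervalIntegrable (fun r : ℝ => r ^ (a - 1)) MeasureTheory.volume 0 1 :=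
  intervalIntegral.intervalIntegrable_rpow' (by linarith)

theorem hardy_int {a : ℝ} (ha : 0 < a) {h : ℝ → ℝ} (hh : Continuous h) (t : ℝ) :
    IntervalIntegrable (fun r : ℝ => r ^ (a - 1) * h (t * r)) MeasureTheory.volume 0 1 :=
  (rpow_ii ha).mul_continuousOn (by fun_prop)

theorem ext_cont (f : C(I, ℝ)) : Continuous (IccExtend (zero_le_one (α := ℝ)) f) :=
  f.continuous.Icc_extend'

theorem ext_bd (f : C(I, ℝ)) (x : ℝ) : |IccExtend (zero_le_one (α := ℝ)) f x| ≤ ‖f‖ :=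
  f.norm_coe_le_norm _

theorem hardy_cont {a : ℝ} (ha : 0 < a) (f : C(I, ℝ)) : Continuous (hardyFun a f) := by
  unfold hardyFun
  apply intervalIntegral.continuous_of_dominated_interval
    (bound := fun r => r ^ (a - 1) * ‖f‖)
  · intro x
    exact (hardy_int ha (ext_cont f) x).aestronglyMeasurable_restrict_uIoc
  · intro x
    refine Eventually.of_forall fun r hr => ?_
    rw [uIoc_of_le zero_le_one] at hr
    rw [norm_mul, Real.norm_of_nonneg (rpow_nonneg hr.1.le _)]
    exact mul_le_mul_of_nonneg_left (ext_bd f _) (rpow_nonneg hr.1.le _)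
  · exact (rpow_ii ha).mul_const _
  · refine Eventually.of_forall fun r hr => ?_
    have := ext_cont f
    fun_prop

noncomputable def hardy (a : ℝ) (ha : 0 < a) : C(I, ℝ) →L[ℝ] C(I, ℝ) :=
  LinearMap.mkContinuous
    { toFun := fun f => ⟨fun t => hardyFun a f t, (hardy_cont ha f).comp continuous_subtype_val⟩
      map_add' := by
        intro f g
        ext t
        simp only [hardyFun, ContinuousMap.coe_mk, ContinuousMap.add_apply]
        rw [← intervalIntegral.integral_add (hardy_int ha (ext_cont f) t)
          (hardy_int ha (ext_cont g) t)]
        congr 1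
        ext r
        simp [IccExtend, mul_add]
      map_smul' := by
        intro k f
        ext t
        simp only [hardyFun, ContinuousMap.coe_mk, ContinuousMap.smul_apply, smul_eq_mul,
          RingHom.id_apply]
        rw [← intervalIntegral.integral_const_mul]
        congr 1
        ext r
        simp [IccExtend]
        ring }
    (∫ r in (0:ℝ)..1, r ^ (a - 1)) (by
      intro f
      have h0 : 0 ≤ ∫ r in (0:ℝ)..1, r ^ (a - 1) :=
        intervalIntegral.integral_nonneg zero_le_one fun r hr => rpow_nonneg hr.1 _
      rw [ContinuousMap.norm_le _ (by positivity)]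
      intro t
      simp only [hardyFun, LinearMap.coe_mk, AddHom.coe_mk, ContinuousMap.coe_mk]
      rw [← intervalIntegral.integral_mul_const]
      apply intervalIntegral.norm_integral_le_of_norm_le zero_le_one _
        ((rpow_ii ha).mul_const _)
      refine Eventually.of_forall fun r hr => ?_
      rw [norm_mul, Real.norm_of_nonneg (rpow_nonneg hr.1.le _)]
      exact mul_le_mul_of_nonneg_left (ext_bd f _) (rpow_nonneg hr.1.le _))

theorem hardy_apply {a : ℝ} (ha : 0 < a) (f : C(I, ℝ)) (t : I) :
    hardy a ha f t = ∫ r in (0:ℝ)..1, r ^ (a - 1) * IccExtend zero_le_one f (t * r) := rfl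

/-- if `f` is the restriction of `x ↦ h (lam x)` -/
theorem hardy_apply' {a : ℝ} (ha : 0 < a) (f : C(I, ℝ)) (h : ℝ → ℝ)
    (hf : ∀ t : I, f t = h t) (t : I) :
    hardy a ha f t = ∫ r in (0:ℝ)..1, r ^ (a - 1) * h (t * r) := by
  rw [hardy_apply]
  apply intervalIntegral.integral_congr
  intro r hr
  rw [uIcc_of_le zero_le_one] at hr
  have hm : (t:ℝ) * r ∈ Icc (0:ℝ) 1 :=
    ⟨mul_nonneg t.2.1 hr.1, mul_le_one₀ t.2.2 hr.1 hr.2⟩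
  simp only
  rw [IccExtend_of_mem _ _ hm, hf]

noncomputable def iota : C(I, ℝ) := ⟨fun t => t, continuous_subtype_val⟩

noncomputable def curve (u : ℝ → ℝ) (hu : Continuous u) (x0 lam : ℝ) : C(I, ℝ) :=
  ⟨fun t => u (x0 + lam * t), by fun_prop⟩

theorem curve_cont (u : ℝ → ℝ) (hu : Continuous u) (x0 : ℝ) :
    Continuous (curve u hu x0) := by
  have : curve u hu x0 = (ContinuousMap.curry ⟨fun q : ℝ × I => u (x0 + q.1 * q.2), by fun_prop⟩) := by
    ext; rfl
  rw [this]
  exact ContinuousMap.continuous _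

theorem curve_zero (u : ℝ → ℝ) (hu : Continuous u) (x0 : ℝ) :
    curve u hu x0 0 = ContinuousMap.const I (u x0) := by
  ext t; simp [curve]

noncomputable def Gop (k : ℝ) (p : ℕ) (U : C(I, ℝ)) : C(I, ℝ) := k • U - U ^ p

theorem Gop_cd (k : ℝ) (p : ℕ) : ContDiff ℝ ω (Gop k p) := by
  unfold Gop; fun_prop

theorem sing_analytic (a b k : ℝ) (ha : 0 < a) (p : ℕ) (e : ℝ) (he : 0 < e) (u q : ℝ → ℝ)
    (hu : Continuous u) (hq : Continuous q)
    (hu' : ∀ x ∈ Ioo 0 e, HasDerivAt u (q x) x)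
    (hq' : ∀ x ∈ Ioo 0 e, ∃ d, HasDerivAt q d x ∧
      4 * x * (1 - x) * d + (4 * a - 4 * (a + b) * x) * q x = k * u x - u x ^ p)
    (hq0 : 4 * a * q 0 = k * u 0 - u 0 ^ p) :
    ∃ f : ℝ → ℝ, AnalyticAt ℝ f 0 ∧ f 0 = u 0 ∧ ∀ᶠ x in 𝓝[>] 0, u x = f x := by
  let Ψ : ℝ × (C(I, ℝ) × C(I, ℝ)) → C(I, ℝ) × C(I, ℝ) := fun z =>
    (z.2.1 - ContinuousMap.const I (u 0) - z.1 • (iota * hardy 1 one_pos z.2.2),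
     z.2.2 - z.1 • (iota * z.2.2) -
      hardy a ha ((1/4:ℝ) • Gop k p z.2.1 + ((b - 1) * z.1) • (iota * z.2.2)))
  let Y : ℝ → C(I, ℝ) × C(I, ℝ) := fun x => (curve u hu 0 x, curve q hq 0 x)
  have hG := Gop_cd k p
  have hΨ : ContDiff ℝ ω Ψ := by
    have h1 : ContDiff ℝ ω (fun z : ℝ × (C(I, ℝ) × C(I, ℝ)) => Gop k p z.2.1) := by
      exact hG.comp (by fun_prop)
    have h2 : ContDiff ℝ ω (fun z : ℝ × (C(I, ℝ) × C(I, ℝ)) => hardy 1 one_pos z.2.2) :=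
      (hardy 1 one_pos).contDiff.comp (by fun_prop)
    have h3 : ContDiff ℝ ω (fun z : ℝ × (C(I, ℝ) × C(I, ℝ)) => hardy a ha ((1/4:ℝ) • Gop k p z.2.1 + ((b - 1) * z.1) • (iota * z.2.2))) :=
      (hardy a ha).contDiff.comp (by fun_prop)
    fun_prop
  have hcurve : ∀ x ∈ Ico 0 e, Ψ (x, Y x) = 0 := by
    intro x hx
    refine Prod.ext ?_ ?_
    · ext t
      simp only [Ψ, Y, Prod.fst_zero, ContinuousMap.sub_apply, ContinuousMap.smul_apply,
        ContinuousMap.mul_apply, ContinuousMap.const_apply, ContinuousMap.zero_apply, smul_eq_mul]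
      rw [hardy_apply' one_pos _ (fun t => q (x * t)) (by intro t; simp [curve])]
      simp only [curve, iota, ContinuousMap.coe_mk, zero_add, sub_self, rpow_zero, one_mul]
      have h1 : ∫ r in (0:ℝ)..1, (x * t) * q (x * t * r) = u (x * t * 1) - u (x * t * 0) := by
        apply intervalIntegral.integral_eq_sub_of_hasDerivAt_of_le zero_le_one
          (f := fun r => u (x * t * r))
        · fun_prop
        · intro r hr
          rcases eq_or_lt_of_le (mul_nonneg hx.1 t.2.1) with h0 | h0
          · simp only [← h0, zero_mul]
            exact hasDerivAt_const _ _
          · have hm : x * t * r ∈ Ioo 0 e := by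
              refine ⟨mul_pos h0 hr.1, ?_⟩
              have : x * t ≤ x := mul_le_of_le_one_right hx.1 t.2.2
              have : x * t * r ≤ x * t := mul_le_of_le_one_right h0.le hr.2.le
              linarith [hx.2]
            have := (hu' _ hm).comp r ((hasDerivAt_id r).const_mul (x * t))
            simpa [Function.comp_def, mul_comm] using this
        · apply Continuous.intervalIntegrable; fun_prop
      rw [intervalIntegral.integral_const_mul] at h1
      simp only [mul_one, mul_zero] at h1
      have : ∫ r in (0:ℝ)..1, q (x * t * r) = ∫ r in (0:ℝ)..1, q (x * (t * r)) := by
        simp only [mul_assoc]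
      rw [← this]
      linarith
    · ext t
      simp only [Ψ, Y, Prod.snd_zero, ContinuousMap.sub_apply, ContinuousMap.smul_apply,
        ContinuousMap.mul_apply, ContinuousMap.zero_apply, smul_eq_mul]
      rw [hardy_apply' ha _ (fun t => (1/4) * (k * u (x * t) - u (x * t) ^ p) +
        (b - 1) * x * (t * q (x * t))) (by intro t; simp [curve, iota, Gop])]
      simp only [curve, iota, ContinuousMap.coe_mk, zero_add]
      rcases eq_or_lt_of_le (mul_nonneg hx.1 t.2.1) with h0 | h0
      · have h1 : ∀ r : ℝ, x * (t * r) = 0 := fun r => by rw [← mul_assoc, ← h0, zero_mul]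
        have h2 : ∀ r : ℝ, (b - 1) * x * (t * r * q (x * (t * r))) = 0 := fun r => by
          have : (b - 1) * x * (t * r * q (x * (t * r)))
            = (b-1) * (x * t) * (r * q (x * (t * r))) := by ring
          rw [this, ← h0]; ring
        simp only [h2]
        simp only [h1]
        rw [intervalIntegral.integral_mul_const, integral_rpow (by left; linarith)]
        rw [← h0]
        have h3 : (0:ℝ) ^ a = 0 := zero_rpow ha.ne'
        simp [h3]
        field_simp
        linarith
      · have key : ∫ r in (0:ℝ)..1, r ^ (a - 1) * ((1/4) * (k * u (x * (t * r)) - u (x * (t * r)) ^ p) +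
            (b - 1) * x * ((t * r) * q (x * (t * r)))) =
            1 ^ a * (1 - x * (t * 1)) * q (x * (t * 1)) - 0 ^ a * (1 - x * (t * 0)) * q (x * (t * 0)) := by
          apply intervalIntegral.integral_eq_sub_of_hasDerivAt_of_le zero_le_one
            (f := fun r => r ^ a * (1 - x * (t * r)) * q (x * (t * r)))
          · have : Continuous fun r : ℝ => r ^ a := continuous_id.rpow_const (by intro; right; exact ha.le)
            fun_prop
          · intro r hr
            have hm : x * (t * r) ∈ Ioo 0 e := by
              rw [← mul_assoc]
              refine ⟨mul_pos h0 hr.1, ?_⟩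
              have : x * t ≤ x := mul_le_of_le_one_right hx.1 t.2.2
              have : x * t * r ≤ x * t := mul_le_of_le_one_right h0.le hr.2.le
              linarith [hx.2]
            obtain ⟨d, hd, hde⟩ := hq' _ hm
            have hlin : HasDerivAt (fun r : ℝ => x * (t * r)) (x * t) r := by
              simpa using ((hasDerivAt_id r).const_mul (t:ℝ)).const_mul x
            have h1 := HasDerivAt.comp r hd hlin
            have h2 : HasDerivAt (fun r : ℝ => r ^ a) (a * r ^ (a - 1)) r :=
              hasDerivAt_rpow_const (Or.inl hr.1.ne')
            have h3 := (h2.mul (hlin.const_sub 1)).mul h1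
            refine h3.congr_deriv ?_
            have hra : r ^ a = r ^ (a - 1) * r := by
              rw [← rpow_add_one hr.1.ne']; ring_nf
            simp only [Function.comp, Pi.mul_apply, hra]
            have : d * (x * t * r) * (1 - x * (t * r)) = (1/4) * ((k * u (x * (t * r)) - u (x * (t * r)) ^ p)
              - (4 * a - 4 * (a + b) * (x * (t * r))) * q (x * (t * r))) := by
              rw [← hde]; ring
            linear_combination r ^ (a - 1) * this
          · apply hardy_int ha (h := fun y => ((1/4) * (k * u (x * y) - u (x * y) ^ p) +
              (b - 1) * x * (y * q (x * y))))
            fun_prop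
        rw [key, zero_rpow ha.ne', one_rpow]
        ring_nf
  have hY0 : Tendsto Y (𝓝[>] 0) (𝓝 (Y 0)) :=
    (((curve_cont u hu 0).prodMk (curve_cont q hq 0)).tendsto 0).mono_left nhdsWithin_le_nhds
  have hev : ∀ᶠ x in 𝓝[>] (0:ℝ), Ψ (x, Y x) = 0 := by
    filter_upwards [Ioo_mem_nhdsGT he] with x hx
    exact hcurve x ⟨hx.1.le, hx.2⟩
  have hGd := (hG.differentiable (by simp)).differentiableAt (x := (Y 0).1) |>.hasFDerivAt
  let K : C(I, ℝ) →L[ℝ] C(I, ℝ) := -(hardy a ha ∘L ((1/4:ℝ) • fderiv ℝ (Gop k p) (Y 0).1))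
  obtain ⟨Z, hZ, hZ0, hZe⟩ := ift_curve Ψ (Y 0) hΨ.contDiffAt (hcurve 0 ⟨le_rfl, he⟩)
    ((ContinuousLinearEquiv.refl ℝ C(I, ℝ)).skewProd (ContinuousLinearEquiv.refl ℝ C(I, ℝ)) K)
    (by
      have h1 : HasFDerivAt (fun z : C(I, ℝ) × C(I, ℝ) => (1/4:ℝ) • Gop k p z.1)
        (((1/4:ℝ) • fderiv ℝ (Gop k p) (Y 0).1) ∘L ContinuousLinearMap.fst ℝ _ _) (Y 0) :=
        HasFDerivAt.comp (g := (1/4:ℝ) • Gop k p) (Y 0) (hGd.const_smul (1/4:ℝ)) hasFDerivAt_fst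
      have h2 := (hardy a ha).hasFDerivAt.comp (Y 0) h1
      have h3 : HasFDerivAt (fun z : C(I, ℝ) × C(I, ℝ) => z.2 - hardy a ha ((1/4:ℝ) • Gop k p z.1)) _ (Y 0) :=
        hasFDerivAt_snd.sub h2
      have h4 : HasFDerivAt (fun z : C(I, ℝ) × C(I, ℝ) => z.1 - ContinuousMap.const I (u 0))
          (ContinuousLinearMap.fst ℝ _ _) (Y 0) :=
        HasFDerivAt.sub_const _ hasFDerivAt_fst
      have h5 := h4.prodMk h3
      have h6 : (fun z => Ψ (0, z)) = fun z : C(I, ℝ) × C(I, ℝ) => (z.1 - ContinuousMap.const I (u 0), z.2 - hardy a ha ((1/4:ℝ) • Gop k p z.1)) := by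
        ext1 z
        simp [Ψ]
      rw [h6]
      refine h5.congr_fderiv ?_
      ext z <;> simp [K, sub_eq_add_neg])
    (𝓝[>] 0) nhdsWithin_le_nhds Y hY0 hev
  have one_mem : (1:ℝ) ∈ I := ⟨zero_le_one, le_rfl⟩
  let ev : C(I, ℝ) × C(I, ℝ) →L[ℝ] ℝ :=
    (ContinuousMap.evalCLM ℝ (⟨1, one_mem⟩ : I)) ∘L ContinuousLinearMap.fst ℝ _ _
  refine ⟨fun x => ev (Z x), ?_, ?_, ?_⟩
  · exact (ev.analyticAt _).comp hZ
  · simp [hZ0, ev, Y, curve]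
  · filter_upwards [hZe] with x hx
    rw [← hx]
    simp [ev, Y, curve]

theorem reg_analytic (x0 a1 k : ℝ) (p : ℕ) (hx0 : x0 ∈ Ioo (0:ℝ) 1) (e : ℝ) (he : 0 < e)
    (u q : ℝ → ℝ)
    (hu : Continuous u) (hq : Continuous q)
    (hu' : ∀ x ∈ Ioo (x0 - e) (x0 + e), HasDerivAt u (q x) x)
    (hq' : ∀ x ∈ Ioo (x0 - e) (x0 + e), ∃ d, HasDerivAt q d x ∧
      4 * x * (1 - x) * d + (6 - (6 + 4 * a1) * x) * q x = k * u x - u x ^ p) :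
    AnalyticAt ℝ u x0 := by
  let P0 : ℝ := 4 * x0 * (1 - x0)
  have hP0 : P0 ≠ 0 := by
    have h1 := hx0.1
    have h2 : 0 < 1 - x0 := by linarith [hx0.2]
    have : 0 < P0 := by positivity
    exact this.ne'
  let Ψ : ℝ × (C(I, ℝ) × C(I, ℝ)) → C(I, ℝ) × C(I, ℝ) := fun z =>
    (z.2.1 - ContinuousMap.const I (u x0) - z.1 • (iota * hardy 1 one_pos z.2.2),
     P0 • z.2.2 + (z.1 * (4 - 8 * x0)) • (iota * z.2.2) - (4 * z.1 ^ 2) • (iota * (iota * z.2.2))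
      - P0 • ContinuousMap.const I (q x0)
      - z.1 • (iota * hardy 1 one_pos (Gop k p z.2.1 + (-2 + (4 * a1 - 2) * x0) • z.2.2
        + ((4 * a1 - 2) * z.1) • (iota * z.2.2))))
  let Y : ℝ → C(I, ℝ) × C(I, ℝ) := fun x => (curve u hu x0 x, curve q hq x0 x)
  have hG := Gop_cd k p
  have hΨ : ContDiff ℝ ω Ψ := by
    have h1 : ContDiff ℝ ω (fun z : ℝ × (C(I, ℝ) × C(I, ℝ)) => Gop k p z.2.1) := by
      exact hG.comp (by fun_prop)
    have h2 : ContDiff ℝ ω (fun z : ℝ × (C(I, ℝ) × C(I, ℝ)) => hardy 1 one_pos z.2.2) :=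
      (hardy 1 one_pos).contDiff.comp (by fun_prop)
    have h3 : ContDiff ℝ ω (fun z : ℝ × (C(I, ℝ) × C(I, ℝ)) => hardy 1 one_pos
        (Gop k p z.2.1 + (-2 + (4 * a1 - 2) * x0) • z.2.2
        + ((4 * a1 - 2) * z.1) • (iota * z.2.2))) :=
      (hardy 1 one_pos).contDiff.comp (by fun_prop)
    fun_prop
  have hcurve : ∀ x ∈ Ioo (-e) e, Ψ (x, Y x) = 0 := by
    intro x hx
    have hmem : ∀ (t : I) (r : ℝ), r ∈ Ioo (0:ℝ) 1 → x0 + x * (t * r) ∈ Ioo (x0 - e) (x0 + e) := by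
      intro t r hr
      have h1 : 0 ≤ t * r := mul_nonneg t.2.1 hr.1.le
      have h2 : t * r ≤ 1 := mul_le_one₀ t.2.2 hr.1.le hr.2.le
      constructor <;> nlinarith [hx.1, hx.2]
    have hlin : ∀ (t : I) (r : ℝ), HasDerivAt (fun r : ℝ => x0 + x * (t * r)) (x * t) r := by
      intro t r
      simpa using (((hasDerivAt_id r).const_mul (t:ℝ)).const_mul x).const_add x0
    refine Prod.ext ?_ ?_
    · ext t
      simp only [Ψ, Y, Prod.fst_zero, ContinuousMap.sub_apply, ContinuousMap.smul_apply,
        ContinuousMap.mul_apply, ContinuousMap.const_apply, ContinuousMap.zero_apply, smul_eq_mul]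
      rw [hardy_apply' one_pos _ (fun t => q (x0 + x * t)) (by intro t; simp [curve])]
      simp only [curve, iota, ContinuousMap.coe_mk, sub_self, rpow_zero, one_mul]
      have h1 : ∫ r in (0:ℝ)..1, (x * t) * q (x0 + x * (t * r))
          = u (x0 + x * (t * 1)) - u (x0 + x * (t * 0)) := by
        apply intervalIntegral.integral_eq_sub_of_hasDerivAt_of_le zero_le_one
          (f := fun r => u (x0 + x * (t * r)))
        · fun_prop
        · intro r hr
          have := (hu' _ (hmem t r hr)).comp r (hlin t r)
          simpa [Function.comp_def, mul_comm] using this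
        · apply Continuous.intervalIntegrable; fun_prop
      rw [intervalIntegral.integral_const_mul] at h1
      simp only [mul_one, mul_zero, add_zero] at h1
      linarith
    · ext t
      simp only [Ψ, Y, Prod.snd_zero, ContinuousMap.sub_apply, ContinuousMap.smul_apply,
        ContinuousMap.add_apply,
        ContinuousMap.mul_apply, ContinuousMap.const_apply, ContinuousMap.zero_apply, smul_eq_mul]
      rw [hardy_apply' one_pos _ (fun t => (k * u (x0 + x * t) - u (x0 + x * t) ^ p) +
        (-2 + (4 * a1 - 2) * x0) * q (x0 + x * t) + ((4 * a1 - 2) * x) * (t * q (x0 + x * t)))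
        (by intro t; simp [curve, iota, Gop])]
      simp only [curve, iota, ContinuousMap.coe_mk, sub_self, rpow_zero, one_mul]
      have key : ∫ r in (0:ℝ)..1, (x * t) * ((k * u (x0 + x * (t * r)) - u (x0 + x * (t * r)) ^ p) +
        (-2 + (4 * a1 - 2) * x0) * q (x0 + x * (t * r))
          + ((4 * a1 - 2) * x) * ((t * r) * q (x0 + x * (t * r)))) =
          4 * (x0 + x * (t * 1)) * (1 - (x0 + x * (t * 1))) * q (x0 + x * (t * 1)) -
          4 * (x0 + x * (t * 0)) * (1 - (x0 + x * (t * 0))) * q (x0 + x * (t * 0)) := by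
        apply intervalIntegral.integral_eq_sub_of_hasDerivAt_of_le zero_le_one
          (f := fun r => 4 * (x0 + x * (t * r)) * (1 - (x0 + x * (t * r))) * q (x0 + x * (t * r)))
        · fun_prop
        · intro r hr
          obtain ⟨d, hd, hde⟩ := hq' _ (hmem t r hr)
          have h1 := HasDerivAt.comp r hd (hlin t r)
          have h3 := (((hlin t r).const_mul 4).mul ((hlin t r).const_sub 1)).mul h1
          refine h3.congr_deriv ?_
          simp only [Function.comp, Pi.mul_apply]
          linear_combination (x * t) * hde
        · apply Continuous.intervalIntegrable; fun_prop
      rw [intervalIntegral.integral_const_mul] at key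
      simp only [mul_one, mul_zero, add_zero] at key
      simp only [P0]
      linear_combination -key
  have hY0 : Tendsto Y (𝓝 0) (𝓝 (Y 0)) :=
    (((curve_cont u hu x0).prodMk (curve_cont q hq x0)).tendsto 0)
  have hev : ∀ᶠ x in 𝓝 (0:ℝ), Ψ (x, Y x) = 0 := by
    filter_upwards [Ioo_mem_nhds (show -e < 0 by linarith) he] with x hx
    exact hcurve x hx
  obtain ⟨Z, hZ, hZ0, hZe⟩ := ift_curve Ψ (Y 0) hΨ.contDiffAt (hcurve 0 ⟨by linarith, he⟩)
    ((ContinuousLinearEquiv.refl ℝ C(I, ℝ)).prodCongr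
      (ContinuousLinearEquiv.smulLeft (Units.mk0 P0 hP0)))
    (by
      have h3 : HasFDerivAt (fun z : C(I, ℝ) × C(I, ℝ) => P0 • z.2 - P0 • ContinuousMap.const I (q x0))
        (P0 • ContinuousLinearMap.snd ℝ _ _) (Y 0) :=
        HasFDerivAt.sub_const _ (P0 • ContinuousLinearMap.snd ℝ C(I, ℝ) C(I, ℝ)).hasFDerivAt
      have h4 : HasFDerivAt (fun z : C(I, ℝ) × C(I, ℝ) => z.1 - ContinuousMap.const I (u x0))
          (ContinuousLinearMap.fst ℝ _ _) (Y 0) :=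
        HasFDerivAt.sub_const _ hasFDerivAt_fst
      have h5 := h4.prodMk h3
      have h6 : (fun z => Ψ (0, z)) = fun z : C(I, ℝ) × C(I, ℝ) => (z.1 - ContinuousMap.const I (u x0),
          P0 • z.2 - P0 • ContinuousMap.const I (q x0)) := by
        ext1 z
        simp [Ψ]
      rw [h6]
      refine h5.congr_fderiv ?_
      ext z <;> simp)
    (𝓝 0) le_rfl Y hY0 hev
  have one_mem : (1:ℝ) ∈ I := ⟨zero_le_one, le_rfl⟩
  let ev : C(I, ℝ) × C(I, ℝ) →L[ℝ] ℝ :=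
    (ContinuousMap.evalCLM ℝ (⟨1, one_mem⟩ : I)) ∘L ContinuousLinearMap.fst ℝ _ _
  have h1 : AnalyticAt ℝ (fun x => ev (Z x)) 0 := (ev.analyticAt _).comp hZ
  have h2 : AnalyticAt ℝ (fun x => u (x0 + x)) 0 := by
    refine h1.congr ?_
    filter_upwards [hZe] with x hx
    rw [← hx]
    simp [ev, Y, curve]
  have h3 : AnalyticAt ℝ (fun x : ℝ => x - x0) x0 := by fun_prop
  have h4 := AnalyticAt.comp (g := fun x => u (x0 + x)) (f := fun x => x - x0) (x := x0)
    (by simpa using h2) h3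
  simpa [Function.comp_def] using h4

end SS

open Set Real Filter Topology

namespace SS
open Set Real Filter Topology
open scoped ContDiff unitInterval

section level
variable {θ θ' : ℝ → ℝ} {a b l : ℝ}

theorem level_le (hc : ContinuousOn θ (Icc a b)) (hd : ∀ x ∈ Ioo a b, HasDerivAt θ (θ' x) x)
    (hneg : ∀ x ∈ Ioo a b, θ x = l → θ' x < 0) {x y : ℝ} (hx : x ∈ Ioo a b) (hy : y ∈ Icc a b)
    (hxy : x ≤ y) (h : θ x ≤ l) : θ y ≤ l := by
  have := image_le_of_deriv_right_lt_deriv_boundary' (f := θ) (f' := θ') (a := x) (b := y)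
    (B := fun _ => l) (B' := fun _ => 0)
    (hc.mono (Icc_subset_Icc hx.1.le hy.2))
    (fun z hz => (hd z ⟨hx.1.trans_le hz.1, hz.2.trans_le hy.2⟩).hasDerivWithinAt) h
    continuousOn_const (fun z _ => hasDerivWithinAt_const _ _ _)
    (fun z hz hz2 => hneg z ⟨hx.1.trans_le hz.1, hz.2.trans_le hy.2⟩ hz2)
  exact this ⟨hxy, le_rfl⟩

theorem level_lt (hc : ContinuousOn θ (Icc a b)) (hd : ∀ x ∈ Ioo a b, HasDerivAt θ (θ' x) x)
    (hneg : ∀ x ∈ Ioo a b, θ x = l → θ' x < 0) {x y : ℝ} (hx : x ∈ Ioo a b) (hy : y ∈ Ioo a b)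
    (hxy : x < y) (h : θ x ≤ l) : θ y < l := by
  have h1 : ∀ z ∈ Ioo x y, θ z ≤ l := fun z hz =>
    level_le hc hd hneg hx ⟨(hx.1.trans hz.1).le, (hz.2.trans hy.2).le⟩ hz.1.le h
  refine lt_of_le_of_ne (level_le hc hd hneg hx (Ioo_subset_Icc_self hy) hxy.le h) ?_
  intro he
  have h2 := (hasDerivAt_iff_tendsto_slope_left_right.1 (hd y hy)).1
  have h3 : 0 ≤ θ' y := by
    refine ge_of_tendsto h2 ?_
    filter_upwards [Ioo_mem_nhdsLT hxy] with z hz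
    rw [slope_def_field]
    exact div_nonneg_of_nonpos (by linarith [h1 z hz]) (by linarith [hz.2])
  linarith [hneg y hy he]

theorem cos_zero_lvl {x : ℝ} (h : cos x = 0) : ∃ k : ℤ, x = π / 2 - k * π := by
  rw [cos_eq_zero_iff] at h
  obtain ⟨k, hk⟩ := h
  exact ⟨-k, by rw [hk]; push_cast; ring⟩

theorem lvl_cos (k : ℤ) : cos (π / 2 - k * π) = 0 := by
  rw [cos_eq_zero_iff]
  exact ⟨-k, by push_cast; ring⟩

variable (hc : ContinuousOn θ (Icc a b)) (hd : ∀ x ∈ Ioo a b, HasDerivAt θ (θ' x) x)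
    (hneg : ∀ x ∈ Ioo a b, cos (θ x) = 0 → θ' x < 0) (ha : θ a < 3 * π / 2)

include hc hd hneg ha in
theorem lt_start {x : ℝ} (hx : x ∈ Ioo a b) : θ x < 3 * π / 2 := by
  have hab : a < b := hx.1.trans hx.2
  have h1 : ∀ᶠ z in 𝓝[>] a, θ z < 3 * π / 2 := by
    have := (hc a ⟨le_rfl, hab.le⟩).mono (Ioc_subset_Icc_self)
    have h2 : Tendsto θ (𝓝[>] a) (𝓝 (θ a)) := by
      rw [← nhdsWithin_Ioc_eq_nhdsGT hab]; exact this
    exact h2.eventually (gt_mem_nhds ha)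
  obtain ⟨z, hz, hz2⟩ := (h1.and (Ioo_mem_nhdsGT hx.1)).exists
  refine level_lt hc hd (l := 3 * π / 2) (fun y hy h => hneg y hy ?_) ⟨hz2.1, hz2.2.trans hx.2⟩ hx
    hz2.2 hz.le
  rw [h]
  have := lvl_cos (-1)
  rw [← this]; congr 1; push_cast; ring

include hc hd hneg ha in
theorem count_exact (hab : a < b) (ha' : π / 2 < θ a) (n : ℕ) (hb : θ b = -(n * π)) :
    {x ∈ Ioo a b | cos (θ x) = 0}.encard = (n + 1 : ℕ∞) := by
  have hpi := pi_pos
  have hneg' : ∀ k : ℤ, ∀ x ∈ Ioo a b, θ x = π / 2 - k * π → θ' x < 0 := fun k x hx h =>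
    hneg x hx (by rw [h]; exact lvl_cos k)
  have hex : ∀ k : Fin (n + 1), ∃ x ∈ Ioo a b, θ x = π / 2 - ((k : ℕ) : ℤ) * π := by
    intro k
    have := intermediate_value_Ioo' hab.le hc
    have hk : ((k : ℕ) : ℝ) ≤ n := by exact_mod_cast Nat.lt_succ_iff.1 k.2
    have hk0 : (0:ℝ) ≤ ((k : ℕ) : ℝ) := by positivity
    obtain ⟨x, hx, hx2⟩ := this (show π / 2 - ((k : ℕ) : ℤ) * π ∈ Ioo (θ b) (θ a) by
      rw [hb]; push_cast
      constructor <;> nlinarith)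
    exact ⟨x, hx, hx2⟩
  choose g hg hg2 using hex
  have hginj : Function.Injective g := by
    intro i j hij
    have := hg2 i
    rw [hij, hg2 j] at this
    have h2 : (((j:ℕ):ℤ):ℝ) = (((i:ℕ):ℤ):ℝ) := by
      have : ((((j:ℕ):ℤ):ℝ) - (((i:ℕ):ℤ):ℝ)) * π = 0 := by linarith
      rcases mul_eq_zero.1 this with h | h
      · linarith
      · exact absurd h hpi.ne'
    have h3 : (j:ℕ) = (i:ℕ) := by exact_mod_cast h2
    exact (Fin.ext h3).symm
  have hset : {x ∈ Ioo a b | cos (θ x) = 0} = range g := by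
    ext x
    constructor
    · rintro ⟨hx, hcx⟩
      obtain ⟨k, hk⟩ := cos_zero_lvl hcx
      have h1 := lt_start hc hd hneg ha hx
      have h2 := level_le hc hd (hneg' k) hx (right_mem_Icc.2 hab.le) hx.2.le hk.le
      rw [hb] at h2
      rw [hk] at h1
      have hk0 : 0 ≤ k := by
        by_contra hcon
        have : (k:ℝ) ≤ -1 := by exact_mod_cast (by omega : k ≤ -1)
        nlinarith
      have hkn : k ≤ n := by
        by_contra hcon
        have : (n:ℝ) + 1 ≤ k := by exact_mod_cast (by omega : (n:ℤ) + 1 ≤ k)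
        nlinarith
      obtain ⟨i, rfl⟩ := Int.eq_ofNat_of_zero_le hk0
      refine ⟨⟨i, by omega⟩, ?_⟩
      have h3 := hg2 ⟨i, by omega⟩
      simp only at h3
      rcases lt_trichotomy (g ⟨i, by omega⟩) x with h | h | h
      · have := level_lt hc hd (hneg' i) (hg _) hx h h3.le
        linarith
      · exact h
      · have := level_lt hc hd (hneg' i) hx (hg _) h hk.le
        linarith
    · rintro ⟨k, rfl⟩
      exact ⟨hg k, by rw [hg2 k]; exact lvl_cos _⟩
  rw [hset, ← image_univ, hginj.encard_image, Set.encard_univ]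
  simp

include hc hd hneg ha in
theorem count_many (N : ℕ) (x : ℕ → ℝ) (hx : ∀ i ≤ N, x i ∈ Ioo a b)
    (hmono : ∀ i < N, x i < x (i + 1)) (hz : ∀ i ≤ N, cos (θ (x i)) = 0) :
    θ b ≤ π / 2 - N * π := by
  have hpi := pi_pos
  have hneg' : ∀ k : ℤ, ∀ x ∈ Ioo a b, θ x = π / 2 - k * π → θ' x < 0 := fun k x hx h =>
    hneg x hx (by rw [h]; exact lvl_cos k)
  have key : ∀ i ≤ N, θ (x i) ≤ π / 2 - i * π := by
    intro i
    induction i with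
    | zero =>
      intro h
      obtain ⟨k, hk⟩ := cos_zero_lvl (hz 0 h)
      have h1 := lt_start hc hd hneg ha (hx 0 h)
      rw [hk] at h1 ⊢
      have hk0 : 0 ≤ k := by
        by_contra hcon
        have : (k:ℝ) ≤ -1 := by exact_mod_cast (by omega : k ≤ -1)
        nlinarith
      have : (0:ℝ) ≤ k := by exact_mod_cast hk0
      push_cast
      nlinarith
    | succ i ih =>
      intro h
      have h1 := ih (by omega)
      have h2 := level_lt hc hd (hneg' i) (hx i (by omega)) (hx (i+1) h) (hmono i (by omega))
        (by push_cast; exact h1)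
      obtain ⟨k, hk⟩ := cos_zero_lvl (hz _ h)
      rw [hk] at h2 ⊢
      have hk0 : (i:ℤ) + 1 ≤ k := by
        by_contra hcon
        have : (k:ℝ) ≤ i := by exact_mod_cast (by omega : k ≤ i)
        push_cast at h2
        nlinarith
      have : (i:ℝ) + 1 ≤ k := by exact_mod_cast hk0
      push_cast
      nlinarith
  have hxN := hx N le_rfl
  have := level_le hc hd (hneg' N) hxN (right_mem_Icc.2 (hxN.1.trans hxN.2).le) hxN.2.le
    (by push_cast; exact key N le_rfl)
  simpa using this
end level

theorem osc_core (qd η : ℝ) (hqd : 0 < qd) (hη : 0 < η) : ∃ L : ℝ, 0 < L ∧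
    ∀ (t1 : ℝ) (y V A Q : ℝ → ℝ), (∀ t ∈ Icc t1 (t1 + L), HasDerivAt y (V t) t ∧
      HasDerivAt V (-(A t) * V t - Q t * y t) t ∧ 0 ≤ A t ∧ A t ≤ 1 ∧ qd ≤ Q t ∧
      (-η ≤ y t → 1 ≤ Q t) ∧ |y t| ≤ 1) → ∃ t ∈ Icc t1 (t1 + L), y t = 0 := by
  wlog hq1 : qd ≤ 1 generalizing qd
  · obtain ⟨L, hL, h⟩ := this 1 one_pos le_rfl
    refine ⟨L, hL, fun t1 y V A Q hh => h t1 y V A Q fun t ht => ?_⟩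
    obtain ⟨h1, h2, h3, h4, h5, h6, h7⟩ := hh t ht
    exact ⟨h1, h2, h3, h4, by linarith, h6, h7⟩
  have hpi := pi_pos
  set r : ℝ := qd / 4 with hr
  have hr0 : 0 < r := by positivity
  set l1 : ℝ := π / r with hl1
  set l2 : ℝ := 1 / (η * r) with hl2
  have hl10 : 0 < l1 := by positivity
  have hl20 : 0 < l2 := by positivity
  refine ⟨l1 + l2 + 2 * π, by positivity, ?_⟩
  intro t1 y V A Q hh
  by_contra hcon
  push Not at hcon
  set T := t1 + (l1 + l2 + 2 * π) with hT
  let R : ℝ → ℝ := fun t => V t / y t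
  have hR : ∀ t ∈ Icc t1 T, HasDerivAt R (-(R t) ^ 2 - A t * R t - Q t) t := by
    intro t ht
    obtain ⟨h1, h2, -⟩ := hh t ht
    have h0 := hcon t ht
    refine (h2.div h1 h0).congr_deriv ?_
    simp only [R]
    field_simp
    ring
  have steep : ∀ s l : ℝ, 0 < l → t1 ≤ s → s + l ≤ T → ∃ x ∈ Ioo s (s + l),
      R x ^ 2 + A x * R x + Q x < π / l * (1 + R x ^ 2) := by
    intro s l hl hs hsT
    have hsub : ∀ x ∈ Icc s (s + l), x ∈ Icc t1 T := fun x hx => ⟨by linarith [hx.1], by linarith [hx.2]⟩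
    have hφ : ∀ x ∈ Icc s (s + l), HasDerivAt (fun t => arctan (R t))
        (1 / (1 + R x ^ 2) * (-(R x) ^ 2 - A x * R x - Q x)) x := fun x hx => (hR x (hsub x hx)).arctan
    obtain ⟨x, hx, hx2⟩ := exists_hasDerivAt_eq_slope (fun t => arctan (R t)) _
      (show s < s + l by linarith)
      (fun x hx => (hφ x hx).continuousAt.continuousWithinAt)
      (fun x hx => hφ x (Ioo_subset_Icc_self hx))
    refine ⟨x, hx, ?_⟩
    have h1 := neg_pi_div_two_lt_arctan (R (s + l))
    have h2 := arctan_lt_pi_div_two (R s)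
    have h3 : 1 / (1 + R x ^ 2) * (-(R x) ^ 2 - A x * R x - Q x) > -(π / l) := by
      rw [hx2, gt_iff_lt, ← neg_div]
      simp only [add_sub_cancel_left]
      gcongr
      linarith
    have h4 : 0 < 1 + R x ^ 2 := by positivity
    rw [gt_iff_lt, one_div, ← div_eq_inv_mul, lt_div_iff₀ h4] at h3
    linarith
  have phase3 : ∀ s : ℝ, t1 ≤ s → s + 2 * π ≤ T → ∃ x ∈ Ioo s (s + 2 * π), y x < -η := by
    intro s hs hsT
    obtain ⟨x, hx, hx2⟩ := steep s (2 * π) (by positivity) hs hsT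
    refine ⟨x, hx, ?_⟩
    by_contra hy
    obtain ⟨-, -, h3, h4, -, h6, -⟩ := hh x ⟨by linarith [hx.1], by linarith [hx.2]⟩
    have h7 := h6 (not_lt.1 hy)
    have h8 : π / (2 * π) = 1 / 2 := by field_simp
    rw [h8] at hx2
    rcases le_total 0 (R x) with h | h
    · nlinarith [mul_nonneg h3 h, sq_nonneg (R x)]
    · nlinarith [mul_nonneg (sub_nonneg.2 h4) (neg_nonneg.2 h), sq_nonneg (R x + 1)]
  obtain ⟨x1, hx1, hx1R⟩ : ∃ x ∈ Ioo t1 (t1 + l1), R x ≤ -r := by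
    obtain ⟨x, hx, hx2⟩ := steep t1 l1 hl10 le_rfl (by linarith)
    refine ⟨x, hx, ?_⟩
    by_contra hy
    push Not at hy
    obtain ⟨-, -, h3, h4, h5, -, -⟩ := hh x ⟨by linarith [hx.1], by linarith [hx.2]⟩
    have h8 : π / l1 = r := by rw [hl1]; field_simp
    rw [h8] at hx2
    rcases le_total 0 (R x) with h | h
    · nlinarith [mul_nonneg h3 h, sq_nonneg (R x)]
    · nlinarith [mul_nonneg (sub_nonneg.2 h4) (neg_nonneg.2 h), sq_nonneg (R x)]
  have phase2 : ∀ x ∈ Icc x1 T, R x ≤ -r := by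
    have := image_le_of_deriv_right_lt_deriv_boundary' (f := R)
      (f' := fun t => -(R t) ^ 2 - A t * R t - Q t) (a := x1) (b := T)
      (B := fun _ => -r) (B' := fun _ => 0)
      (fun x hx => (hR x ⟨by linarith [hx.1, hx1.1], hx.2⟩).continuousAt.continuousWithinAt)
      (fun x hx => (hR x ⟨by linarith [hx.1, hx1.1], hx.2.le⟩).hasDerivWithinAt) hx1R
      continuousOn_const (fun z _ => hasDerivWithinAt_const _ _ _)
      (fun x hx hxe => by
        obtain ⟨-, -, h3, h4, h5, -, -⟩ := hh x ⟨by linarith [hx.1, hx1.1], hx.2.le⟩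
        rw [hxe]
        nlinarith [sq_nonneg r])
    exact fun x hx => this hx
  have hanti : AntitoneOn (fun t => y t ^ 2 * exp (2 * r * t)) (Icc x1 T) := by
    have hder : ∀ x ∈ Icc x1 T, HasDerivAt (fun t => y t ^ 2 * exp (2 * r * t))
        (2 * exp (2 * r * x) * (y x ^ 2) * (R x + r)) x := by
      intro x hx
      have hxm : x ∈ Icc t1 T := ⟨by linarith [hx.1, hx1.1], hx.2⟩
      have h1 := ((hh x hxm).1.pow 2).mul (((hasDerivAt_id x).const_mul (2 * r)).exp)
      refine h1.congr_deriv ?_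
      have h0 := hcon x hxm
      simp only [R, Pi.pow_apply, id]
      field_simp
      push_cast
      ring
    apply antitoneOn_of_deriv_nonpos (convex_Icc _ _)
    · exact fun x hx => (hder x hx).continuousAt.continuousWithinAt
    · exact fun x hx => (hder x (interior_subset hx)).differentiableAt.differentiableWithinAt
    · intro x hx
      have hx := interior_subset hx
      rw [(hder x hx).deriv]
      have := phase2 x hx
      have h2 : 0 ≤ 2 * exp (2 * r * x) * (y x ^ 2) := by positivity
      nlinarith
  obtain ⟨x, hx, hxη⟩ := phase3 (x1 + l2) (by linarith [hx1.1]) (by linarith [hx1.2])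
  have hxT : x ∈ Icc x1 T := ⟨by linarith [hx.1], by linarith [hx.2, hx1.2]⟩
  have h1 := hanti ⟨le_rfl, by linarith [hx1.2]⟩ hxT hxT.1
  simp only at h1
  have h2 : y x1 ^ 2 ≤ 1 := by
    have := (hh x1 ⟨hx1.1.le, by linarith [hx1.2]⟩).2.2.2.2.2.2
    rw [sq_le_one_iff_abs_le_one]; exact this
  have h3 : y x ^ 2 ≤ exp (-(2 * r * (x - x1))) := by
    have : y x ^ 2 * exp (2 * r * x) ≤ exp (2 * r * x1) :=
      h1.trans (mul_le_of_le_one_left (exp_pos _).le h2)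
    rw [← le_div_iff₀ (exp_pos _), ← exp_sub] at this
    refine this.trans (le_of_eq ?_)
    congr 1; ring
  have h4 : exp (-(2 * r * (x - x1))) ≤ η ^ 2 := by
    have h5 : 1 / η ≤ r * (x - x1) := by
      have : r * l2 = 1 / η := by rw [hl2]; field_simp
      rw [← this]
      have : l2 ≤ x - x1 := by linarith [hx.1]
      gcongr
    have h6 : exp (-(2 * r * (x - x1))) = (exp (r * (x - x1)))⁻¹ ^ 2 := by
      rw [← exp_neg, ← exp_nat_mul]; congr 1; push_cast; ring
    rw [h6]
    have h7 : 1 / η ≤ exp (r * (x - x1)) := by linarith [add_one_le_exp (r * (x - x1))]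
    gcongr
    rw [inv_le_comm₀ (exp_pos _) hη]
    simpa using h7
  nlinarith

theorem osc (al b : ℝ) (N : ℕ) (hal : 0 < al) (hal3 : al ≤ 1 / 3) (hb : 0 < b) (hb1 : b ≤ 1)
    (hN : 1 ≤ N) (hbN : (N : ℝ) * b ^ N = 2 * (1 - al)) (δ : ℝ) (hδ : 0 < δ) :
    ∃ L : ℝ, 0 < L ∧ ∀ (t1 : ℝ) (w V : ℝ → ℝ), exp (2 * (t1 + L)) ≤ 1 / 3 →
      (∀ t ∈ Icc t1 (t1 + L), HasDerivAt w (V t) t ∧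
        HasDerivAt V ((b ^ N * w t - w t ^ (N + 1) - (1 - 2 * al - exp (2 * t)) * V t)
          / (1 - exp (2 * t))) t ∧ δ ≤ w t ∧ w t ≤ 1) →
      ∃ t ∈ Icc t1 (t1 + L), w t = b := by
  let q : ℝ → ℝ := fun w => w * ∑ i ∈ Finset.range N, w ^ i * b ^ (N - 1 - i)
  have hqid : ∀ w, b ^ N * w - w ^ (N + 1) = - q w * (w - b) := by
    intro w
    have := (Commute.all w b).geom_sum₂_mul N
    simp only [q]
    linear_combination w * this
  have hq1 : ∀ w, b ≤ w → 4 / 3 ≤ q w := by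
    intro w hw
    have h1 : ∑ i ∈ Finset.range N, b ^ i * b ^ (N - 1 - i) ≤ ∑ i ∈ Finset.range N, w ^ i * b ^ (N - 1 - i) := by
      gcongr
    have h2 : ∑ i ∈ Finset.range N, b ^ i * b ^ (N - 1 - i) = N * b ^ (N - 1) := by
      rw [Finset.sum_congr rfl (g := fun _ => b ^ (N - 1))]
      · simp
      · intro i hi
        rw [← pow_add]; congr 1
        have := Finset.mem_range.1 hi; omega
    have h3 : b * (N * b ^ (N - 1)) = 2 * (1 - al) := by
      rw [← hbN]
      obtain ⟨M, rfl⟩ : ∃ M, N = M + 1 := ⟨N - 1, by omega⟩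
      simp only [Nat.add_sub_cancel]
      ring
    have h4 : 0 ≤ (N:ℝ) * b ^ (N - 1) := by positivity
    have : b * (N * b ^ (N - 1)) ≤ q w := by
      simp only [q]
      rw [h2] at h1
      apply mul_le_mul hw h1 h4 (by linarith)
    linarith
  have hqc : Continuous q := by simp only [q]; fun_prop
  obtain ⟨η, hη, hηq⟩ : ∃ η > 0, ∀ w, b - η ≤ w → 1 ≤ q w := by
    have h1 : ∀ᶠ w in 𝓝 b, 1 < q w :=
      (hqc.tendsto b).eventually (lt_mem_nhds (by linarith [hq1 b le_rfl]))
    obtain ⟨ε, hε, h⟩ := Metric.eventually_nhds_iff.1 h1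
    refine ⟨ε / 2, by positivity, fun w hw => ?_⟩
    rcases le_total b w with h2 | h2
    · linarith [hq1 w h2]
    · refine (h ?_).le
      rw [Real.dist_eq, abs_lt]; constructor <;> linarith
  have hqd : ∀ w, δ ≤ w → δ * b ^ (N - 1) ≤ q w := by
    intro w hw
    simp only [q]
    have hw0 : 0 ≤ w := hδ.le.trans hw
    apply mul_le_mul hw _ (by positivity) hw0
    have := Finset.single_le_sum (f := fun i => w ^ i * b ^ (N - 1 - i)) (s := Finset.range N)
      (fun i _ => by positivity) (Finset.mem_range.2 hN)
    simpa using this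
  obtain ⟨L, hL, hosc⟩ := osc_core (δ * b ^ (N - 1)) η (by positivity) hη
  refine ⟨L, hL, fun t1 w V hexp hh => ?_⟩
  obtain ⟨t, ht, hty⟩ := hosc t1 (fun t => w t - b) V
    (fun t => (1 - 2 * al - exp (2 * t)) / (1 - exp (2 * t)))
    (fun t => q (w t) / (1 - exp (2 * t))) (by
      intro t ht
      obtain ⟨h1, h2, h3, h4⟩ := hh t ht
      have he : exp (2 * t) ≤ 1 / 3 := (exp_le_exp.2 (by linarith [ht.2])).trans hexp
      have he0 := exp_pos (2 * t)
      have hpos : 0 < 1 - exp (2 * t) := by linarith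
      have hqle : q (w t) ≤ q (w t) / (1 - exp (2 * t)) := by
        rw [le_div_iff₀ hpos]
        have : 0 ≤ q (w t) := le_trans (by positivity) (hqd _ h3)
        nlinarith
      refine ⟨h1.sub_const b, ?_, ?_, ?_, ?_, ?_, ?_⟩
      · refine h2.congr_deriv ?_
        rw [hqid]; field_simp; ring
      · apply div_nonneg _ hpos.le; linarith
      · rw [div_le_one hpos]; linarith
      · exact (hqd _ h3).trans hqle
      · intro h; exact (hηq _ (by linarith)).trans hqle
      · rw [abs_le]; constructor <;> linarith)
  exact ⟨t, ht, by linarith⟩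

end SS


namespace SS
open Set Real Filter Topology
open scoped ContDiff unitInterval

noncomputable def PP (m : ℕ) (s : ℝ) : ℝ := ∑ i ∈ Finset.range m, (1 - s) ^ i

theorem PP_cont (m : ℕ) : Continuous (PP m) := by unfold PP; fun_prop

theorem PP_mul (m : ℕ) (s : ℝ) : s * PP m s = 1 - (1 - s) ^ m := by
  have := mul_neg_geom_sum (1 - s) m
  simp only [PP]; linarith

theorem PP_ge (m : ℕ) (hm : 1 ≤ m) (s : ℝ) (hs : s ≤ 1) : 1 ≤ PP m s := by
  unfold PP
  have := Finset.single_le_sum (f := fun i => (1 - s) ^ i) (s := Finset.range m)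
    (fun i _ => pow_nonneg (by linarith) i) (Finset.mem_range.2 (by omega : 0 < m))
  simpa using this

theorem PP_le (m : ℕ) (s : ℝ) (hs : s ∈ Icc (0:ℝ) 1) : PP m s ≤ m := by
  unfold PP
  calc _ ≤ ∑ i ∈ Finset.range m, (1:ℝ) := Finset.sum_le_sum
        (fun i _ => pow_le_one₀ (by linarith [hs.2]) (by linarith [hs.1]))
    _ = m := by simp

noncomputable def cl (s : ℝ) : ℝ := (projIcc (0:ℝ) 1 zero_le_one s : ℝ)

theorem cl_cont : Continuous cl := continuous_subtype_val.comp continuous_projIcc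
theorem cl_mem (s : ℝ) : cl s ∈ Icc (0:ℝ) 1 := (projIcc (0:ℝ) 1 zero_le_one s).2
theorem cl_of (s : ℝ) (hs : s ∈ Icc (0:ℝ) 1) : cl s = s := by
  unfold cl; rw [projIcc_of_mem zero_le_one hs]

noncomputable def XI (m : ℕ) (g u : ℝ → ℝ) (s : ℝ) : ℝ :=
  ∫ r in (0:ℝ)..1, √r * √(PP m (cl s * r)) * g (u (cl s * r))

noncomputable def XX (m : ℕ) (g u : ℝ → ℝ) (s : ℝ) : ℝ :=
  (m / 4) * (PP m (cl s) * √(PP m (cl s)))⁻¹ * XI m g u s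

theorem XX_int_cont (m : ℕ) (g u : ℝ → ℝ) (hg : Continuous g) (hu : Continuous u) :
    Continuous (Function.uncurry fun s r => √r * √(PP m (cl s * r)) * g (u (cl s * r))) := by
  have h1 := cl_cont
  have h2 := PP_cont m
  unfold Function.uncurry
  fun_prop

theorem XX_cont (m : ℕ) (hm : 1 ≤ m) (g u : ℝ → ℝ) (hg : Continuous g) (hu : Continuous u) :
    Continuous (XX m g u) := by
  have h1 := cl_cont
  have h2 := PP_cont m
  have h3 : Continuous (XI m g u) :=
    intervalIntegral.continuous_parametric_intervalIntegral_of_continuous'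
      (XX_int_cont m g u hg hu) 0 1
  unfold XX
  refine (continuous_const.mul (Continuous.inv₀ (by fun_prop) fun s => ?_)).mul h3
  have := PP_ge m hm (cl s) (cl_mem s).2
  positivity

theorem mulr_mem {s r : ℝ} (hs : s ∈ Icc (0:ℝ) 1) (hr : r ∈ Icc (0:ℝ) 1) : s * r ∈ Icc 0 s :=
  ⟨mul_nonneg hs.1 hr.1, mul_le_of_le_one_right hs.1 hr.2⟩

theorem XX_diff (m : ℕ) (hm : 1 ≤ m) (g u u' : ℝ → ℝ) (hg : Continuous g) (hu : Continuous u)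
    (hu' : Continuous u') (l : ℝ) (hl : 0 ≤ l) (hgl : ∀ x y, |g x - g y| ≤ l * |x - y|) (s : ℝ)
    (hs : s ∈ Icc (0:ℝ) 1) (D : ℝ) (hD : ∀ sg ∈ Icc 0 s, |u sg - u' sg| ≤ D) :
    |XX m g u s - XX m g u' s| ≤ (m / 4) * √m * l * D := by
  have hD0 : 0 ≤ D := (abs_nonneg _).trans (hD 0 ⟨le_rfl, hs.1⟩)
  have hi : ∀ v : ℝ → ℝ, Continuous v → IntervalIntegrable
      (fun r => √r * √(PP m (cl s * r)) * g (v (cl s * r))) MeasureTheory.volume 0 1 := by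
    intro v hv
    have := (XX_int_cont m g v hg hv).comp (by fun_prop : Continuous fun r : ℝ => (s, r))
    exact this.intervalIntegrable 0 1
  have hI : |XI m g u s - XI m g u' s| ≤ √m * l * D := by
    unfold XI
    rw [← intervalIntegral.integral_sub (hi u hu) (hi u' hu')]
    have := intervalIntegral.norm_integral_le_of_norm_le_const (a := (0:ℝ)) (b := 1)
      (C := √m * l * D)
      (f := fun r => √r * √(PP m (cl s * r)) * g (u (cl s * r)) -
        √r * √(PP m (cl s * r)) * g (u' (cl s * r))) ?_
    · simpa using this
    intro r hr
    rw [uIoc_of_le zero_le_one] at hr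
    have hr' : r ∈ Icc (0:ℝ) 1 := ⟨hr.1.le, hr.2⟩
    have hm1 := mulr_mem hs hr'
    rw [cl_of s hs, ← mul_sub, Real.norm_eq_abs, abs_mul, abs_of_nonneg (by positivity), mul_assoc (√m)]
    have e1 : √r ≤ 1 := (Real.sqrt_le_sqrt hr.2).trans (by simp)
    have e2 : √(PP m (s * r)) ≤ √m :=
      Real.sqrt_le_sqrt (PP_le m _ ⟨hm1.1, hm1.2.trans hs.2⟩)
    have e3 : |g (u (s * r)) - g (u' (s * r))| ≤ l * D :=
      (hgl _ _).trans (mul_le_mul_of_nonneg_left (hD _ hm1) hl)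
    have e4 : √r * √(PP m (s * r)) ≤ √m := by nlinarith [Real.sqrt_nonneg (PP m (s*r)), Real.sqrt_nonneg r]
    exact mul_le_mul e4 e3 (abs_nonneg _) (Real.sqrt_nonneg _)
  unfold XX
  rw [← mul_sub, abs_mul, abs_mul, abs_of_nonneg (by positivity : (0:ℝ) ≤ m/4)]
  have hp := PP_ge m hm (cl s) (cl_mem s).2
  have e5 : |(PP m (cl s) * √(PP m (cl s)))⁻¹| ≤ 1 := by
    have : 1 ≤ √(PP m (cl s)) := by rwa [Real.one_le_sqrt]
    rw [abs_of_nonneg (by positivity)]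
    apply inv_le_one_of_one_le₀; nlinarith
  have h6 : (m:ℝ) / 4 * |(PP m (cl s) * √(PP m (cl s)))⁻¹| ≤ m / 4 := by
    have : (0:ℝ) ≤ m / 4 := by positivity
    nlinarith
  calc _ ≤ (m:ℝ)/4 * (√m * l * D) := mul_le_mul h6 hI (abs_nonneg _) (by positivity)
    _ = _ := by ring

theorem XX_Y (m : ℕ) (hm : 1 ≤ m) (g u : ℝ → ℝ) (s : ℝ) (hs : s ∈ Icc (0:ℝ) 1) :
    (1 - (1 - s) ^ m) * √(1 - (1 - s) ^ m) * XX m g u s =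
      ∫ sg in (0:ℝ)..s, (m / 4) * √(1 - (1 - sg) ^ m) * g (u sg) := by
  rcases eq_or_lt_of_le hs.1 with h0 | h0
  · subst h0; simp
  have hp := PP_ge m hm s hs.2
  have hsq : 0 < √(PP m s) := Real.sqrt_pos.2 (by linarith)
  have h1 := intervalIntegral.integral_comp_mul_left (a := (0:ℝ)) (b := 1)
    (fun sg => (m / 4) * √(1 - (1 - sg) ^ m) * g (u sg)) h0.ne'
  simp only [mul_zero, mul_one, smul_eq_mul] at h1
  have h2 : ∫ sg in (0:ℝ)..s, (m / 4) * √(1 - (1 - sg) ^ m) * g (u sg) =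
      s * ∫ r in (0:ℝ)..1, (m / 4) * √(1 - (1 - s * r) ^ m) * g (u (s * r)) := by
    rw [h1]; field_simp
  rw [h2]
  have h3 : ∫ r in (0:ℝ)..1, (m / 4) * √(1 - (1 - s * r) ^ m) * g (u (s * r)) =
      (m / 4 * √s) * XI m g u s := by
    unfold XI
    rw [← intervalIntegral.integral_const_mul]
    apply intervalIntegral.integral_congr
    intro r hr
    rw [uIcc_of_le zero_le_one] at hr
    simp only
    rw [cl_of s hs, ← PP_mul, Real.sqrt_mul (mulr_mem hs hr).1, Real.sqrt_mul hs.1]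
    ring
  rw [h3, ← PP_mul, Real.sqrt_mul hs.1]
  unfold XX
  rw [cl_of s hs]
  field_simp

noncomputable def hat (L : ℝ) (z : C(I, ℝ)) (s : ℝ) : ℝ :=
  exp (L * cl s) * z (projIcc (0:ℝ) 1 zero_le_one s)

theorem hat_cont (L : ℝ) (z : C(I, ℝ)) : Continuous (hat L z) := by
  have := cl_cont
  unfold hat
  exact (by fun_prop : Continuous fun s => exp (L * cl s)).mul
    (z.continuous.comp continuous_projIcc)

noncomputable def UU (m : ℕ) (g : ℝ → ℝ) (c : ℝ) (v : ℝ → ℝ) (s : ℝ) : ℝ :=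
  c + ∫ sg in (0:ℝ)..s, m * (1 - sg) ^ (m - 2) * XX m g v sg

theorem UU_int (m : ℕ) (hm : 1 ≤ m) (g v : ℝ → ℝ) (hg : Continuous g) (hv : Continuous v) :
    Continuous fun sg => m * (1 - sg) ^ (m - 2) * XX m g v sg := by
  have := XX_cont m hm g v hg hv
  fun_prop

theorem UU_deriv (m : ℕ) (hm : 1 ≤ m) (g v : ℝ → ℝ) (hg : Continuous g) (hv : Continuous v)
    (c s : ℝ) : HasDerivAt (UU m g c v) (m * (1 - s) ^ (m - 2) * XX m g v s) s := by
  unfold UU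
  exact ((UU_int m hm g v hg hv).integral_hasStrictDerivAt 0 s).hasDerivAt.const_add c

theorem UU_cont (m : ℕ) (hm : 1 ≤ m) (g v : ℝ → ℝ) (hg : Continuous g) (hv : Continuous v)
    (c : ℝ) : Continuous (UU m g c v) :=
  continuous_iff_continuousAt.2 fun s => (UU_deriv m hm g v hg hv c s).continuousAt

theorem UU_diff (m : ℕ) (hm : 1 ≤ m) (g : ℝ → ℝ) (hg : Continuous g)
    (l : ℝ) (hl : 0 ≤ l) (hgl : ∀ x y, |g x - g y| ≤ l * |x - y|) (K L : ℝ)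
    (hK : K = m * (m / 4 * √m * l)) (hL : L = 2 * K + 1) (c c' : ℝ) (z z' : C(I, ℝ)) (s : ℝ)
    (hs : s ∈ Icc (0:ℝ) 1) :
    |exp (- L * s) * UU m g c (hat L z) s - exp (- L * s) * UU m g c' (hat L z') s|
      ≤ |c - c'| + 1 / 2 * ‖z - z'‖ := by
  have hK0 : 0 ≤ K := by rw [hK]; positivity
  have hLp : 0 < L := by linarith
  have hX : ∀ sg ∈ Icc (0:ℝ) s, |XX m g (hat L z) sg - XX m g (hat L z') sg| ≤
      (m / 4) * √m * l * (exp (L * sg) * ‖z - z'‖) := by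
    intro sg hsg
    have hsg1 : sg ∈ Icc (0:ℝ) 1 := ⟨hsg.1, hsg.2.trans hs.2⟩
    refine XX_diff m hm g _ _ hg (hat_cont _ _) (hat_cont _ _) l hl hgl sg hsg1 _ fun r hr => ?_
    unfold hat
    rw [← mul_sub, abs_mul, abs_of_pos (exp_pos _), cl_of r ⟨hr.1, hr.2.trans hsg1.2⟩]
    refine mul_le_mul (exp_le_exp.2 (mul_le_mul_of_nonneg_left hr.2 hLp.le)) ?_ (abs_nonneg _)
      (exp_pos _).le
    exact (z - z').norm_coe_le_norm _
  have hint : |(∫ sg in (0:ℝ)..s, m * (1 - sg) ^ (m - 2) * XX m g (hat L z) sg) -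
      ∫ sg in (0:ℝ)..s, m * (1 - sg) ^ (m - 2) * XX m g (hat L z') sg| ≤
      ∫ sg in (0:ℝ)..s, K * ‖z - z'‖ * exp (L * sg) := by
    rw [← intervalIntegral.integral_sub
      ((UU_int m hm g _ hg (hat_cont _ _)).intervalIntegrable _ _)
      ((UU_int m hm g _ hg (hat_cont _ _)).intervalIntegrable _ _)]
    rw [← Real.norm_eq_abs]
    refine intervalIntegral.norm_integral_le_of_norm_le hs.1 (Eventually.of_forall fun sg hsg => ?_)
      (Continuous.intervalIntegrable (by fun_prop) _ _)
    have hsg' : sg ∈ Icc (0:ℝ) s := ⟨hsg.1.le, hsg.2⟩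
    rw [← mul_sub, Real.norm_eq_abs, abs_mul]
    have e1 : |(m:ℝ) * (1 - sg) ^ (m - 2)| ≤ m := by
      have h1 : 0 ≤ 1 - sg := by linarith [hsg.2, hs.2]
      have h2 : (1 - sg) ^ (m - 2) ≤ 1 := pow_le_one₀ h1 (by linarith [hsg.1])
      rw [abs_of_nonneg (by positivity)]
      exact mul_le_of_le_one_right (by positivity) h2
    calc _ ≤ (m:ℝ) * ((m / 4) * √m * l * (exp (L * sg) * ‖z - z'‖)) :=
          mul_le_mul e1 (hX sg hsg') (abs_nonneg _) (by positivity)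
      _ = _ := by rw [hK]; ring
  have hexp : ∫ sg in (0:ℝ)..s, K * ‖z - z'‖ * exp (L * sg) =
      K * ‖z - z'‖ * ((exp (L * s) - 1) / L) := by
    rw [intervalIntegral.integral_const_mul, intervalIntegral.integral_comp_mul_left _ hLp.ne']
    simp [integral_exp]; left; field_simp
  rw [hexp] at hint
  unfold UU
  set A := ∫ sg in (0:ℝ)..s, m * (1 - sg) ^ (m - 2) * XX m g (hat L z) sg
  set B := ∫ sg in (0:ℝ)..s, m * (1 - sg) ^ (m - 2) * XX m g (hat L z') sg
  rw [← mul_sub, abs_mul, abs_of_pos (exp_pos _)]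
  have e2 : |c + A - (c' + B)| ≤ |c - c'| + |A - B| := by
    rw [show c + A - (c' + B) = (c - c') + (A - B) by ring]; exact abs_add_le _ _
  have e3 : exp (-L * s) ≤ 1 := by
    rw [Real.exp_le_one_iff]; nlinarith [hs.1]
  have e4 : exp (-L * s) * exp (L * s) = 1 := by rw [← Real.exp_add]; simp
  have hn := norm_nonneg (z - z')
  have e5 : exp (-L * s) * |A - B| ≤ 1 / 2 * ‖z - z'‖ := by
    calc _ ≤ exp (-L * s) * (K * ‖z - z'‖ * ((exp (L * s) - 1) / L)) :=
          mul_le_mul_of_nonneg_left hint (exp_pos _).le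
      _ = K / L * ‖z - z'‖ * (1 - exp (-L * s)) := by
          have : exp (-L * s) * (K * ‖z - z'‖ * ((exp (L * s) - 1) / L)) =
            K / L * ‖z - z'‖ * (exp (-L * s) * exp (L * s) - exp (-L * s)) := by ring
          rw [this, e4]
      _ ≤ K / L * ‖z - z'‖ * 1 := by
          apply mul_le_mul_of_nonneg_left _ (by positivity)
          linarith [exp_pos (-L * s)]
      _ ≤ 1 / 2 * ‖z - z'‖ := by
          rw [mul_one]
          apply mul_le_mul_of_nonneg_right _ hn
          rw [div_le_iff₀ hLp]; linarith
  calc _ ≤ exp (-L * s) * (|c - c'| + |A - B|) := mul_le_mul_of_nonneg_left e2 (exp_pos _).le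
    _ = exp (-L * s) * |c - c'| + exp (-L * s) * |A - B| := by ring
    _ ≤ 1 * |c - c'| + 1 / 2 * ‖z - z'‖ := add_le_add (mul_le_mul_of_nonneg_right e3 (abs_nonneg _)) e5
    _ = _ := by ring

/-- existence and Lipschitz dependence -/
theorem solve (m : ℕ) (hm : 1 ≤ m) (g : ℝ → ℝ) (hg : Continuous g)
    (l : ℝ) (hl : 0 ≤ l) (hgl : ∀ x y, |g x - g y| ≤ l * |x - y|) :
    ∃ (U : ℝ → ℝ → ℝ) (K : ℝ), 0 ≤ K ∧ (∀ c, Continuous (U c)) ∧ (∀ c, U c 0 = c) ∧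
      (∀ c, ∀ s ∈ Icc (0:ℝ) 1, HasDerivAt (U c) (m * (1 - s) ^ (m - 2) * XX m g (U c) s) s) ∧
      (∀ c, g c = 0 → ∀ s ∈ Icc (0:ℝ) 1, U c s = c) ∧
      ∀ c c', ∀ s ∈ Icc (0:ℝ) 1, |U c s - U c' s| ≤ K * |c - c'| := by
  obtain ⟨K, hK⟩ : ∃ K : ℝ, K = m * (m / 4 * √m * l) := ⟨_, rfl⟩
  obtain ⟨L, hL⟩ : ∃ L : ℝ, L = 2 * K + 1 := ⟨_, rfl⟩
  have hd := UU_diff m hm g hg l hl hgl K L hK hL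
  let S : ℝ → C(I, ℝ) → C(I, ℝ) := fun c z =>
    ⟨fun s => exp (- L * s) * UU m g c (hat L z) s, by
      have := UU_cont m hm g _ hg (hat_cont L z) c
      fun_prop⟩
  have hS : ∀ c c' z z', ‖S c z - S c' z'‖ ≤ |c - c'| + 1 / 2 * ‖z - z'‖ := by
    intro c c' z z'
    rw [ContinuousMap.norm_le _ (by positivity)]
    intro s
    exact hd c c' z z' s s.2
  have hc' : ∀ c, ContractingWith (1/2) (S c) := by
    intro c
    refine ⟨by
      rw [← NNReal.coe_lt_coe]; norm_num, LipschitzWith.of_dist_le_mul fun z z' => ?_⟩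
    rw [dist_eq_norm, dist_eq_norm]
    simpa using hS c c z z'
  let Z : ℝ → C(I, ℝ) := fun c => (hc' c).fixedPoint
  have hZ : ∀ c, S c (Z c) = Z c := fun c => (hc' c).fixedPoint_isFixedPt
  have hZd : ∀ c c', ‖Z c - Z c'‖ ≤ 2 * |c - c'| := by
    intro c c'
    have := hS c c' (Z c) (Z c')
    rw [hZ, hZ] at this
    linarith
  have hU : ∀ c, ∀ s ∈ Icc (0:ℝ) 1, UU m g c (hat L (Z c)) s = hat L (Z c) s := by
    intro c s hs
    have h1 := congrArg (fun f : C(I, ℝ) => f ⟨s, hs⟩) (hZ c)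
    have h2 : exp (-L * s) * UU m g c (hat L (Z c)) s = Z c ⟨s, hs⟩ := h1
    unfold hat
    rw [cl_of s hs, projIcc_of_mem zero_le_one hs, ← h2, ← mul_assoc, ← Real.exp_add]
    simp; rfl
  refine ⟨fun c => UU m g c (hat L (Z c)), exp |L| * 2, by positivity,
    fun c => UU_cont m hm g _ hg (hat_cont _ _) c, fun c => by simp [UU], ?_, ?_, ?_⟩
  · intro c s hs
    have h := UU_deriv m hm g _ hg (hat_cont L (Z c)) c s
    have : XX m g (hat L (Z c)) s = XX m g (UU m g c (hat L (Z c))) s := by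
      unfold XX XI
      congr 1
      apply intervalIntegral.integral_congr
      intro r hr
      rw [uIcc_of_le zero_le_one] at hr
      have := mulr_mem (cl_mem s) hr
      simp only
      rw [hU c _ ⟨this.1, this.2.trans (cl_mem s).2⟩]
    rw [← this]; exact h
  · intro c hc s hs
    let z0 : C(I, ℝ) := ⟨fun s => exp (- L * s) * c, by fun_prop⟩
    have hh : ∀ y, hat L z0 y = c := by
      intro y
      have : z0 (projIcc (0:ℝ) 1 zero_le_one y) = exp (- L * cl y) * c := rfl
      unfold hat
      rw [this, ← mul_assoc, ← Real.exp_add]; simp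
    have hx0 : ∀ y, XX m g (hat L z0) y = 0 := by
      intro y; unfold XX XI; simp [hh, hc]
    have h0 : S c z0 = z0 := by
      ext y
      have : S c z0 y = exp (- L * y) * UU m g c (hat L z0) y := rfl
      rw [this]
      unfold UU
      simp only [hx0, mul_zero, intervalIntegral.integral_zero, add_zero]
      rfl
    have h1 : z0 = Z c := (hc' c).fixedPoint_unique h0
    simp only
    rw [hU c s hs, ← h1, hh]
  · intro c c' s hs
    simp only
    rw [hU c s hs, hU c' s hs]
    unfold hat
    rw [← mul_sub, abs_mul, abs_of_pos (exp_pos _), mul_assoc]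
    refine mul_le_mul (exp_le_exp.2 ?_) (le_trans ?_ (hZd c c')) (abs_nonneg _) (exp_pos _).le
    · rw [cl_of s hs]
      calc L * s ≤ |L| * s := mul_le_mul_of_nonneg_right (le_abs_self L) hs.1
        _ ≤ |L| := mul_le_of_le_one_right (abs_nonneg _) hs.2
    · exact (Z c - Z c').norm_coe_le_norm _

end SS


namespace SS
open Set Real Filter Topology
open scoped ContDiff unitInterval

noncomputable def xi (m : ℕ) (s : ℝ) : ℝ := 1 - (1 - s) ^ m

theorem xi_deriv (m : ℕ) (s : ℝ) : HasDerivAt (xi m) (m * (1 - s) ^ (m - 1)) s := by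
  have h := (((hasDerivAt_id s).const_sub 1).pow m).const_sub 1
  refine HasDerivAt.congr_deriv h ?_
  simp

theorem xi_cont (m : ℕ) : Continuous (xi m) := by unfold xi; fun_prop

theorem xi_ge (m : ℕ) (hm : 1 ≤ m) (s : ℝ) (hs : s ∈ Icc (0:ℝ) 1) : s ≤ xi m s := by
  have h1 := PP_mul m s
  have h2 := PP_ge m hm s hs.2
  unfold xi; nlinarith [hs.1]

theorem xi_le (m : ℕ) (s : ℝ) (hs : s ∈ Icc (0:ℝ) 1) : xi m s ≤ 1 := by
  have : 0 ≤ (1 - s) ^ m := pow_nonneg (by linarith [hs.2]) _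
  unfold xi; linarith

theorem xi_pos (m : ℕ) (hm : 1 ≤ m) (s : ℝ) (hs : s ∈ Ioc (0:ℝ) 1) : 0 < xi m s :=
  hs.1.trans_le (xi_ge m hm s ⟨hs.1.le, hs.2⟩)

theorem XX_deriv (m : ℕ) (hm : 1 ≤ m) (g u : ℝ → ℝ) (hg : Continuous g) (hu : Continuous u)
    (s : ℝ) (hs : s ∈ Ioc (0:ℝ) 1) :
    HasDerivWithinAt (XX m g u)
      ((m / 4 * g (u s) - 3 / 2 * m * (1 - s) ^ (m - 1) * XX m g u s) / xi m s) (Icc 0 1) s := by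
  have hx := xi_pos m hm s hs
  have hq : 0 < √(xi m s) := Real.sqrt_pos.2 hx
  have hF : HasDerivAt (fun s => ∫ y in (0:ℝ)..s, (m / 4) * √(xi m y) * g (u y))
      ((m / 4) * √(xi m s) * g (u s)) s := by
    have := xi_cont m
    exact ((by fun_prop : Continuous fun y => (m / 4) * √(xi m y) * g (u y)).integral_hasStrictDerivAt
      0 s).hasDerivAt
  have hd : HasDerivAt (fun s => xi m s * √(xi m s))
      (m * (1 - s) ^ (m - 1) * √(xi m s) + xi m s * (m * (1 - s) ^ (m - 1) / (2 * √(xi m s)))) s :=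
    (xi_deriv m s).mul ((xi_deriv m s).sqrt hx.ne')
  have hY := XX_Y m hm g u
  have h := (hF.fun_div hd (by positivity)).hasDerivWithinAt (s := Icc 0 1)
  have heq : ∀ y ∈ Ioc (0:ℝ) 1, XX m g u y =
      (∫ y in (0:ℝ)..y, (m / 4) * √(xi m y) * g (u y)) / (xi m y * √(xi m y)) := by
    intro y hy
    have h1 := xi_pos m hm y hy
    have h2 : 0 < √(xi m y) := Real.sqrt_pos.2 h1
    rw [eq_div_iff (by positivity)]
    rw [mul_comm]
    exact hY y ⟨hy.1.le, hy.2⟩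
  have hev : XX m g u =ᶠ[𝓝[Icc 0 1] s] fun y =>
      (∫ y in (0:ℝ)..y, (m / 4) * √(xi m y) * g (u y)) / (xi m y * √(xi m y)) := by
    filter_upwards [self_mem_nhdsWithin, mem_nhdsWithin_of_mem_nhds (Ioi_mem_nhds hs.1)] with y h1 h2
    exact heq y ⟨h2, h1.2⟩
  refine (h.congr_of_eventuallyEq hev (heq s hs)).congr_deriv ?_
  have hI : ∫ y in (0:ℝ)..s, (m / 4) * √(xi m y) * g (u y) = xi m s * √(xi m s) * XX m g u s :=
    (hY s ⟨hs.1.le, hs.2⟩).symm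
  rw [hI]
  have hsq : √(xi m s) ^ 2 = xi m s := Real.sq_sqrt hx.le
  generalize hr : √(xi m s) = r at *
  rw [← hsq]
  field_simp
  ring

theorem XX_zero (m : ℕ) (hm : 1 ≤ m) (g u : ℝ → ℝ) : XX m g u 0 = g (u 0) / 6 := by
  unfold XX XI
  have h0 : cl 0 = 0 := cl_of 0 ⟨le_rfl, zero_le_one⟩
  have hP : PP m 0 = m := by simp [PP]
  simp only [h0, zero_mul, hP]
  have h1 : ∫ r in (0:ℝ)..1, √r = 2 / 3 := by
    have : ∀ r : ℝ, √r = r ^ (1/2:ℝ) := fun r => Real.sqrt_eq_rpow r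
    simp only [this]
    rw [integral_rpow (by left; norm_num)]
    norm_num
  have h2 : ∫ r in (0:ℝ)..1, √r * √(m:ℝ) * g (u 0) = (2/3) * (√(m:ℝ) * g (u 0)) := by
    simp only [mul_assoc]
    rw [intervalIntegral.integral_mul_const, h1]
  rw [h2]
  have hm' : (0:ℝ) < m := by exact_mod_cast hm
  have : 0 < √(m:ℝ) := Real.sqrt_pos.2 hm'
  field_simp
  ring

theorem XX_bound (m : ℕ) (hm : 1 ≤ m) (g u : ℝ → ℝ) (hg : Continuous g) (hu : Continuous u)
    (s : ℝ) (hs : s ∈ Icc (0:ℝ) 1) (D : ℝ) (hD : ∀ y ∈ Icc 0 s, |g (u y)| ≤ D) :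
    |XX m g u s| ≤ (m / 4) * √m * D := by
  have h := XX_diff m hm id (fun y => g (u y)) (fun _ => 0) continuous_id (hg.comp hu)
    continuous_const 1 zero_le_one (fun x y => by simp) s hs D (fun y hy => by simpa using hD y hy)
  have h0 : XX m id (fun _ => 0) s = 0 := by simp [XX, XI]
  rw [h0, sub_zero, mul_one] at h
  exact h

theorem apriori (m : ℕ) (hm : 3 ≤ m) (h : ℝ → ℝ) (hh : Continuous h) (hodd : ∀ x, h (-x) = - h x)
    (b c : ℝ) (hb : 0 < b) (hbc : b ≤ c) (hneg : ∀ x, b < x → h x < 0) (U X : ℝ → ℝ)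
    (hU : Continuous U) (hX : Continuous X) (hU0 : U 0 = c)
    (dU : ∀ s ∈ Ioo (0:ℝ) 1, HasDerivAt U (m * (1 - s) ^ (m - 2) * X s) s)
    (dX : ∀ s ∈ Ioo (0:ℝ) 1, HasDerivAt X
      ((m / 4 * h (U s) - 3 / 2 * m * (1 - s) ^ (m - 1) * X s) / xi m s) s)
    (s : ℝ) (hs : s ∈ Icc (0:ℝ) 1) : |U s| ≤ c := by
  obtain ⟨k, rfl⟩ : ∃ k, m = k + 3 := ⟨m - 3, by omega⟩
  simp only [show k + 3 - 2 = k + 1 by omega, show k + 3 - 1 = k + 2 by omega] at dU dX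
  let G : ℝ → ℝ := fun x => ∫ y in (0:ℝ)..x, h y
  have hG : ∀ x, HasDerivAt G (h x) x := fun x => (hh.integral_hasStrictDerivAt 0 x).hasDerivAt
  have hGc : Continuous G := continuous_iff_continuousAt.2 fun x => (hG x).continuousAt
  have hGe : ∀ x, G (-x) = G x := by
    intro x
    have h1 : ∀ y, HasDerivAt (fun y => G (-y) - G y) 0 y := by
      intro y
      have := ((hG (-y)).comp y (hasDerivAt_neg y)).sub (hG y)
      refine this.congr_deriv ?_
      rw [hodd]; ring
    have h2 := is_const_of_deriv_eq_zero (fun y => (h1 y).differentiableAt) (fun y => (h1 y).deriv) x 0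
    simp at h2
    linarith
  have hGa : StrictAntiOn G (Ici b) := by
    apply strictAntiOn_of_deriv_neg (convex_Ici b) hGc.continuousOn
    intro x hx
    rw [interior_Ici] at hx
    rw [(hG x).deriv]; exact hneg x hx
  let E : ℝ → ℝ := fun s => 2 * xi (k+3) s * (1 - s) ^ (k + 1) * X s ^ 2 - G (U s)
  have hE : AntitoneOn E (Icc 0 1) := by
    have hc : ContinuousOn E (Icc 0 1) := by
      have := xi_cont (k+3)
      simp only [E]
      fun_prop
    have hd : ∀ s ∈ Ioo (0:ℝ) 1, HasDerivAt E (- (4 * (k+3) * (1 - s) ^ (2 * k + 3) * X s ^ 2 +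
        2 * (k + 1) * xi (k+3) s * (1 - s) ^ k * X s ^ 2)) s := by
      intro s hs
      have hx := xi_pos (k+3) (by omega) s ⟨hs.1, hs.2.le⟩
      have h1 := xi_deriv (k+3) s
      have h2 := ((hasDerivAt_id s).const_sub 1).pow (k+1)
      have h3 := (dX s hs).pow 2
      have h4 := (hG (U s)).comp s (dU s hs)
      have := (((h1.const_mul 2).mul h2).mul h3).sub h4
      refine (this.congr_of_eventuallyEq ?_).congr_deriv ?_
      · exact Eventually.of_forall fun y => by simp [E]
      · simp only [id, show k + 3 - 1 = k + 2 by omega, show k + 1 - 1 = k by omega, Nat.cast_add, Nat.cast_ofNat, Nat.cast_one,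
          show 2 - 1 = 1 by omega, Pi.mul_apply, Pi.pow_apply]
        field_simp
        ring
    apply antitoneOn_of_deriv_nonpos (convex_Icc 0 1) hc
    · intro s hs
      rw [interior_Icc] at hs
      exact (hd s hs).differentiableAt.differentiableWithinAt
    · intro s hs
      rw [interior_Icc] at hs
      rw [(hd s hs).deriv]
      have h1 := (xi_pos (k+3) (by omega) s ⟨hs.1, hs.2.le⟩).le
      have h2 : 0 ≤ 1 - s := by linarith [hs.2]
      have : 0 ≤ 4 * (k+3) * (1 - s) ^ (2 * k + 3) * X s ^ 2 +
        2 * (k + 1) * xi (k+3) s * (1 - s) ^ k * X s ^ 2 := by positivity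
      linarith
  have h1 := hE ⟨le_rfl, zero_le_one⟩ hs hs.1
  have h2 : E 0 = - G c := by simp [E, xi, hU0]
  have h3 : - G (U s) ≤ E s := by
    have h1 : 0 ≤ xi (k+3) s := hs.1.trans (xi_ge (k+3) (by omega) s hs)
    have h2 : 0 ≤ 1 - s := by linarith [hs.2]
    have : 0 ≤ 2 * xi (k+3) s * (1 - s) ^ (k + 1) * X s ^ 2 := by positivity
    simp only [E]; linarith
  have h4 : G c ≤ G |U s| := by
    rcases abs_choice (U s) with h | h <;> rw [h]
    · linarith
    · rw [hGe]; linarith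
  by_contra hlt
  push Not at hlt
  have := hGa (mem_Ici.2 hbc) (mem_Ici.2 (hbc.trans hlt.le)) hlt
  linarith

noncomputable def al (m : ℕ) : ℝ := 1 / m
noncomputable def gg (m : ℕ) (u : ℝ) : ℝ := al m * (al m + 1) * u - u ^ (2 * m + 1)

structure Sol (m : ℕ) (c : ℝ) (U X : ℝ → ℝ) : Prop where
  cU : Continuous U
  cX : Continuous X
  U0 : U 0 = c
  X0 : X 0 = gg m c / 6
  bd : ∀ s ∈ Icc (0:ℝ) 1, |U s| ≤ c
  bX : ∀ s ∈ Icc (0:ℝ) 1, |X s| ≤ m / 4 * √m * (2 * c ^ (2 * m + 1))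
  dU : ∀ s ∈ Icc (0:ℝ) 1, HasDerivAt U (m * (1 - s) ^ (m - 2) * X s) s
  dX : ∀ s ∈ Ioc (0:ℝ) 1, HasDerivWithinAt X
      ((m / 4 * gg m (U s) - 3 / 2 * m * (1 - s) ^ (m - 1) * X s) / xi m s) (Icc 0 1) s

theorem gg_cont (m : ℕ) : Continuous (gg m) := by unfold gg; fun_prop

noncomputable def trc (M x : ℝ) : ℝ := max (-M) (min M x)

theorem family (m : ℕ) (hm : 3 ≤ m) (b : ℝ) (hb : 0 < b) (hbm : b ^ (2 * m) = al m * (al m + 1))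
    (M : ℝ) (hM : b < M) :
    ∃ (U X : ℝ → ℝ → ℝ) (K : ℝ), (∀ c ∈ Icc b M, Sol m c (U c) (X c)) ∧
      (∀ c ∈ Icc b M, ∀ c' ∈ Icc b M, ∀ s ∈ Icc (0:ℝ) 1, |U c s - U c' s| ≤ K * |c - c'| ∧
        |X c s - X c' s| ≤ K * |c - c'|) ∧ ∀ s ∈ Icc (0:ℝ) 1, U b s = b ∧ X b s = 0 := by
  have hM0 : 0 < M := hb.trans hM
  have htc : Continuous (trc M) := by unfold trc; fun_prop
  have htabs : ∀ x, |trc M x| ≤ M := by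
    intro x; unfold trc; rw [abs_le]
    exact ⟨le_max_left _ _, max_le (by linarith) (min_le_left _ _)⟩
  have htl : ∀ x y, |trc M x - trc M y| ≤ |x - y| := by
    intro x y; unfold trc
    refine (abs_max_sub_max_le_max _ _ _ _).trans ?_
    refine max_le (by simp) ((abs_min_sub_min_le_max _ _ _ _).trans (max_le (by simp) le_rfl))
  have hid : ∀ x, |x| ≤ M → trc M x = x := by
    intro x hx; rw [abs_le] at hx; unfold trc
    rw [min_eq_right hx.2, max_eq_right hx.1]
  have htodd : ∀ x, trc M (-x) = - trc M x := by
    intro x; unfold trc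
    rcases le_total x M with h | h <;> rcases le_total (-M) x with h' | h' <;>
      simp [max_def, min_def] <;> split_ifs <;> linarith
  have hodd : ∀ x, gg m (trc M (-x)) = - gg m (trc M x) := by
    intro x; rw [htodd]; unfold gg
    rw [Odd.neg_pow ⟨m, rfl⟩]; ring
  have hgc : Continuous fun x => gg m (trc M x) := (gg_cont m).comp htc
  have hneg : ∀ x, b < x → gg m (trc M x) < 0 := by
    intro x hx
    have h1 : b < trc M x := by
      unfold trc; exact lt_max_of_lt_right (lt_min hM hx)
    unfold gg
    rw [← hbm, pow_succ]
    have h2 : b ^ (2 * m) < trc M x ^ (2 * m) := pow_lt_pow_left₀ h1 hb.le (by omega)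
    nlinarith
  obtain ⟨l, hl, hgl⟩ : ∃ l : ℝ, 0 ≤ l ∧ ∀ x y, |gg m (trc M x) - gg m (trc M y)| ≤ l * |x - y| := by
    refine ⟨|al m * (al m + 1)| + (2 * m + 1 : ℕ) * M ^ (2 * m + 1 - 1), by positivity, fun x y => ?_⟩
    have h1 := abs_pow_sub_pow_le (trc M x) (trc M y) (2 * m + 1)
    have h2 : max |trc M x| |trc M y| ^ (2 * m + 1 - 1) ≤ M ^ (2 * m + 1 - 1) :=
      pow_le_pow_left₀ (le_max_of_le_left (abs_nonneg _)) (max_le (htabs x) (htabs y)) _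
    have h3 : |gg m (trc M x) - gg m (trc M y)| ≤ |al m * (al m + 1)| * |trc M x - trc M y| +
        |trc M x ^ (2*m+1) - trc M y ^ (2*m+1)| := by
      unfold gg
      rw [← abs_mul]
      refine le_trans (le_of_eq ?_) (abs_sub _ _)
      congr 1; ring
    have h4 : |trc M x ^ (2*m+1) - trc M y ^ (2*m+1)| ≤
        |trc M x - trc M y| * (2 * m + 1 : ℕ) * M ^ (2 * m + 1 - 1) :=
      h1.trans (mul_le_mul_of_nonneg_left h2 (by positivity))
    calc _ ≤ (|al m * (al m + 1)| + (2 * m + 1 : ℕ) * M ^ (2 * m + 1 - 1)) * |trc M x - trc M y| := by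
          linarith
      _ ≤ _ := mul_le_mul_of_nonneg_left (htl x y) (by positivity)
  obtain ⟨U, K, hK, hUc, hU0, hUd, hU1, hUl⟩ := solve m (by omega) _ hgc l hl hgl
  have hXc : ∀ c, Continuous (XX m (fun x => gg m (trc M x)) (U c)) := fun c =>
    XX_cont m (by omega) _ _ hgc (hUc c)
  have hbd : ∀ c ∈ Icc b M, ∀ s ∈ Icc (0:ℝ) 1, |U c s| ≤ c := by
    intro c hc s hs
    refine apriori m hm _ hgc hodd b c hb hc.1 hneg (U c) _ (hUc c) (hXc c) (hU0 c)
      (fun s hs => hUd c s ⟨hs.1.le, hs.2.le⟩) (fun s hs => ?_) s hs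
    exact (XX_deriv m (by omega) _ (U c) hgc (hUc c) s ⟨hs.1, hs.2.le⟩).hasDerivAt
      (Icc_mem_nhds hs.1 hs.2)
  have hKX : 0 ≤ (m:ℝ) / 4 * √m * l * K := by positivity
  refine ⟨U, fun c => XX m (fun x => gg m (trc M x)) (U c), K + m / 4 * √m * l * K, ?_, ?_, ?_⟩
  · intro c hc
    refine ⟨hUc c, hXc c, hU0 c, ?_, hbd c hc, ?_, hUd c, ?_⟩
    · beta_reduce
      rw [XX_zero m (by omega), hU0, hid]
      rw [abs_of_pos (hb.trans_le hc.1)]; exact hc.2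
    · intro s hs
      refine XX_bound m (by omega) _ (U c) hgc (hUc c) s hs _ fun y hy => ?_
      have hy1 := hbd c hc y ⟨hy.1, hy.2.trans hs.2⟩
      have hc0 : 0 < c := hb.trans_le hc.1
      rw [hid _ (hy1.trans hc.2)]
      unfold gg
      rw [← hbm]
      have e1 : b ^ (2 * m) ≤ c ^ (2 * m) := pow_le_pow_left₀ hb.le hc.1 _
      calc _ ≤ |b ^ (2 * m) * U c y| + |U c y ^ (2 * m + 1)| := abs_sub _ _
        _ = b ^ (2 * m) * |U c y| + |U c y| ^ (2 * m + 1) := by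
            rw [abs_mul, abs_pow, abs_pow, abs_of_pos hb]
        _ ≤ c ^ (2 * m) * c + c ^ (2 * m + 1) := add_le_add
            (mul_le_mul e1 hy1 (abs_nonneg _) (by positivity))
            (pow_le_pow_left₀ (abs_nonneg _) hy1 _)
        _ = _ := by ring
    · intro s hs
      have := XX_deriv m (by omega) _ (U c) hgc (hUc c) s hs
      rwa [hid (U c s) ((hbd c hc s ⟨hs.1.le, hs.2⟩).trans hc.2)] at this
  · intro c hc c' hc' s hs
    constructor
    · refine (hUl c c' s hs).trans ?_
      apply mul_le_mul_of_nonneg_right _ (abs_nonneg _); linarith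
    · have := XX_diff m (by omega) _ (U c) (U c') hgc (hUc c) (hUc c') l hl hgl s hs (K * |c - c'|)
        (fun y hy => hUl c c' y ⟨hy.1, hy.2.trans hs.2⟩)
      have h2 := mul_nonneg hK (abs_nonneg (c - c'))
      simp only
      nlinarith [abs_nonneg (c - c')]
  · have hgb : gg m (trc M b) = 0 := by
      rw [hid b (by rw [abs_of_pos hb]; exact hM.le)]
      unfold gg; rw [← hbm]; ring
    have h1 := hU1 b hgb
    intro s hs
    refine ⟨h1 s hs, ?_⟩
    have h2 := XX_bound m (by omega) _ (U b) hgc (hUc b) s hs 0 fun y hy => by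
      rw [h1 y ⟨hy.1, hy.2.trans hs.2⟩, hgb]; simp
    rw [mul_zero] at h2
    exact abs_nonpos_iff.1 h2

end SS


namespace SS
open Set Real Filter Topology
open scoped ContDiff unitInterval

noncomputable def ee (m : ℕ) (s : ℝ) : ℝ := xi m s ^ (al m / 2)
noncomputable def WW (m : ℕ) (U : ℝ → ℝ) (s : ℝ) : ℝ := ee m s * U s
noncomputable def ZZ (m : ℕ) (U X : ℝ → ℝ) (s : ℝ) : ℝ :=
  ee m s * (2 * xi m s * X s + al m * (1 - s) * U s)

theorem al_pos (m : ℕ) (hm : 3 ≤ m) : 0 < al m := by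
  have : (0:ℝ) < m := by exact_mod_cast (by omega : 0 < m)
  unfold al; positivity

theorem al_le (m : ℕ) (hm : 3 ≤ m) : al m ≤ 1 / 3 := by
  have : (3:ℝ) ≤ m := by exact_mod_cast hm
  unfold al; exact one_div_le_one_div_of_le (by norm_num) this

theorem al_mul (m : ℕ) (hm : 3 ≤ m) : m * al m = 1 := by
  have : (0:ℝ) < m := by exact_mod_cast (by omega : 0 < m)
  unfold al; field_simp

theorem ee_pow (m : ℕ) (hm : 3 ≤ m) (s : ℝ) (hs : s ∈ Icc (0:ℝ) 1) : ee m s ^ (2 * m) = xi m s := by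
  have h0 : 0 ≤ xi m s := hs.1.trans (xi_ge m (by omega) s hs)
  unfold ee
  rw [← Real.rpow_natCast, ← Real.rpow_mul h0]
  have : al m / 2 * ((2 * m : ℕ) : ℝ) = 1 := by
    push_cast; linarith [al_mul m hm]
  rw [this, Real.rpow_one]

theorem ee_pos (m : ℕ) (hm : 3 ≤ m) (s : ℝ) (hs : s ∈ Ioc (0:ℝ) 1) : 0 < ee m s :=
  Real.rpow_pos_of_pos (xi_pos m (by omega) s hs) _

theorem ee_deriv (m : ℕ) (hm : 3 ≤ m) (s : ℝ) (hs : s ∈ Ioc (0:ℝ) 1) :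
    HasDerivAt (ee m) (ee m s * (1 - s) ^ (m - 1) / (2 * xi m s)) s := by
  have hx := xi_pos m (by omega) s hs
  have h := (xi_deriv m s).rpow_const (p := al m / 2) (Or.inl hx.ne')
  refine HasDerivAt.congr_deriv h ?_
  rw [Real.rpow_sub_one hx.ne']
  unfold ee
  have := al_mul m hm
  field_simp
  linear_combination (1 - s)^(m-1) * this

theorem W_deriv (m : ℕ) (hm : 3 ≤ m) (c : ℝ) (U X : ℝ → ℝ) (h : Sol m c U X) (s : ℝ)
    (hs : s ∈ Ioc (0:ℝ) 1) :
    HasDerivAt (WW m U) (m / (2 * xi m s) * (1 - s) ^ (m - 2) * ZZ m U X s) s := by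
  have h1 := (ee_deriv m hm s hs).mul (h.dU s ⟨hs.1.le, hs.2⟩)
  refine HasDerivAt.congr_deriv h1 ?_
  have hx := xi_pos m (by omega) s hs
  have := al_mul m hm
  unfold ZZ
  obtain ⟨k, rfl⟩ : ∃ k, m = k + 3 := ⟨m - 3, by omega⟩
  simp only [show k + 3 - 2 = k + 1 by omega, show k + 3 - 1 = k + 2 by omega]
  field_simp
  linear_combination (-(1-s) * U s * (ee (k+3) s * (1-s)^(k+1))) * this

noncomputable def ff (m : ℕ) (w : ℝ) : ℝ := al m * (1 - al m) * w - w ^ (2 * m + 1)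

theorem Z_deriv (m : ℕ) (hm : 3 ≤ m) (c : ℝ) (U X : ℝ → ℝ) (h : Sol m c U X) (s : ℝ)
    (hs : s ∈ Ioc (0:ℝ) 1) :
    HasDerivWithinAt (ZZ m U X) (m / (2 * xi m s) * (ff m (WW m U s) -
      (1 - 2 * al m) * (1 - s) ^ (m - 1) * ZZ m U X s)) (Icc 0 1) s := by
  have hdU := (h.dU s ⟨hs.1.le, hs.2⟩).hasDerivWithinAt (s := Icc 0 1)
  have hdX := h.dX s hs
  have hdx := (xi_deriv m s).hasDerivWithinAt (s := Icc 0 1)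
  have hde := (ee_deriv m hm s hs).hasDerivWithinAt (s := Icc 0 1)
  have hds := (((hasDerivAt_id s).const_sub 1).const_mul (al m)).hasDerivWithinAt (s := Icc 0 1)
  have h1 := hde.mul (((hdx.const_mul 2).mul hdX).add (hds.mul hdU))
  refine HasDerivWithinAt.congr_deriv h1 ?_
  have hx := xi_pos m (by omega) s hs
  have ham := al_mul m hm
  have hep := ee_pow m hm s ⟨hs.1.le, hs.2⟩
  have hxv : xi m s = 1 - (1 - s) ^ m := rfl
  unfold ZZ ff gg WW
  simp only [Pi.mul_apply, Pi.add_apply, id]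
  rw [mul_pow, pow_succ (ee m s), hep]
  obtain ⟨k, rfl⟩ : ∃ k, m = k + 3 := ⟨m - 3, by omega⟩
  simp only [show k + 3 - 2 = k + 1 by omega, show k + 3 - 1 = k + 2 by omega]
  generalize ee (k+3) s = e at *
  generalize xi (k+3) s = x at *
  generalize al (k+3) = a at *
  have hm0 : ((k+3:ℕ):ℝ) ≠ 0 := by positivity
  have ha : a = 1 / ((k+3:ℕ):ℝ) := by field_simp; linarith
  have hT : (1 - s) ^ (k + 3) = 1 - x := by linarith
  have hT1 : (1-s)^(k+3) = (1-s)^(k+2) * (1-s) := by ring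
  have hT2 : (1-s)^(k+2) = (1-s)^(k+1) * (1-s) := by ring
  generalize ((k+3:ℕ):ℝ) = M at *
  subst ha
  generalize U s = u at *
  generalize X s = y at *
  generalize u ^ (2 * (k+3) + 1) = uu at *
  generalize 1 - s = τ at *
  field_simp
  linear_combination (4 * (M - 1) * u * e) * hT

end SS


namespace SS
open Set Real Filter Topology
open scoped ContDiff unitInterval

noncomputable def TT (m : ℕ) (t : ℝ) : ℝ := (1 - exp (2 * t)) ^ (al m)
noncomputable def sT (m : ℕ) (t : ℝ) : ℝ := 1 - TT m t

theorem e2_lt {t : ℝ} (ht : t < 0) : 0 < 1 - exp (2 * t) := by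
  have : exp (2 * t) < 1 := by rw [Real.exp_lt_one_iff]; linarith
  linarith

theorem TT_pow (m : ℕ) (hm : 3 ≤ m) {t : ℝ} (ht : t < 0) : TT m t ^ m = 1 - exp (2 * t) := by
  unfold TT
  rw [← Real.rpow_natCast, ← Real.rpow_mul (e2_lt ht).le, mul_comm (al m), al_mul m hm, Real.rpow_one]

theorem TT_pos (m : ℕ) {t : ℝ} (ht : t < 0) : 0 < TT m t :=
  Real.rpow_pos_of_pos (e2_lt ht) _

theorem TT_lt (m : ℕ) (hm : 3 ≤ m) {t : ℝ} (ht : t < 0) : TT m t < 1 :=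
  Real.rpow_lt_one (e2_lt ht).le (by linarith [exp_pos (2 * t)]) (al_pos m hm)

theorem sT_mem (m : ℕ) (hm : 3 ≤ m) {t : ℝ} (ht : t < 0) : sT m t ∈ Ioo (0:ℝ) 1 := by
  have := TT_pos m ht
  have := TT_lt m hm ht
  unfold sT; constructor <;> linarith

theorem xi_sT (m : ℕ) (hm : 3 ≤ m) {t : ℝ} (ht : t < 0) : xi m (sT m t) = exp (2 * t) := by
  unfold xi sT
  rw [sub_sub_cancel, TT_pow m hm ht]; ring

theorem ee_sT (m : ℕ) (hm : 3 ≤ m) {t : ℝ} (ht : t < 0) : ee m (sT m t) = exp (al m * t) := by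
  unfold ee
  rw [xi_sT m hm ht, ← Real.exp_mul]; congr 1; ring

theorem sT_mono (m : ℕ) (hm : 3 ≤ m) {t t' : ℝ} (h : t < t') (ht : t' < 0) : sT m t < sT m t' := by
  unfold sT TT
  have : exp (2 * t) < exp (2 * t') := exp_lt_exp.2 (by linarith)
  have := Real.rpow_lt_rpow (e2_lt ht).le (by linarith : 1 - exp (2 * t') < 1 - exp (2 * t)) (al_pos m hm)
  linarith

theorem TT_deriv (m : ℕ) (hm : 3 ≤ m) {t : ℝ} (ht : t < 0) :
    HasDerivAt (TT m) (-(2 * exp (2 * t) * al m * TT m t / (1 - exp (2 * t)))) t := by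
  have hp := e2_lt ht
  have h1 : HasDerivAt (fun t => 1 - exp (2 * t)) (-(exp (2 * t) * (2 * 1))) t :=
    (((hasDerivAt_id t).const_mul 2).exp).const_sub 1
  have h := h1.rpow_const (p := al m) (Or.inl hp.ne')
  refine HasDerivAt.congr_deriv h ?_
  rw [Real.rpow_sub_one hp.ne']
  unfold TT
  field_simp

theorem sT_deriv (m : ℕ) (hm : 3 ≤ m) {t : ℝ} (ht : t < 0) :
    HasDerivAt (sT m) (2 * exp (2 * t) * al m * TT m t / (1 - exp (2 * t))) t := by
  have := (TT_deriv m hm ht).const_sub 1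
  rw [neg_neg] at this
  exact this

noncomputable def wt (m : ℕ) (U : ℝ → ℝ) (t : ℝ) : ℝ := WW m U (sT m t)
noncomputable def Vt (m : ℕ) (U X : ℝ → ℝ) (t : ℝ) : ℝ := ZZ m U X (sT m t) / TT m t

theorem wt_deriv (m : ℕ) (hm : 3 ≤ m) (c : ℝ) (U X : ℝ → ℝ) (h : Sol m c U X) {t : ℝ}
    (ht : t < 0) : HasDerivAt (wt m U) (Vt m U X t) t := by
  have hs := sT_mem m hm ht
  have h1 := (W_deriv m hm c U X h (sT m t) ⟨hs.1, hs.2.le⟩).comp t (sT_deriv m hm ht)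
  refine HasDerivAt.congr_deriv h1 ?_
  have hT := TT_pos m ht
  have hp := e2_lt ht
  rw [xi_sT m hm ht]
  unfold Vt
  rw [← TT_pow m hm ht]
  have ham := al_mul m hm
  rw [show 1 - sT m t = TT m t by simp [sT]]
  generalize ZZ m U X (sT m t) = z
  generalize TT m t = T at *
  have he := exp_pos (2 * t)
  obtain ⟨k, rfl⟩ : ∃ k, m = k + 3 := ⟨m - 3, by omega⟩
  simp only [show k + 3 - 2 = k + 1 by omega]
  field_simp
  linear_combination (T^(k+3) * z) * ham

theorem Vt_deriv (m : ℕ) (hm : 3 ≤ m) (c : ℝ) (U X : ℝ → ℝ) (h : Sol m c U X) {t : ℝ}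
    (ht : t < 0) : HasDerivAt (Vt m U X) ((ff m (wt m U t) - (1 - 2 * al m - exp (2 * t)) *
      Vt m U X t) / (1 - exp (2 * t))) t := by
  have hs := sT_mem m hm ht
  have h1 := ((Z_deriv m hm c U X h (sT m t) ⟨hs.1, hs.2.le⟩).hasDerivAt
    (Icc_mem_nhds hs.1 hs.2)).comp t (sT_deriv m hm ht)
  have hT := TT_pos m ht
  have hp := e2_lt ht
  have h2 := h1.fun_div (TT_deriv m hm ht) hT.ne'
  refine HasDerivAt.congr_deriv h2 ?_
  rw [xi_sT m hm ht]
  unfold Vt wt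
  simp only [Function.comp]
  have hTT := TT_pow m hm ht
  have ham := al_mul m hm
  rw [show 1 - sT m t = TT m t by simp [sT]]
  generalize ZZ m U X (sT m t) = z
  generalize TT m t = T at *
  generalize ff m (WW m U (sT m t)) = f
  have he := exp_pos (2 * t)
  obtain ⟨k, rfl⟩ : ∃ k, m = k + 3 := ⟨m - 3, by omega⟩
  simp only [show k + 3 - 1 = k + 2 by omega]
  have hm0 : ((k+3:ℕ):ℝ) ≠ 0 := by positivity
  have ha : al (k+3) = 1 / ((k+3:ℕ):ℝ) := by field_simp; linarith
  generalize ((k+3:ℕ):ℝ) = M at *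
  rw [ha]
  have hE : exp (2 * t) = 1 - T ^ (k+3) := by linarith
  generalize exp (2 * t) = E at *
  have hTp : 0 < T ^ (k+2) := by positivity
  have hTT2 : T ^ (k+2) * T = 1 - E := by rw [← hTT]; ring
  generalize T ^ (k+2) = S at *
  field_simp
  linear_combination (-(z * (M - 2))) * hTT2

theorem lims (m : ℕ) (hm : 3 ≤ m) (c : ℝ) (U X : ℝ → ℝ) (h : Sol m c U X) :
    Tendsto (wt m U) atBot (𝓝 0) ∧ Tendsto (Vt m U X) atBot (𝓝 0) := by
  have h2 : Tendsto (fun t : ℝ => exp (2 * t)) atBot (𝓝 0) :=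
    Real.tendsto_exp_atBot.comp (tendsto_id.const_mul_atBot (by norm_num))
  have hal := al_pos m hm
  have ha : Tendsto (fun t : ℝ => exp (al m * t)) atBot (𝓝 0) :=
    Real.tendsto_exp_atBot.comp (tendsto_id.const_mul_atBot hal)
  have hT : Tendsto (TT m) atBot (𝓝 1) := by
    have h3 : Tendsto (fun t : ℝ => 1 - exp (2 * t)) atBot (𝓝 1) := by
      simpa using h2.const_sub 1
    have := h3.rpow_const (p := al m) (Or.inl one_ne_zero)
    rw [Real.one_rpow] at this
    exact this
  have hs : Tendsto (sT m) atBot (𝓝 0) := by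
    have := hT.const_sub 1
    rw [sub_self] at this
    exact this
  have hU : Tendsto (fun t => U (sT m t)) atBot (𝓝 (U 0)) := (h.cU.tendsto 0).comp hs
  have hX : Tendsto (fun t => X (sT m t)) atBot (𝓝 (X 0)) := (h.cX.tendsto 0).comp hs
  constructor
  · have := ha.mul hU
    rw [zero_mul] at this
    refine this.congr' ?_
    filter_upwards [eventually_lt_atBot 0] with t ht
    unfold wt WW
    rw [ee_sT m hm ht]
  · have := (ha.mul (((h2.const_mul 2).mul hX).add (((hT.const_mul (al m)).mul hU)))).div hT one_ne_zero
    simp only [zero_mul, zero_div] at this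
    refine this.congr' ?_
    filter_upwards [eventually_lt_atBot 0] with t ht
    unfold Vt ZZ
    rw [ee_sT m hm ht, xi_sT m hm ht, show 1 - sT m t = TT m t by simp [sT]]
    rfl

noncomputable def En (m : ℕ) (w V : ℝ → ℝ) (t : ℝ) : ℝ :=
  (1 - exp (2 * t)) * V t ^ 2 / 2 + w t ^ (2 * m + 2) / (2 * m + 2) - al m * (1 - al m) * w t ^ 2 / 2

section
variable (m : ℕ) (w V : ℝ → ℝ)

theorem En_deriv (hw : ∀ t < 0, HasDerivAt w (V t) t)
  (hV : ∀ t < 0, HasDerivAt V ((ff m (w t) - (1 - 2 * al m - exp (2 * t)) *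
      V t) / (1 - exp (2 * t))) t) (t : ℝ) (ht : t < 0) :
    HasDerivAt (En m w V) (-((1 - 2 * al m) * V t ^ 2)) t := by
  have hp := e2_lt ht
  have h1 : HasDerivAt (fun t => 1 - exp (2 * t)) (-(exp (2 * t) * (2 * 1))) t :=
    (((hasDerivAt_id t).const_mul 2).exp).const_sub 1
  have h := ((h1.mul ((hV t ht).pow 2)).div_const 2).add
    ((((hw t ht).pow (2 * m + 2)).div_const (2 * m + 2)))
  have h2 := h.sub ((((hw t ht).pow 2).const_mul (al m * (1 - al m))).div_const 2)
  refine HasDerivAt.congr_deriv h2 ?_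
  simp only [show 2 * m + 2 - 1 = 2 * m + 1 by omega, show 2 - 1 = 1 by omega, ff, Pi.pow_apply]
  push_cast
  field_simp
  ring

theorem En_nonpos (hm : 3 ≤ m) (hw : ∀ t < 0, HasDerivAt w (V t) t)
  (hV : ∀ t < 0, HasDerivAt V ((ff m (w t) - (1 - 2 * al m - exp (2 * t)) *
      V t) / (1 - exp (2 * t))) t) (lw : Tendsto w atBot (𝓝 0)) (lV : Tendsto V atBot (𝓝 0)) :
    AntitoneOn (En m w V) (Iio 0) ∧ ∀ t < 0, En m w V t ≤ 0 := by
  have hd := En_deriv m w V hw hV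
  have ha : AntitoneOn (En m w V) (Iio 0) := by
    apply antitoneOn_of_deriv_nonpos (convex_Iio 0)
      (fun t ht => (hd t ht).continuousAt.continuousWithinAt)
    · intro t ht; rw [interior_Iio] at ht
      exact (hd t ht).differentiableAt.differentiableWithinAt
    · intro t ht; rw [interior_Iio] at ht
      rw [(hd t ht).deriv]
      have := al_le m hm
      have : 0 ≤ (1 - 2 * al m) * V t ^ 2 := mul_nonneg (by linarith) (sq_nonneg _)
      linarith
  refine ⟨ha, fun t ht => ?_⟩
  have h2 : Tendsto (fun t : ℝ => exp (2 * t)) atBot (𝓝 0) :=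
    Real.tendsto_exp_atBot.comp (tendsto_id.const_mul_atBot (by norm_num))
  have hl : Tendsto (En m w V) atBot (𝓝 0) := by
    have := (((h2.const_sub 1).mul (lV.pow 2)).div_const 2).add ((lw.pow (2 * m + 2)).div_const (2 * m + 2))
    have := this.sub (((lw.pow 2).const_mul (al m * (1 - al m))).div_const 2)
    simp at this
    exact this
  refine ge_of_tendsto hl ?_
  filter_upwards [eventually_lt_atBot t] with y hy
  exact ha (mem_Iio.2 (hy.trans ht)) ht hy.le

theorem w_le_one (hm : 3 ≤ m) (t : ℝ) (ht : t < 0) (hE : En m w V t ≤ 0) : |w t| ≤ 1 := by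
  by_contra hlt
  push Not at hlt
  have hp := e2_lt ht
  have h1 : 0 ≤ (1 - exp (2 * t)) * V t ^ 2 / 2 := by positivity
  unfold En at hE
  have hm' : (3:ℝ) ≤ m := by exact_mod_cast hm
  have h2 : w t ^ (2 * m + 2) = (w t ^ 2) ^ m * w t ^ 2 := by rw [← pow_mul, ← pow_add]
  have h3 : 1 < w t ^ 2 := by
    rw [← sq_abs]; nlinarith
  have h4 : 1 ≤ (w t ^ 2) ^ m := one_le_pow₀ h3.le
  have h5 : 1 / (2 * (m:ℝ) + 2) > al m * (1 - al m) / 2 := by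
    unfold al
    rw [gt_iff_lt, ← sub_pos]
    have : 1 / (2 * (m:ℝ) + 2) - 1 / m * (1 - 1 / m) / 2 = 1 / (m ^ 2 * (2 * m + 2)) := by
      field_simp; ring
    rw [this]; positivity
  rw [h2] at hE
  have h6 : w t ^ 2 / (2 * m + 2) ≤ (w t ^ 2) ^ m * w t ^ 2 / (2 * m + 2) := by
    apply div_le_div_of_nonneg_right _ (by positivity)
    nlinarith
  have h7 : w t ^ 2 / (2 * m + 2) = w t ^ 2 * (1 / (2 * (m:ℝ) + 2)) := by ring
  nlinarith

theorem En_drop (hm : 3 ≤ m) (hw : ∀ t < 0, HasDerivAt w (V t) t)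
  (hV : ∀ t < 0, HasDerivAt V ((ff m (w t) - (1 - 2 * al m - exp (2 * t)) *
      V t) / (1 - exp (2 * t))) t) (hE : ∀ t < 0, En m w V t ≤ 0) (t0 t1 d : ℝ) (h01 : t0 < t1)
    (h1 : t1 < 0) (hd0 : 0 ≤ d) (hd : d ≤ w t1 - w t0) :
    En m w V t1 ≤ - ((1 - 2 * al m) * (d ^ 2 / (t1 - t0))) := by
  have hdr := En_deriv m w V hw hV
  have hT : 0 < t1 - t0 := by linarith
  obtain ⟨ε, hε⟩ : ∃ ε, ε = d / (t1 - t0) := ⟨_, rfl⟩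
  have hε0 : 0 ≤ ε := by rw [hε]; positivity
  have hal : 0 ≤ 1 - 2 * al m := by linarith [al_le m hm]
  let F : ℝ → ℝ := fun t => En m w V t + (1 - 2 * al m) * (2 * ε * w t - ε ^ 2 * t)
  have hF : ∀ t < 0, HasDerivAt F (-((1 - 2 * al m) * V t ^ 2) +
      (1 - 2 * al m) * (2 * ε * V t - ε ^ 2 * 1)) t := fun t ht =>
    (hdr t ht).add ((((hw t ht).const_mul (2 * ε)).sub ((hasDerivAt_id t).const_mul (ε ^ 2))).const_mul _)
  have ha : AntitoneOn F (Iio 0) := by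
    apply antitoneOn_of_deriv_nonpos (convex_Iio 0)
      (fun t ht => (hF t ht).continuousAt.continuousWithinAt)
    · intro t ht; rw [interior_Iio] at ht
      exact (hF t ht).differentiableAt.differentiableWithinAt
    · intro t ht; rw [interior_Iio] at ht
      rw [(hF t ht).deriv]
      nlinarith [mul_nonneg hal (sq_nonneg (V t - ε))]
  have h := ha (mem_Iio.2 (h01.trans h1)) (mem_Iio.2 h1) h01.le
  simp only [F] at h
  have h2 := hE t0 (h01.trans h1)
  have h3 : d ^ 2 / (t1 - t0) = 2 * ε * d - ε ^ 2 * (t1 - t0) := by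
    rw [hε]; field_simp; ring
  rw [h3]
  have h4 : ε * d ≤ ε * (w t1 - w t0) := mul_le_mul_of_nonneg_left hd hε0
  have h5 := mul_le_mul_of_nonneg_left h4 hal
  nlinarith

theorem w_lower (hm : 3 ≤ m) (hw : ∀ t < 0, HasDerivAt w (V t) t) (ha : AntitoneOn (En m w V) (Iio 0))
    (t1 e0 δ : ℝ) (he0 : 0 < e0) (hδ : 0 < δ) (hδ2 : al m * (1 - al m) * δ ^ 2 / 2 ≤ e0)
    (h1 : t1 < 0) (hE : En m w V t1 ≤ - e0)
    (hw1 : 0 < w t1) (t : ℝ) (ht : t1 ≤ t) (ht0 : t < 0) : δ ≤ w t := by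
  have hal := al_pos m hm
  have hal3 := al_le m hm
  have key : ∀ y, t1 ≤ y → y < 0 → δ ^ 2 ≤ w y ^ 2 := by
    intro y hy hy0
    have h := (ha (mem_Iio.2 h1) (mem_Iio.2 hy0) hy).trans hE
    have hp := e2_lt hy0
    have h2 : 0 ≤ (1 - exp (2 * y)) * V y ^ 2 / 2 := by positivity
    have h3 : 0 ≤ w y ^ (2 * m + 2) / (2 * m + 2) := by
      have : 0 ≤ w y ^ (2 * m + 2) := Even.pow_nonneg ⟨m + 1, by ring⟩ _
      positivity
    unfold En at h
    have hA : 0 < al m * (1 - al m) := mul_pos hal (by linarith)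
    by_contra hlt
    push Not at hlt
    nlinarith
  have hpos : 0 < w t := by
    by_contra hn
    push Not at hn
    have hc : ContinuousOn w (Icc t1 t) := fun y hy =>
      (hw y (hy.2.trans_lt ht0)).continuousAt.continuousWithinAt
    obtain ⟨y, hy, hy0⟩ := intermediate_value_Icc' ht hc ⟨hn, hw1.le⟩
    have := key y hy.1 (hy.2.trans_lt ht0)
    rw [hy0] at this
    nlinarith [pow_pos hδ 2]
  exact le_of_sq_le_sq (key t ht ht0) hpos.le
end

end SS


namespace SS
open Set Real Filter Topology
open scoped ContDiff unitInterval

theorem U_near (m : ℕ) (c : ℝ) (hc : 0 < c) (U X : ℝ → ℝ) (h : Sol m c U X)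
    (s : ℝ) (hs : s ∈ Icc (0:ℝ) 1) :
    c - m * (m / 4 * √m * (2 * c ^ (2 * m + 1))) * s ≤ U s := by
  have := Convex.norm_image_sub_le_of_norm_hasDerivWithin_le (s := Icc (0:ℝ) 1) (f := U)
    (f' := fun s => m * (1 - s) ^ (m - 2) * X s) (C := m * (m / 4 * √m * (2 * c ^ (2 * m + 1))))
    (fun y hy => (h.dU y hy).hasDerivWithinAt) (fun y hy => ?_) (convex_Icc 0 1)
    (⟨le_rfl, zero_le_one⟩ : (0:ℝ) ∈ Icc (0:ℝ) 1) hs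
  · rw [h.U0, sub_zero, Real.norm_eq_abs, Real.norm_eq_abs, abs_of_nonneg hs.1] at this
    linarith [(abs_le.1 this).1]
  · rw [Real.norm_eq_abs, abs_mul]
    refine mul_le_mul ?_ (h.bX y hy) (abs_nonneg _) (by positivity)
    have h1 : 0 ≤ 1 - y := by linarith [hy.2]
    rw [abs_of_nonneg (by positivity)]
    exact mul_le_of_le_one_right (by positivity) (pow_le_one₀ h1 (by linarith [hy.1]))

set_option maxHeartbeats 800000 in
theorem many (m : ℕ) (hm : 3 ≤ m) (b : ℝ) (hb : 0 < b) (hb1 : b ≤ 1)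
    (hbm : b ^ (2 * m) = al m * (1 - al m)) (n : ℕ) :
    ∃ C : ℝ, ∀ c, C ≤ c → ∀ U X, Sol m c U X → ∃ x : ℕ → ℝ,
      (∀ i ≤ n, x i ∈ Ioo (0:ℝ) 1 ∧ WW m U (x i) = b) ∧ ∀ i < n, x i < x (i + 1) := by
  have hm0 : (0:ℝ) < m := by exact_mod_cast (by omega : 0 < m)
  have hal := al_pos m hm
  have hal3 := al_le m hm
  have ham := al_mul m hm
  obtain ⟨K, hK⟩ : ∃ K : ℝ, K = m * (m / 4 * √m * 2) := ⟨_, rfl⟩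
  have hKp : 0 < K := by
    rw [hK]; have := Real.sqrt_pos.2 hm0; positivity
  obtain ⟨q, hq, hq1, hKq⟩ : ∃ q : ℝ, 0 < q ∧ q ≤ 1 ∧ K * q ^ (2 * m) ≤ 1 / 4 := by
    refine ⟨min 1 (1 / (4 * K)), by positivity, min_le_left _ _, ?_⟩
    have h1 : min 1 (1 / (4 * K)) ^ (2 * m) ≤ min 1 (1 / (4 * K)) :=
      pow_le_of_le_one (by positivity) (min_le_left _ _) (by omega)
    have h2 : K * min 1 (1 / (4 * K)) ≤ K * (1 / (4 * K)) :=
      mul_le_mul_of_nonneg_left (min_le_right _ _) hKp.le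
    have h3 : K * (1 / (4 * K)) = 1 / 4 := by field_simp
    nlinarith
  have hlog2 : 0 < Real.log 2 := Real.log_pos (by norm_num)
  have hTp : 0 < m * Real.log 2 := by positivity
  have hA : 0 < al m * (1 - al m) := mul_pos hal (by linarith)
  obtain ⟨e0, he0⟩ : ∃ e0 : ℝ, e0 = (1 - 2 * al m) * ((q / 4) ^ 2 / (m * Real.log 2)) := ⟨_, rfl⟩
  have he0p : 0 < e0 := by
    rw [he0]; exact mul_pos (by linarith) (by positivity)
  obtain ⟨δ, hδ, hδ2⟩ : ∃ δ : ℝ, 0 < δ ∧ al m * (1 - al m) * δ ^ 2 / 2 ≤ e0 := by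
    refine ⟨√(2 * e0 / (al m * (1 - al m))), Real.sqrt_pos.2 (by positivity), ?_⟩
    rw [Real.sq_sqrt (by positivity)]
    have : 1 - al m ≠ 0 := by linarith
    field_simp; exact le_rfl
  obtain ⟨L, hL, hosc⟩ := osc (al m) b (2 * m) hal hal3 hb hb1 (by omega) (by
    rw [hbm]; push_cast; linear_combination (2 * (1 - al m)) * ham) δ hδ
  refine ⟨max 1 (q * exp ((1 + (n + 1) * (L + 1)) * al m)), fun c hc U X hsol => ?_⟩
  have hc1 : 1 ≤ c := (le_max_left _ _).trans hc
  have hc0 : 0 < c := by linarith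
  have hc2 := (le_max_right _ _).trans hc
  have hw := fun t ht => wt_deriv m hm c U X hsol (t := t) ht
  have hV := fun t ht => Vt_deriv m hm c U X hsol (t := t) ht
  obtain ⟨lw, lV⟩ := lims m hm c U X hsol
  obtain ⟨hanti, hEn⟩ := En_nonpos m _ _ hm hw hV lw lV
  have hn0 : (0:ℝ) ≤ n := by positivity
  -- time
  obtain ⟨t1, ht1⟩ : ∃ t1 : ℝ, t1 = m * Real.log (q / c) := ⟨_, rfl⟩
  have ht1e : exp (al m * t1) = q / c := by
    rw [ht1, show al m * (m * Real.log (q / c)) = (m * al m) * Real.log (q / c) by ring, ham, one_mul,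
      Real.exp_log (by positivity)]
  have ht1b : t1 ≤ - (1 + (n + 1) * (L + 1)) := by
    have h1 : exp (al m * t1) ≤ exp (- ((1 + (n + 1) * (L + 1)) * al m)) := by
      rw [ht1e, Real.exp_neg, div_le_iff₀ hc0, inv_mul_eq_div, le_div_iff₀ (exp_pos _)]
      exact hc2
    have h2 := exp_le_exp.1 h1
    nlinarith
  have hLn : 0 < (n + 1) * (L + 1) := by positivity
  have ht10 : t1 < 0 := by linarith
  have wup : ∀ t < 0, wt m U t ≤ exp (al m * t) * c := by
    intro t ht
    unfold wt WW
    rw [ee_sT m hm ht]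
    have hs := sT_mem m hm ht
    exact mul_le_mul_of_nonneg_left ((le_abs_self _).trans (hsol.bd _ ⟨hs.1.le, hs.2.le⟩)) (exp_pos _).le
  have hw1 : 3 / 4 * q ≤ wt m U t1 := by
    have hs := sT_mem m hm ht10
    have h1 := U_near m c hc0 U X hsol (sT m t1) ⟨hs.1.le, hs.2.le⟩
    have h2 := xi_ge m (by omega) (sT m t1) ⟨hs.1.le, hs.2.le⟩
    rw [xi_sT m hm ht10] at h2
    have h3 : exp (2 * t1) = (q / c) ^ (2 * m) := by
      rw [← ht1e, ← Real.exp_nat_mul]; congr 1; push_cast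
      linear_combination (-2 * t1) * ham
    have h4 : m * (m / 4 * √m * (2 * c ^ (2 * m + 1))) * sT m t1 ≤ K * c ^ (2 * m + 1) * (q / c) ^ (2 * m) := by
      rw [← h3, show m * (m / 4 * √m * (2 * c ^ (2 * m + 1))) = K * c ^ (2 * m + 1) by rw [hK]; ring]
      exact mul_le_mul_of_nonneg_left h2 (by positivity)
    have h5 : K * c ^ (2 * m + 1) * (q / c) ^ (2 * m) = c * (K * q ^ (2 * m)) := by
      rw [div_pow]; field_simp; ring
    have h6 : 3 / 4 * c ≤ U (sT m t1) := by
      rw [h5] at h4; nlinarith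
    unfold wt WW
    rw [ee_sT m hm ht10, ht1e]
    calc 3 / 4 * q = q / c * (3 / 4 * c) := by field_simp
      _ ≤ _ := mul_le_mul_of_nonneg_left h6 (by positivity)
  have hw0 : wt m U (t1 - m * Real.log 2) ≤ q / 2 := by
    refine (wup _ (by linarith)).trans (le_of_eq ?_)
    rw [mul_sub, Real.exp_sub, ht1e, show al m * (m * Real.log 2) = (m * al m) * Real.log 2 by ring,
      ham, one_mul, Real.exp_log (by norm_num)]
    field_simp
  have hE1 := En_drop m _ _ hm hw hV hEn (t1 - m * Real.log 2) t1 (q / 4) (by linarith) ht10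
    (by positivity) (by linarith)
  rw [sub_sub_cancel, ← he0] at hE1
  have hlow := w_lower m _ _ hm hw hanti t1 e0 δ he0p hδ hδ2 ht10 hE1 (by linarith)
  have hex : ∀ i : ℕ, i ≤ n → ∃ t ∈ Icc (t1 + i * (L + 1)) (t1 + i * (L + 1) + L), wt m U t = b := by
    intro i hi
    have hi' : (i:ℝ) ≤ n := by exact_mod_cast hi
    have hi0 : (0:ℝ) ≤ i * (L + 1) := by positivity
    have hi1 : (i:ℝ) * (L + 1) ≤ n * (L + 1) := mul_le_mul_of_nonneg_right hi' (by linarith)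
    have hend : t1 + i * (L + 1) + L ≤ -1 := by linarith
    refine hosc _ _ (Vt m U X) ?_ ?_
    · calc exp (2 * (t1 + i * (L + 1) + L)) ≤ exp (-2) := exp_le_exp.2 (by linarith)
        _ ≤ 1 / 3 := by
          rw [Real.exp_neg, inv_eq_one_div]
          apply one_div_le_one_div_of_le (by norm_num)
          linarith [Real.add_one_le_exp (2:ℝ)]
    · intro t ht
      have ht0 : t < 0 := by linarith [ht.2]
      have ht1' : t1 ≤ t := by linarith [ht.1]
      refine ⟨hw t ht0, ?_, hlow t ht1' ht0, (le_abs_self _).trans (w_le_one m _ _ hm t ht0 (hEn t ht0))⟩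
      have := hV t ht0
      unfold ff at this
      rw [hbm]
      exact this
  choose! y hy1 hy2 using hex
  have hy0 : ∀ i ≤ n, y i < 0 := by
    intro i hi
    have hi' : (i:ℝ) ≤ n := by exact_mod_cast hi
    have hi1 : (i:ℝ) * (L + 1) ≤ n * (L + 1) := mul_le_mul_of_nonneg_right hi' (by linarith)
    have := (hy1 i hi).2
    linarith
  refine ⟨fun i => sT m (y i), fun i hi => ⟨sT_mem m hm (hy0 i hi), hy2 i hi⟩, fun i hi => ?_⟩
  refine sT_mono m hm ?_ (hy0 _ hi)
  have h1 := (hy1 i hi.le).2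
  have h2 := (hy1 (i+1) hi).1
  push_cast at h2
  linarith

end SS


namespace SS
open Set Real Filter Topology
open scoped ContDiff unitInterval

theorem polar (a b : ℝ) (v Z v' Z' θ : ℝ → ℝ)
    (hv : ContinuousOn v (Icc a b)) (hZ : ContinuousOn Z (Icc a b)) (hθ : ContinuousOn θ (Icc a b))
    (dv : ∀ s ∈ Ioo a b, HasDerivAt v (v' s) s) (dZ : ∀ s ∈ Ioo a b, HasDerivAt Z (Z' s) s)
    (hr : ∀ s ∈ Icc a b, 0 < v s ^ 2 + Z s ^ 2)
    (dθ : ∀ s ∈ Ioo a b, HasDerivAt θ ((v s * Z' s - Z s * v' s) / (v s ^ 2 + Z s ^ 2)) s)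
    (hva : v a < 0) (hθa : θ a = π + arctan (Z a / v a)) (s : ℝ) (hs : s ∈ Icc a b) :
    v s = √(v s ^ 2 + Z s ^ 2) * cos (θ s) ∧ Z s = √(v s ^ 2 + Z s ^ 2) * sin (θ s) := by
  let h : ℝ → ℝ := fun s => (v s * cos (θ s) + Z s * sin (θ s)) / √(v s ^ 2 + Z s ^ 2)
  have hrp : ∀ s ∈ Icc a b, 0 < √(v s ^ 2 + Z s ^ 2) := fun s hs => Real.sqrt_pos.2 (hr s hs)
  have hc : ContinuousOn h (Icc a b) := by
    apply ContinuousOn.div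
    · exact (hv.mul (Real.continuous_cos.comp_continuousOn hθ)).add
        (hZ.mul (Real.continuous_sin.comp_continuousOn hθ))
    · exact Real.continuous_sqrt.comp_continuousOn ((hv.pow 2).add (hZ.pow 2))
    · exact fun s hs => (hrp s hs).ne'
  have hd : ∀ s ∈ Ioo a b, HasDerivAt h 0 s := by
    intro s hs
    have hs' := Ioo_subset_Icc_self hs
    have h1 := ((dv s hs).mul (dθ s hs).cos).add ((dZ s hs).mul (dθ s hs).sin)
    have h2 := (((dv s hs).pow 2).add ((dZ s hs).pow 2)).sqrt (hr s hs').ne'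
    have h3 := h1.div h2 (hrp s hs').ne'
    refine HasDerivAt.congr_deriv h3 ?_
    have e0 := hrp s hs'
    have e1 : √(v s ^ 2 + Z s ^ 2) ^ 2 = v s ^ 2 + Z s ^ 2 := Real.sq_sqrt (hr s hs').le
    simp only [Pi.mul_apply, Pi.add_apply, Pi.pow_apply]
    rw [← e1]
    have e2 : √(√(v s ^ 2 + Z s ^ 2) ^ 2) = √(v s ^ 2 + Z s ^ 2) := by rw [e1]
    rw [e2]
    generalize √(v s ^ 2 + Z s ^ 2) = r at *
    have e3 : v s ^ 2 = r ^ 2 - Z s ^ 2 := by linarith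
    field_simp
    simp only [show 2 - 1 = 1 by omega, pow_one]
    push_cast
    ring_nf
    have e4 : v s ^ 3 = v s * (r ^ 2 - Z s ^ 2) := by rw [← e3]; ring
    have e5 : v s ^ 2 = r ^ 2 - Z s ^ 2 := e3
    simp only [e4, e5]
    ring
  have hcon : h s = h a := by
    have := constant_of_derivWithin_zero (f := h) (a := a) (b := b)
    by_cases hab : a = s
    · rw [hab]
    have hlt : a < s := lt_of_le_of_ne hs.1 hab
    obtain ⟨y, hy, hy'⟩ := exists_hasDerivAt_eq_slope h (fun _ => 0) hlt
      (hc.mono (Icc_subset_Icc le_rfl hs.2)) (fun y hy => hd y ⟨hy.1, hy.2.trans_le hs.2⟩)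
    have : h s - h a = 0 := by
      have h0 : s - a ≠ 0 := by linarith
      field_simp at hy'
      linarith
    linarith
  have hha : h a = 1 := by
    have ha : a ∈ Icc a b := ⟨le_rfl, hs.1.trans hs.2⟩
    simp only [h]
    rw [hθa, add_comm π, Real.cos_add_pi, Real.sin_add_pi, Real.cos_arctan, Real.sin_arctan]
    have hva0 : v a ≠ 0 := hva.ne
    have e1 : √(1 + (Z a / v a) ^ 2) = √(v a ^ 2 + Z a ^ 2) / (- v a) := by
      rw [eq_div_iff (by linarith), ← Real.sqrt_sq (by linarith : 0 ≤ - v a), ← Real.sqrt_mul (by positivity)]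
      congr 1
      field_simp
    have e0 := hrp a ha
    have e2 : √(v a ^ 2 + Z a ^ 2) ^ 2 = v a ^ 2 + Z a ^ 2 := Real.sq_sqrt (hr a ha).le
    rw [e1]
    generalize √(v a ^ 2 + Z a ^ 2) = r at *
    field_simp
    linarith
  rw [hha] at hcon
  have e0 := hrp s hs
  have e2 : √(v s ^ 2 + Z s ^ 2) ^ 2 = v s ^ 2 + Z s ^ 2 := Real.sq_sqrt (hr s hs).le
  simp only [h] at hcon
  generalize √(v s ^ 2 + Z s ^ 2) = r at *
  rw [div_eq_one_iff_eq e0.ne'] at hcon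
  have e3 := Real.sin_sq_add_cos_sq (θ s)
  have e4 : (v s - r * cos (θ s)) ^ 2 + (Z s - r * sin (θ s)) ^ 2 = 0 := by
    have : (v s - r * cos (θ s)) ^ 2 + (Z s - r * sin (θ s)) ^ 2 = (v s ^ 2 + Z s ^ 2)
      - 2 * r * (v s * cos (θ s) + Z s * sin (θ s)) + r ^ 2 * (sin (θ s) ^ 2 + cos (θ s) ^ 2) := by ring
    rw [this, hcon, e3, ← e2]; ring
  constructor
  · nlinarith [sq_nonneg (v s - r * cos (θ s)), sq_nonneg (Z s - r * sin (θ s)), pow_eq_zero_iff (M₀ := ℝ) (n := 2) two_ne_zero (a := v s - r * cos (θ s)) |>.1 (by nlinarith [sq_nonneg (v s - r * cos (θ s)), sq_nonneg (Z s - r * sin (θ s))])]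
  · have := pow_eq_zero_iff (M₀ := ℝ) (n := 2) two_ne_zero (a := Z s - r * sin (θ s)) |>.1 (by nlinarith [sq_nonneg (v s - r * cos (θ s)), sq_nonneg (Z s - r * sin (θ s))])
    linarith

theorem ee_cont (m : ℕ) (hm : 3 ≤ m) : Continuous (ee m) := by
  unfold ee
  exact (xi_cont m).rpow_const fun _ => Or.inr (by linarith [al_pos m hm])

theorem WW_cont (m : ℕ) (hm : 3 ≤ m) (U : ℝ → ℝ) (hU : Continuous U) : Continuous (WW m U) :=
  (ee_cont m hm).mul hU

theorem ZZ_cont (m : ℕ) (hm : 3 ≤ m) (U X : ℝ → ℝ) (hU : Continuous U) (hX : Continuous X) :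
    Continuous (ZZ m U X) := by
  have := ee_cont m hm
  have := xi_cont m
  unfold ZZ; fun_prop

theorem ee_small (m : ℕ) (hm : 3 ≤ m) (ε : ℝ) (hε : 0 < ε) :
    ∃ s1 ∈ Ioo (0:ℝ) 1, ∀ s ∈ Icc 0 s1, ee m s < ε := by
  have h0 : ee m 0 = 0 := by
    unfold ee xi
    have := al_pos m hm
    simp; exact Real.zero_rpow (by positivity)
  have h1 : ∀ᶠ s in 𝓝 (0:ℝ), ee m s < ε := by
    have := (ee_cont m hm).tendsto 0
    rw [h0] at this
    exact this.eventually (gt_mem_nhds hε)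
  obtain ⟨d, hd, hd2⟩ := Metric.eventually_nhds_iff.1 h1
  refine ⟨min (d / 2) (1 / 2), ⟨by positivity, (min_le_right _ _).trans_lt (by norm_num)⟩, fun s hs => hd2 ?_⟩
  rw [Real.dist_eq, sub_zero, abs_of_nonneg hs.1]
  have := hs.2.trans (min_le_left _ _)
  linarith

theorem ff_lip (m : ℕ) (hm : 3 ≤ m) (b : ℝ) (hb : 0 < b) (hbm : b ^ (2 * m) = al m * (1 - al m)) (B : ℝ) (hB : b ≤ B) :
    ∃ l, 0 ≤ l ∧ ∀ w, |w| ≤ B → |ff m w| ≤ l * |w - b| := by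
  refine ⟨|al m * (1 - al m)| + (2 * m + 1 : ℕ) * B ^ (2 * m + 1 - 1), ?_, fun w hw => ?_⟩
  · have : 0 ≤ B := by linarith
    positivity
  have hfb : al m * (1 - al m) * b - b ^ (2 * m + 1) = 0 := by rw [← hbm]; ring
  have h1 := abs_pow_sub_pow_le w b (2 * m + 1)
  have h2 : max |w| |b| ^ (2 * m + 1 - 1) ≤ B ^ (2 * m + 1 - 1) :=
    pow_le_pow_left₀ (le_max_of_le_left (abs_nonneg _)) (max_le hw (by rwa [abs_of_pos hb])) _
  have h4 : |w ^ (2*m+1) - b ^ (2*m+1)| ≤ |w - b| * (2 * m + 1 : ℕ) * B ^ (2 * m + 1 - 1) :=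
    h1.trans (mul_le_mul_of_nonneg_left h2 (by positivity))
  have h3 : |ff m w| ≤ |al m * (1 - al m)| * |w - b| + |w ^ (2*m+1) - b ^ (2*m+1)| := by
    unfold ff
    rw [← abs_mul]
    refine le_trans (le_of_eq ?_) (abs_sub _ _)
    congr 1; linear_combination hfb
  linarith

theorem no_double (m : ℕ) (hm : 3 ≤ m) (b : ℝ) (hb : 0 < b)
    (hbm : b ^ (2 * m) = al m * (1 - al m)) (c : ℝ) (U X : ℝ → ℝ) (h : Sol m c U X)
    (s0 : ℝ) (hs0 : s0 ∈ Ioc (0:ℝ) 1) : 0 < (WW m U s0 - b) ^ 2 + ZZ m U X s0 ^ 2 := by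
  have hc0 : 0 ≤ c := (abs_nonneg _).trans (h.bd 0 ⟨le_rfl, zero_le_one⟩)
  have hm0 : (0:ℝ) < m := by exact_mod_cast (by omega : 0 < m)
  have hWc := WW_cont m hm U h.cU
  have hZc := ZZ_cont m hm U X h.cU h.cX
  obtain ⟨s1, hs1, hsm⟩ := ee_small m hm (b / (c + 1)) (by positivity)
  have hee : ∀ s ∈ Icc (0:ℝ) 1, 0 ≤ ee m s := fun s hs =>
    Real.rpow_nonneg (hs.1.trans (xi_ge m (by omega) s hs)) _
  have hlt : ∀ s ∈ Icc 0 s1, WW m U s < b := by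
    intro s hs
    have hs' : s ∈ Icc (0:ℝ) 1 := ⟨hs.1, hs.2.trans hs1.2.le⟩
    have h1 : WW m U s ≤ ee m s * c :=
      mul_le_mul_of_nonneg_left ((le_abs_self _).trans (h.bd s hs')) (hee s hs')
    have h2 := hsm s hs
    rw [lt_div_iff₀ (by linarith)] at h2
    nlinarith [hee s hs']
  obtain ⟨y, hy, hyW⟩ : ∃ y ∈ Ioc (0:ℝ) s0, WW m U y < b :=
    ⟨min s0 s1, ⟨lt_min hs0.1 hs1.1, min_le_left _ _⟩, hlt _ ⟨(lt_min hs0.1 hs1.1).le, min_le_right _ _⟩⟩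
  obtain ⟨B, hB⟩ : ∃ B, B = b + c := ⟨_, rfl⟩
  have hWB : ∀ s ∈ Icc (0:ℝ) 1, |WW m U s| ≤ B := by
    intro s hs
    unfold WW
    have : ee m s ≤ 1 := Real.rpow_le_one (hs.1.trans (xi_ge m (by omega) s hs)) (xi_le m s hs)
      (by linarith [al_pos m hm])
    rw [abs_mul, abs_of_nonneg (hee s hs)]
    have := h.bd s hs
    nlinarith [abs_nonneg (U s), hee s hs]
  obtain ⟨l, hl, hfl⟩ := ff_lip m hm b hb hbm B (by linarith)
  let C : ℝ := m / y * (2 + l)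
  let R : ℝ → ℝ := fun s => ((WW m U s - b) ^ 2 + ZZ m U X s ^ 2) * exp (C * s)
  have hmono : MonotoneOn R (Icc y s0) := by
    have hd : ∀ s ∈ Ioo y s0, HasDerivAt R ((2 * (WW m U s - b) * (m / (2 * xi m s) * (1 - s) ^ (m - 2) * ZZ m U X s)
      + 2 * ZZ m U X s * (m / (2 * xi m s) * (ff m (WW m U s) -
      (1 - 2 * al m) * (1 - s) ^ (m - 1) * ZZ m U X s))) * exp (C * s) +
      ((WW m U s - b) ^ 2 + ZZ m U X s ^ 2) * (exp (C * s) * C)) s := by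
      intro s hs
      have hs1 : s ∈ Ioo (0:ℝ) 1 := ⟨hy.1.trans hs.1, hs.2.trans_le hs0.2⟩
      have d1 := W_deriv m hm c U X h s ⟨hs1.1, hs1.2.le⟩
      have d2 := (Z_deriv m hm c U X h s ⟨hs1.1, hs1.2.le⟩).hasDerivAt (Icc_mem_nhds hs1.1 hs1.2)
      have := (((d1.sub_const b).pow 2).add (d2.pow 2)).mul (((hasDerivAt_id s).const_mul C).exp)
      refine HasDerivAt.congr_deriv this ?_
      simp
    apply monotoneOn_of_deriv_nonneg (convex_Icc y s0)
    · simp only [R]; fun_prop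
    · intro s hs; rw [interior_Icc] at hs
      exact (hd s hs).differentiableAt.differentiableWithinAt
    · intro s hs; rw [interior_Icc] at hs
      rw [(hd s hs).deriv]
      have hs1 : s ∈ Ioo (0:ℝ) 1 := ⟨hy.1.trans hs.1, hs.2.trans_le hs0.2⟩
      have hxg : y ≤ xi m s := hs.1.le.trans (xi_ge m (by omega) s ⟨hs1.1.le, hs1.2.le⟩)
      have hx0 : 0 < xi m s := hy.1.trans_le hxg
      have hf := hfl _ (hWB s ⟨hs1.1.le, hs1.2.le⟩)
      have t0 : 0 ≤ 1 - s := by linarith [hs1.2]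
      have t1 : (1 - s) ^ (m - 2) ≤ 1 := pow_le_one₀ t0 (by linarith [hs1.1])
      have t2 : (1 - s) ^ (m - 1) ≤ 1 := pow_le_one₀ t0 (by linarith [hs1.1])
      have t1' : 0 ≤ (1 - s) ^ (m - 2) := by positivity
      have t2' : 0 ≤ (1 - s) ^ (m - 1) := by positivity
      have ha0 := al_pos m hm
      have ha1 := al_le m hm
      generalize hv : WW m U s - b = v at *
      generalize ZZ m U X s = z at *
      generalize ff m (WW m U s) = f at *
      generalize (1 - s) ^ (m - 2) = p1 at *
      generalize (1 - s) ^ (m - 1) = p2 at *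
      have hpow : 0 < exp (C * s) := exp_pos _
      have g1 : |v * z| ≤ (v ^ 2 + z ^ 2) / 2 := by
        rw [abs_le]; constructor <;> nlinarith [sq_nonneg (v + z), sq_nonneg (v - z)]
      have g2 : |v * z * p1| ≤ (v ^ 2 + z ^ 2) / 2 := by
        rw [abs_mul, abs_of_nonneg t1']; nlinarith [abs_nonneg (v * z)]
      have g3 : |z * f| ≤ l * ((v ^ 2 + z ^ 2) / 2) := by
        have : |z * f| ≤ l * |v * z| := by
          rw [abs_mul, abs_mul]; nlinarith [abs_nonneg z]
        nlinarith
      have g4 : (1 - 2 * al m) * p2 * z ^ 2 ≤ v ^ 2 + z ^ 2 := by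
        have : (1 - 2 * al m) * p2 ≤ 1 := by nlinarith
        nlinarith [sq_nonneg z, sq_nonneg v]
      have g5 : -((2 + l) * (v ^ 2 + z ^ 2)) ≤ v * z * p1 + z * f - (1 - 2 * al m) * p2 * z ^ 2 := by
        have := (abs_le.1 g2).1
        have := (abs_le.1 g3).1
        nlinarith [sq_nonneg z, sq_nonneg v, mul_nonneg hl (sq_nonneg v), mul_nonneg hl (sq_nonneg z)]
      have g6 : m / xi m s ≤ m / y := div_le_div_of_nonneg_left hm0.le hy.1 hxg
      have g7 : 0 ≤ (2 + l) * (v ^ 2 + z ^ 2) := by positivity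
      have g8 : 0 < m / xi m s := by positivity
      have g9 : 0 ≤ m / xi m s * (v * z * p1 + z * f - (1 - 2 * al m) * p2 * z ^ 2) + C * (v ^ 2 + z ^ 2) := by
        have e1 := mul_le_mul_of_nonneg_left g5 g8.le
        have e2 := mul_le_mul_of_nonneg_right g6 g7
        have e3 : C * (v ^ 2 + z ^ 2) = m / y * ((2 + l) * (v ^ 2 + z ^ 2)) := by simp only [C]; ring
        rw [e3]
        linarith
      have g10 := mul_nonneg g9 hpow.le
      refine g10.trans (le_of_eq ?_)
      field_simp
      ring
  have h1 := hmono ⟨le_rfl, hy.2⟩ ⟨hy.2, le_rfl⟩ hy.2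
  simp only [R] at h1
  have h2 : 0 < (WW m U y - b) ^ 2 := by
    have : WW m U y - b ≠ 0 := by linarith
    positivity
  have h3 : 0 < ((WW m U y - b) ^ 2 + ZZ m U X y ^ 2) * exp (C * y) := by positivity
  exact pos_of_mul_pos_left (h3.trans_le h1) (exp_pos _).le

end SS


namespace SS
open Set Real Filter Topology
open scoped ContDiff unitInterval

noncomputable def Dn (m : ℕ) (b : ℝ) (U X : ℝ → ℝ) (s : ℝ) : ℝ :=
  ((WW m U s - b) * (m / (2 * xi m s) * (ff m (WW m U s) - (1 - 2 * al m) * (1 - s) ^ (m - 1) * ZZ m U X s))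
    - ZZ m U X s * (m / (2 * xi m s) * (1 - s) ^ (m - 2) * ZZ m U X s))
    / ((WW m U s - b) ^ 2 + ZZ m U X s ^ 2)

noncomputable def pr (s1 y : ℝ) : ℝ := max s1 (min y 1)

theorem pr_cont (s1 : ℝ) : Continuous (pr s1) := by unfold pr; fun_prop

theorem pr_mem (s1 y : ℝ) (h : s1 ≤ 1) : pr s1 y ∈ Icc s1 1 :=
  ⟨le_max_left _ _, max_le h (min_le_right _ _)⟩

theorem pr_eq (s1 y : ℝ) (h : y ∈ Icc s1 1) : pr s1 y = y := by
  unfold pr; rw [min_eq_left h.2, max_eq_right h.1]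

noncomputable def TH (m : ℕ) (b s1 : ℝ) (U X : ℝ → ℝ) (s : ℝ) : ℝ :=
  π + arctan (ZZ m U X s1 / (WW m U s1 - b)) + ∫ y in s1..s, Dn m b U X (pr s1 y)

theorem ff_cont (m : ℕ) : Continuous (ff m) := by unfold ff; fun_prop

/-- joint continuity -/
theorem Dn_cont (m : ℕ) (hm : 3 ≤ m) (b : ℝ) (hb : 0 < b)
    (hbm : b ^ (2 * m) = al m * (1 - al m)) {A : Type*} [TopologicalSpace A] (c : A → ℝ)
    (U X : A → ℝ → ℝ) (h : ∀ a, Sol m (c a) (U a) (X a)) (s1 : ℝ) (hs1 : s1 ∈ Ioo (0:ℝ) 1)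
    (hU : Continuous fun z : A × ℝ => U z.1 (pr s1 z.2))
    (hX : Continuous fun z : A × ℝ => X z.1 (pr s1 z.2)) :
    Continuous fun z : A × ℝ => Dn m b (U z.1) (X z.1) (pr s1 z.2) := by
  have h1 := (pr_cont s1).comp (continuous_snd (X := A) (Y := ℝ))
  have h2 := (ee_cont m hm).comp h1
  have h3 := (xi_cont m).comp h1
  simp only [Function.comp_def] at h1 h2 h3
  have hmem : ∀ y, pr s1 y ∈ Ioc (0:ℝ) 1 := fun y =>
    ⟨hs1.1.trans_le (pr_mem s1 y hs1.2.le).1, (pr_mem s1 y hs1.2.le).2⟩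
  have h4 : ∀ z : A × ℝ, 2 * xi m (pr s1 z.2) ≠ 0 := fun z => by
    have := xi_pos m (by omega) _ (hmem z.2); positivity
  have hW : Continuous fun z : A × ℝ => WW m (U z.1) (pr s1 z.2) := by
    unfold WW; exact h2.mul hU
  have hZ : Continuous fun z : A × ℝ => ZZ m (U z.1) (X z.1) (pr s1 z.2) := by
    unfold ZZ
    exact h2.mul (((continuous_const.mul h3).mul hX).add ((continuous_const.mul (continuous_const.sub h1)).mul hU))
  have hF := (ff_cont m).comp hW
  simp only [Function.comp_def] at hF
  have hq : Continuous fun z : A × ℝ => (m:ℝ) / (2 * xi m (pr s1 z.2)) :=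
    continuous_const.div (continuous_const.mul h3) h4
  unfold Dn
  apply Continuous.div
  · fun_prop
  · fun_prop
  · exact fun z => (no_double m hm b hb hbm _ _ _ (h z.1) _ (hmem z.2)).ne'

theorem TH_props (m : ℕ) (hm : 3 ≤ m) (b : ℝ) (hb : 0 < b)
    (hbm : b ^ (2 * m) = al m * (1 - al m)) (c : ℝ)
    (U X : ℝ → ℝ) (h : Sol m c U X) (s1 : ℝ) (hs1 : s1 ∈ Ioo (0:ℝ) 1) (hW : WW m U s1 < b) :
    ContinuousOn (TH m b s1 U X) (Icc s1 1) ∧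
    (∀ s ∈ Ioo s1 1, HasDerivAt (TH m b s1 U X) (Dn m b U X s) s) ∧
    TH m b s1 U X s1 < 3 * π / 2 ∧ π / 2 < TH m b s1 U X s1 ∧
    (∀ s ∈ Icc s1 1, WW m U s - b = √((WW m U s - b) ^ 2 + ZZ m U X s ^ 2) * cos (TH m b s1 U X s) ∧
      ZZ m U X s = √((WW m U s - b) ^ 2 + ZZ m U X s ^ 2) * sin (TH m b s1 U X s)) ∧
    (∀ s ∈ Icc s1 1, WW m U s = b ↔ cos (TH m b s1 U X s) = 0) ∧
    (∀ s ∈ Icc s1 1, ZZ m U X s = 0 ↔ sin (TH m b s1 U X s) = 0) ∧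
    (∀ s ∈ Ioo s1 1, cos (TH m b s1 U X s) = 0 → Dn m b U X s < 0) := by
  have hDc : Continuous fun y : ℝ => Dn m b U X (pr s1 y) := by
    have e0 : Continuous fun z : Unit × ℝ => pr s1 z.2 := (pr_cont s1).comp continuous_snd
    have e1 : Continuous fun z : Unit × ℝ => U (pr s1 z.2) := h.cU.comp e0
    have e2 : Continuous fun z : Unit × ℝ => X (pr s1 z.2) := h.cX.comp e0
    have e3 : Continuous fun z : Unit × ℝ => Dn m b U X (pr s1 z.2) :=
      Dn_cont m hm b hb hbm (A := Unit) (fun _ => c) (fun _ => U) (fun _ => X) (fun _ => h) s1 hs1 e1 e2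
    have e4 : Continuous fun y : ℝ => ((), y) := by fun_prop
    have e5 := Continuous.comp e3 e4
    simpa only [Function.comp_def] using e5
  have hder : ∀ s, HasDerivAt (TH m b s1 U X) (Dn m b U X (pr s1 s)) s := by
    intro s
    unfold TH
    generalize Dn m b U X = D at *
    exact (intervalIntegral.integral_hasDerivAt_right (hDc.intervalIntegrable _ _)
      (hDc.stronglyMeasurableAtFilter _ _) hDc.continuousAt).const_add _
  have hTc : ContinuousOn (TH m b s1 U X) (Icc s1 1) := fun s _ => (hder s).continuousAt.continuousWithinAt
  have hTd : ∀ s ∈ Ioo s1 1, HasDerivAt (TH m b s1 U X) (Dn m b U X s) s := fun s hs => by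
    have := hder s
    rwa [pr_eq s1 s (Ioo_subset_Icc_self hs)] at this
  have hT1 : TH m b s1 U X s1 = π + arctan (ZZ m U X s1 / (WW m U s1 - b)) := by
    unfold TH; simp
  have hr : ∀ s ∈ Icc s1 1, 0 < (WW m U s - b) ^ 2 + ZZ m U X s ^ 2 := fun s hs =>
    no_double m hm b hb hbm _ _ _ h s ⟨hs1.1.trans_le hs.1, hs.2⟩
  have hpol := polar s1 1 (fun s => WW m U s - b) (ZZ m U X)
    (fun s => m / (2 * xi m s) * (1 - s) ^ (m - 2) * ZZ m U X s)
    (fun s => m / (2 * xi m s) * (ff m (WW m U s) - (1 - 2 * al m) * (1 - s) ^ (m - 1) * ZZ m U X s))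
    (TH m b s1 U X) ((WW_cont m hm U h.cU).sub continuous_const).continuousOn
    (ZZ_cont m hm U X h.cU h.cX).continuousOn hTc
    (fun s hs => (W_deriv m hm c U X h s ⟨hs1.1.trans hs.1, hs.2.le⟩).sub_const b)
    (fun s hs => (Z_deriv m hm c U X h s ⟨hs1.1.trans hs.1, hs.2.le⟩).hasDerivAt
      (Icc_mem_nhds (hs1.1.trans hs.1) hs.2)) hr hTd (by linarith) hT1
  have hw0 : ∀ s ∈ Icc s1 1, WW m U s = b ↔ cos (TH m b s1 U X s) = 0 := fun s hs => by
    have := (hpol s hs).1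
    have h2 := Real.sqrt_pos.2 (hr s hs)
    constructor
    · intro h3
      rw [h3, sub_self] at this
      rw [h3, sub_self] at h2
      rcases mul_eq_zero.1 this.symm with h | h
      · exact absurd h h2.ne'
      · exact h
    · intro h3
      rw [h3, mul_zero] at this; linarith
  refine ⟨hTc, hTd, ?_, ?_, hpol, hw0, ?_, ?_⟩
  · rw [hT1]; linarith [arctan_lt_pi_div_two (ZZ m U X s1 / (WW m U s1 - b))]
  · rw [hT1]; linarith [neg_pi_div_two_lt_arctan (ZZ m U X s1 / (WW m U s1 - b))]
  · intro s hs
    have := (hpol s hs).2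
    have h2 := Real.sqrt_pos.2 (hr s hs)
    constructor
    · intro h3
      rw [h3] at this h2
      rcases mul_eq_zero.1 this.symm with h | h
      · exact absurd h h2.ne'
      · exact h
    · intro h3
      rw [h3, mul_zero] at this; linarith
  · intro s hs hcos
    have h3 := (hw0 s (Ioo_subset_Icc_self hs)).2 hcos
    have h4 := hr s (Ioo_subset_Icc_self hs)
    unfold Dn
    rw [h3] at h4 ⊢
    have h5 : 0 < ZZ m U X s ^ 2 := by simpa using h4
    have h6 := xi_pos m (by omega) s ⟨hs1.1.trans hs.1, hs.2.le⟩
    have h7 : 0 < 1 - s := by linarith [hs.2]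
    have hm0 : (0:ℝ) < m := by exact_mod_cast (by omega : 0 < m)
    apply div_neg_of_neg_of_pos _ h4
    have : 0 < m / (2 * xi m s) * (1 - s) ^ (m - 2) * ZZ m U X s ^ 2 := by positivity
    nlinarith [this]

theorem xi_one (m : ℕ) (hm : 3 ≤ m) : xi m 1 = 1 := by
  unfold xi; simp; omega

theorem ee_one (m : ℕ) (hm : 3 ≤ m) : ee m 1 = 1 := by
  unfold ee; rw [xi_one m hm, Real.one_rpow]

theorem shoot (m : ℕ) (hm : 3 ≤ m) (n : ℕ) (b0 b : ℝ) (hb0 : 0 < b0)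
    (hb0m : b0 ^ (2 * m) = al m * (al m + 1)) (hb : 0 < b) (hb1 : b ≤ 1)
    (hbm : b ^ (2 * m) = al m * (1 - al m)) :
    ∃ c U X, Sol m c U X ∧ X 1 = 0 ∧
      {s ∈ Ioo (0:ℝ) 1 | WW m U s = b}.encard = (n + 1 : ℕ∞) := by
  have hpi := pi_pos
  obtain ⟨C, hC⟩ := many m hm b hb hb1 hbm (n + 1)
  set M := max C (b0 + 1) with hMdef
  have hM : b0 < M := lt_of_lt_of_le (by linarith) (le_max_right _ _)
  have hM0 : 0 < M := hb0.trans hM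
  obtain ⟨U, X, K, hsol, hlip, hbase⟩ := family m hm b0 hb0 hb0m M hM
  obtain ⟨s1, hs1, hee⟩ := ee_small m hm (b / M) (by positivity)
  have hWs : ∀ c ∈ Icc b0 M, ∀ s ∈ Ioc 0 s1, WW m (U c) s < b := by
    intro c hc s hs
    have h1 := hee s ⟨hs.1.le, hs.2⟩
    have h2 := (hsol c hc).bd s ⟨hs.1.le, hs.2.trans hs1.2.le⟩
    have h3 : U c s ≤ M := (le_abs_self _).trans (h2.trans hc.2)
    have h4 := ee_pos m hm s ⟨hs.1, hs.2.trans hs1.2.le⟩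
    unfold WW
    calc ee m s * U c s ≤ ee m s * M := by gcongr
      _ < b / M * M := by gcongr
      _ = b := by field_simp
  have hs1' : s1 ∈ Ioc 0 s1 := ⟨hs1.1, le_rfl⟩
  have hP := fun c hc => TH_props m hm b hb hbm c (U c) (X c) (hsol c hc) s1 hs1 (hWs c hc s1 hs1')
  let Θ : Icc b0 M → ℝ := fun c => TH m b s1 (U c) (X c) 1
  have hK : ∀ c ∈ Icc b0 M, ∀ c' ∈ Icc b0 M, ∀ s ∈ Icc (0:ℝ) 1, |U c s - U c' s| ≤ (K.toNNReal : ℝ) * |c - c'| ∧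
      |X c s - X c' s| ≤ (K.toNNReal : ℝ) * |c - c'| := by
    intro c hc c' hc' s hs
    have h1 := hlip c hc c' hc' s hs
    have h2 : K * |c - c'| ≤ (K.toNNReal : ℝ) * |c - c'| := by
      gcongr; exact Real.le_coe_toNNReal K
    exact ⟨h1.1.trans h2, h1.2.trans h2⟩
  have hpm : ∀ y, pr s1 y ∈ Icc (0:ℝ) 1 := fun y =>
    ⟨hs1.1.le.trans (pr_mem s1 y hs1.2.le).1, (pr_mem s1 y hs1.2.le).2⟩
  have hUc : Continuous fun z : Icc b0 M × ℝ => U z.1 (pr s1 z.2) := by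
    refine continuous_prod_of_continuous_lipschitzWith _ K.toNNReal (fun c => ?_) (fun y => ?_)
    · exact (hsol c c.2).cU.comp (pr_cont s1)
    · refine LipschitzWith.of_dist_le_mul fun c c' => ?_
      rw [Real.dist_eq, Subtype.dist_eq, Real.dist_eq]
      exact (hK c c.2 c' c'.2 _ (hpm y)).1
  have hXc : Continuous fun z : Icc b0 M × ℝ => X z.1 (pr s1 z.2) := by
    refine continuous_prod_of_continuous_lipschitzWith _ K.toNNReal (fun c => ?_) (fun y => ?_)
    · exact (hsol c c.2).cX.comp (pr_cont s1)
    · refine LipschitzWith.of_dist_le_mul fun c c' => ?_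
      rw [Real.dist_eq, Subtype.dist_eq, Real.dist_eq]
      exact (hK c c.2 c' c'.2 _ (hpm y)).2
  have hDc := Dn_cont m hm b hb hbm (A := Icc b0 M) (fun c => c) (fun c => U c) (fun c => X c)
    (fun c => hsol c c.2) s1 hs1 hUc hXc
  have hΘ : Continuous Θ := by
    have hU1 : Continuous fun c : Icc b0 M => U c s1 := by
      have := hUc.comp (continuous_id.prodMk continuous_const : Continuous fun c : Icc b0 M => (c, s1))
      simpa [Function.comp_def, pr_eq s1 s1 ⟨le_rfl, hs1.2.le⟩] using this
    have hX1 : Continuous fun c : Icc b0 M => X c s1 := by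
      have := hXc.comp (continuous_id.prodMk continuous_const : Continuous fun c : Icc b0 M => (c, s1))
      simpa [Function.comp_def, pr_eq s1 s1 ⟨le_rfl, hs1.2.le⟩] using this
    have hI := intervalIntegral.continuous_parametric_intervalIntegral_of_continuous' (μ := MeasureTheory.volume)
      (f := fun (c : Icc b0 M) y => Dn m b (U c) (X c) (pr s1 y)) hDc s1 1
    have hq : Continuous fun c : Icc b0 M => ZZ m (U c) (X c) s1 / (WW m (U c) s1 - b) := by
      apply Continuous.div
      · unfold ZZ
        exact continuous_const.mul ((continuous_const.mul hX1).add (continuous_const.mul hU1))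
      · unfold WW; exact (continuous_const.mul hU1).sub continuous_const
      · intro c; have := hWs c c.2 s1 hs1'; linarith
    exact (continuous_const.add (Real.continuous_arctan.comp hq)).add hI
  have hlow : ∃ a, Θ a ≤ -(n * π) := by
    refine ⟨⟨M, hM.le, le_rfl⟩, ?_⟩
    have hMm : M ∈ Icc b0 M := ⟨hM.le, le_rfl⟩
    obtain ⟨x, hx, hxm⟩ := hC M (le_max_left _ _) (U M) (X M) (hsol M hMm)
    obtain ⟨p1, p2, p3, p4, p5, p6, p7, p8⟩ := hP M hMm
    have hx' : ∀ i ≤ n + 1, x i ∈ Ioo s1 1 := fun i hi => by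
      obtain ⟨h1, h2⟩ := hx i hi
      refine ⟨?_, h1.2⟩
      by_contra h3
      have := hWs M hMm (x i) ⟨h1.1, not_lt.1 h3⟩
      linarith
    have := count_many p1 p2 p8 p3 (n + 1) x hx' hxm
      (fun i hi => (p6 _ (Ioo_subset_Icc_self (hx' i hi))).1 (hx i hi).2)
    push_cast at this
    show TH m b s1 (U M) (X M) 1 ≤ _
    linarith
  have hhigh : ∃ a, -(n * π) ≤ Θ a := by
    refine ⟨⟨b0, le_rfl, hM.le⟩, ?_⟩
    have hMm : b0 ∈ Icc b0 M := ⟨le_rfl, hM.le⟩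
    obtain ⟨p1, p2, p3, p4, p5, p6, p7, p8⟩ := hP b0 hMm
    show _ ≤ TH m b s1 (U b0) (X b0) 1
    have : 0 ≤ TH m b s1 (U b0) (X b0) 1 := by
      by_contra hneg
      push Not at hneg
      obtain ⟨s, hs, hs0⟩ := intermediate_value_Ioo' hs1.2.le p1 (show (0:ℝ) ∈ Ioo _ _ from ⟨hneg, by linarith⟩)
      have h0 := (p7 s (Ioo_subset_Icc_self hs)).2 (by rw [hs0, sin_zero])
      have hs' : s ∈ Ioc (0:ℝ) 1 := ⟨hs1.1.trans hs.1, hs.2.le⟩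
      unfold ZZ at h0
      rw [(hbase s ⟨hs'.1.le, hs'.2⟩).1, (hbase s ⟨hs'.1.le, hs'.2⟩).2] at h0
      have h1 := ee_pos m hm s hs'
      have h2 := al_pos m hm
      have h3 : 0 < 1 - s := by linarith [hs.2]
      have : 0 < ee m s * (2 * xi m s * 0 + al m * (1 - s) * b0) := by
        rw [mul_zero, zero_add]; positivity
      linarith
    have : 0 ≤ (n:ℝ) * π := by positivity
    linarith
  have : PreconnectedSpace (Icc b0 M) := Subtype.preconnectedSpace isPreconnected_Icc
  obtain ⟨⟨c, hc⟩, hcΘ⟩ := mem_range_of_exists_le_of_exists_ge hΘ hlow hhigh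
  obtain ⟨p1, p2, p3, p4, p5, p6, p7, p8⟩ := hP c hc
  have hc1 : TH m b s1 (U c) (X c) 1 = -(n * π) := hcΘ
  refine ⟨c, U c, X c, hsol c hc, ?_, ?_⟩
  · have h0 := (p7 1 ⟨hs1.2.le, le_rfl⟩).2 (by rw [hc1, sin_neg, sin_nat_mul_pi, neg_zero])
    unfold ZZ at h0
    rw [ee_one m hm, xi_one m hm] at h0
    linarith
  · rw [← count_exact p1 p2 p8 p3 hs1.2 p4 n hc1]
    congr 1
    ext s
    simp only [mem_setOf_eq]
    constructor
    · rintro ⟨h1, h2⟩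
      have h3 : s1 < s := by
        by_contra h3
        have := hWs c hc s ⟨h1.1, not_lt.1 h3⟩
        linarith
      exact ⟨⟨h3, h1.2⟩, (p6 s ⟨h3.le, h1.2.le⟩).1 h2⟩
    · rintro ⟨h1, h2⟩
      exact ⟨⟨hs1.1.trans h1.1, h1.2⟩, (p6 s (Ioo_subset_Icc_self h1)).2 h2⟩

end SS


namespace SS
open Set Real Filter Topology
open scoped ContDiff unitInterval

noncomputable def ta (m : ℕ) (x : ℝ) : ℝ := (1 - x) ^ (al m)
noncomputable def VV (m : ℕ) (U : ℝ → ℝ) (x : ℝ) : ℝ := U (1 - ta m x)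
noncomputable def qq (m : ℕ) (X : ℝ → ℝ) (x : ℝ) : ℝ := X (1 - ta m x) / ta m x

theorem ta_cont (m : ℕ) (hm : 3 ≤ m) : Continuous (ta m) := by
  unfold ta
  exact (continuous_const.sub continuous_id).rpow_const fun _ => Or.inr (al_pos m hm).le

theorem ta_pos (m : ℕ) (x : ℝ) (hx : x < 1) : 0 < ta m x :=
  Real.rpow_pos_of_pos (by linarith) _

theorem ta_lt (m : ℕ) (hm : 3 ≤ m) (x : ℝ) (hx : x ∈ Ioo (0:ℝ) 1) : ta m x < 1 :=
  Real.rpow_lt_one (by linarith [hx.2]) (by linarith [hx.1]) (al_pos m hm)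

theorem ta_pow (m : ℕ) (hm : 3 ≤ m) (x : ℝ) (hx : x ≤ 1) : ta m x ^ m = 1 - x := by
  unfold ta
  rw [← Real.rpow_natCast, ← Real.rpow_mul (by linarith), mul_comm, al_mul m hm, Real.rpow_one]

theorem ta_deriv (m : ℕ) (x : ℝ) (hx : x < 1) :
    HasDerivAt (ta m) (-(al m * ta m x / (1 - x))) x := by
  have h := ((hasDerivAt_id x).const_sub 1).rpow_const (p := al m) (Or.inl (by simp; linarith))
  refine HasDerivAt.congr_deriv h ?_
  simp only [id]
  rw [Real.rpow_sub_one (by linarith)]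
  unfold ta
  ring

theorem xi_ta (m : ℕ) (hm : 3 ≤ m) (x : ℝ) (hx : x ≤ 1) : xi m (1 - ta m x) = x := by
  unfold xi
  rw [sub_sub_cancel, ta_pow m hm x hx, sub_sub_cancel]

theorem V_deriv (m : ℕ) (hm : 3 ≤ m) (c : ℝ) (U X : ℝ → ℝ) (h : Sol m c U X) (x : ℝ)
    (hx : x ∈ Ioo (0:ℝ) 1) : HasDerivAt (VV m U) (qq m X x) x := by
  have h1 := ta_pos m x hx.2
  have h2 := ta_lt m hm x hx
  have h3 := ((ta_deriv m x hx.2).const_sub 1)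
  have h4 := h.dU (1 - ta m x) ⟨by linarith, by linarith⟩
  have h5 := h4.comp x h3
  refine HasDerivAt.congr_deriv h5 ?_
  unfold qq
  obtain ⟨k, rfl⟩ : ∃ k, m = k + 2 := ⟨m - 2, by omega⟩
  rw [sub_sub_cancel, ← ta_pow _ hm x hx.2.le]
  have h6 := al_mul _ hm
  simp only [Nat.add_sub_cancel]
  generalize X (1 - ta (k + 2) x) = y at *
  generalize ta (k + 2) x = t at *
  rw [pow_add]
  field_simp
  rw [mul_comm, ← mul_assoc, mul_comm (al (k+2)), h6]; try ring

theorem q_deriv (m : ℕ) (hm : 3 ≤ m) (c : ℝ) (U X : ℝ → ℝ) (h : Sol m c U X) (x : ℝ)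
    (hx : x ∈ Ioo (0:ℝ) 1) : ∃ d, HasDerivAt (qq m X) d x ∧
      4 * x * (1 - x) * d + (6 - (6 + 4 * al m) * x) * qq m X x = gg m (VV m U x) := by
  have h1 := ta_pos m x hx.2
  have h2 := ta_lt m hm x hx
  have h3 := ((ta_deriv m x hx.2).const_sub 1)
  have h4 := (h.dX (1 - ta m x) ⟨by linarith, by linarith⟩).hasDerivAt (Icc_mem_nhds (by linarith) (by linarith))
  have h5 := (h4.comp x h3).div (ta_deriv m x hx.2) h1.ne'
  refine ⟨_, h5, ?_⟩
  unfold qq VV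
  simp only [Function.comp_def]
  rw [xi_ta m hm x hx.2.le, sub_sub_cancel]
  obtain ⟨k, rfl⟩ : ∃ k, m = k + 1 := ⟨m - 1, by omega⟩
  have h7 := ta_pow _ hm x hx.2.le
  have h6 := al_mul _ hm
  simp only [Nat.add_sub_cancel]
  generalize gg (k + 1) (U (1 - ta (k+1) x)) = g at *
  generalize X (1 - ta (k + 1) x) = y at *
  generalize ta (k + 1) x = t at *
  generalize al (k + 1) = a at *
  generalize ((k+1 : ℕ) : ℝ) = M at *
  have h8 : t ^ k = (1 - x) / t := by rw [eq_div_iff h1.ne', ← pow_succ, h7]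
  rw [h8]
  have hx0 : x ≠ 0 := hx.1.ne'
  have hx1 : 1 - x ≠ 0 := by linarith [hx.2]
  have hM : M ≠ 0 := by rintro rfl; simp at h6
  have ha : a = 1 / M := by field_simp; linarith
  rw [ha]
  field_simp
  ring

theorem q_min_cont (m : ℕ) (hm : 3 ≤ m) (X : ℝ → ℝ) (hX : Continuous X) (h : ℝ) (hh : h < 1) :
    Continuous fun x => qq m X (min x h) := by
  have h1 : Continuous fun x => ta m (min x h) := (ta_cont m hm).comp (continuous_id.min continuous_const)
  unfold qq
  exact (hX.comp (continuous_const.sub h1)).div h1 fun x => (ta_pos m _ ((min_le_right _ _).trans_lt hh)).ne'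

theorem q_min_ev (m : ℕ) (X : ℝ → ℝ) (h x : ℝ) (hx : x < h) :
    (fun x => qq m X (min x h)) =ᶠ[𝓝 x] qq m X := by
  filter_upwards [gt_mem_nhds hx] with y hy
  rw [min_eq_left (le_of_lt hy)]

theorem VV_cont (m : ℕ) (hm : 3 ≤ m) (U : ℝ → ℝ) (hU : Continuous U) : Continuous (VV m U) :=
  hU.comp (continuous_const.sub (ta_cont m hm))

theorem ana_zero (m : ℕ) (hm : 3 ≤ m) (c : ℝ) (U X : ℝ → ℝ) (h : Sol m c U X) :
    ∃ f : ℝ → ℝ, AnalyticAt ℝ f 0 ∧ f 0 = VV m U 0 ∧ ∀ᶠ x in 𝓝[>] 0, VV m U x = f x := by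
  have ht0 : ta m 0 = 1 := by unfold ta; simp
  refine sing_analytic (3/2) (al m) (al m * (al m + 1)) (by norm_num) (2 * m + 1) (1/2) (by norm_num)
    (VV m U) (fun x => qq m X (min x (1/2))) (VV_cont m hm U h.cU) (q_min_cont m hm X h.cX _ (by norm_num))
    ?_ ?_ ?_
  · intro x hx
    rw [min_eq_left hx.2.le]
    exact V_deriv m hm c U X h x ⟨hx.1, by linarith [hx.2]⟩
  · intro x hx
    obtain ⟨d, hd, hd2⟩ := q_deriv m hm c U X h x ⟨hx.1, by linarith [hx.2]⟩
    refine ⟨d, hd.congr_of_eventuallyEq (q_min_ev m X _ x hx.2), ?_⟩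
    unfold gg at hd2
    rw [min_eq_left hx.2.le, ← hd2]; ring
  · rw [min_eq_left (by norm_num)]
    unfold qq VV
    rw [ht0, sub_self, h.X0, h.U0]
    unfold gg
    ring

theorem ana_mid (m : ℕ) (hm : 3 ≤ m) (c : ℝ) (U X : ℝ → ℝ) (h : Sol m c U X) (x0 : ℝ)
    (hx0 : x0 ∈ Ioo (0:ℝ) 1) : AnalyticAt ℝ (VV m U) x0 := by
  obtain ⟨e, he, he1, he2⟩ : ∃ e, 0 < e ∧ 0 ≤ x0 - e ∧ x0 + e < 1 := by
    refine ⟨min x0 ((1 - x0) / 2), lt_min hx0.1 (by linarith [hx0.2]), ?_, ?_⟩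
    · linarith [min_le_left x0 ((1 - x0) / 2)]
    · linarith [min_le_right x0 ((1 - x0) / 2), hx0.2]
  refine reg_analytic x0 (al m) (al m * (al m + 1)) (2 * m + 1) hx0 e he
    (VV m U) (fun x => qq m X (min x (x0 + e))) (VV_cont m hm U h.cU) (q_min_cont m hm X h.cX _ he2)
    ?_ ?_
  · intro x hx
    rw [min_eq_left hx.2.le]
    exact V_deriv m hm c U X h x ⟨by linarith [hx.1], by linarith [hx.2]⟩
  · intro x hx
    obtain ⟨d, hd, hd2⟩ := q_deriv m hm c U X h x ⟨by linarith [hx.1], by linarith [hx.2]⟩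
    refine ⟨d, hd.congr_of_eventuallyEq (q_min_ev m X _ x hx.2), ?_⟩
    unfold gg at hd2
    rw [min_eq_left hx.2.le, ← hd2]

theorem ana_one (m : ℕ) (hm : 3 ≤ m) (c : ℝ) (U X : ℝ → ℝ) (h : Sol m c U X) (hX1 : X 1 = 0) :
    ∃ f : ℝ → ℝ, AnalyticAt ℝ f 0 ∧ f 0 = VV m U 1 ∧ ∀ᶠ x in 𝓝[>] 0, VV m U (1 - x) = f x := by
  have hm0 : (0:ℝ) < m := by exact_mod_cast (by omega : 0 < m)
  have ht1 : ta m 1 = 0 := by unfold ta; rw [sub_self]; exact Real.zero_rpow (al_pos m hm).ne'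
  set d : ℝ := m / 4 * gg m (U 1) with hd
  let F : ℝ → ℝ := fun t => - X (1 - t)
  have hF : HasDerivWithinAt F d (Icc 0 1) 0 := by
    have h1 := h.dX 1 ⟨one_pos, le_rfl⟩
    rw [sub_self, zero_pow (by omega : m - 1 ≠ 0), xi_one m hm] at h1
    have h2 : HasDerivWithinAt X d (Icc 0 1) (1 - 0) := by
      rw [sub_zero]; refine h1.congr_deriv ?_; rw [hd]; ring
    have h3 := (h2.comp (0:ℝ) (((hasDerivAt_id (0:ℝ)).const_sub 1).hasDerivWithinAt (s := Icc 0 1))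
      (fun t ht => ⟨by linarith [ht.2], by linarith [ht.1]⟩)).neg
    refine h3.congr_deriv ?_
    ring
  let Y : ℝ → ℝ := Function.update (fun t => F t / t) 0 d
  have hFc : Continuous F := (h.cX.comp (continuous_const.sub continuous_id)).neg
  have hY : ContinuousOn Y (Icc 0 1) := by
    rw [continuousOn_update_iff]
    refine ⟨hFc.continuousOn.div continuousOn_id fun t ht => ht.2, fun _ => ?_⟩
    rw [hasDerivWithinAt_iff_tendsto_slope] at hF
    refine hF.congr fun t => ?_
    simp only [slope, F, sub_zero, hX1, smul_eq_mul, vsub_eq_sub]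
    rw [neg_zero, sub_zero, div_eq_inv_mul]
  let cl2 : ℝ → ℝ := fun x => max 0 (min x 1)
  have hcl : Continuous cl2 := by fun_prop
  have hclm : ∀ x, cl2 x ∈ Icc (0:ℝ) 1 := fun x => ⟨le_max_left _ _, max_le zero_le_one (min_le_right _ _)⟩
  have hcle : ∀ x ∈ Icc (0:ℝ) 1, cl2 x = x := fun x hx => by
    simp only [cl2]; rw [min_eq_left hx.2, max_eq_right hx.1]
  have htm : ∀ x ∈ Icc (0:ℝ) 1, ta m (1 - x) ∈ Icc (0:ℝ) 1 := by
    intro x hx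
    unfold ta
    rw [sub_sub_cancel]
    exact ⟨Real.rpow_nonneg hx.1 _, Real.rpow_le_one hx.1 hx.2 (al_pos m hm).le⟩
  let q : ℝ → ℝ := fun x => Y (ta m (1 - cl2 x))
  have hq : Continuous q := by
    have h1 : Continuous fun x => ta m (1 - cl2 x) := (ta_cont m hm).comp (continuous_const.sub hcl)
    exact hY.comp_continuous h1 fun x => htm _ (hclm x)
  have hqe : ∀ x ∈ Ioo (0:ℝ) 1, q x = - qq m X (1 - x) := by
    intro x hx
    simp only [q, Y]
    rw [hcle x (Ioo_subset_Icc_self hx), Function.update_of_ne (ta_pos m _ (by linarith [hx.1])).ne']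
    simp only [F, qq]
    ring
  have key := sing_analytic (al m) (3/2) (al m * (al m + 1)) (al_pos m hm) (2 * m + 1) 1 one_pos
    (fun x => VV m U (1 - x)) q ((VV_cont m hm U h.cU).comp (continuous_const.sub continuous_id)) hq
    ?_ ?_ ?_
  · simpa using key
  · intro x hx
    rw [hqe x hx]
    have h1 := (V_deriv m hm c U X h (1 - x) ⟨by linarith [hx.2], by linarith [hx.1]⟩).comp x
      ((hasDerivAt_id x).const_sub 1)
    refine HasDerivAt.congr_deriv h1 ?_
    ring
  · intro x hx
    obtain ⟨d', hd', hd2⟩ := q_deriv m hm c U X h (1 - x) ⟨by linarith [hx.2], by linarith [hx.1]⟩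
    have h1 := (hd'.comp x ((hasDerivAt_id x).const_sub 1)).neg
    refine ⟨_, h1.congr_of_eventuallyEq ?_, ?_⟩
    · filter_upwards [Ioo_mem_nhds hx.1 hx.2] with y hy
      rw [hqe y hy]; rfl
    · unfold gg at hd2
      rw [hqe x hx]
      rw [← hd2]; ring
  · have h1 : q 0 = d := by
      simp only [q, Y]
      rw [hcle 0 ⟨le_rfl, zero_le_one⟩, sub_zero, ht1, Function.update_self]
    have h2 : VV m U (1 - 0) = U 1 := by unfold VV; rw [sub_zero, ht1, sub_zero]
    rw [h1, hd]
    simp only [h2]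
    have := al_mul m hm
    unfold gg
    linear_combination (al m * (al m + 1) * U 1 - U 1 ^ (2 * m + 1)) * this

end SS


namespace SS
open Set Real Filter Topology
open scoped ContDiff unitInterval

theorem build (m : ℕ) (hm : 3 ≤ m) (c : ℝ) (U X : ℝ → ℝ) (h : Sol m c U X) (hX1 : X 1 = 0) :
    ∃ w : ℝ → ℝ, (∀ x ∈ Icc (0:ℝ) 1, AnalyticAt ℝ w x) ∧
      ∀ x ∈ Ioo (0:ℝ) 1, w =ᶠ[𝓝 x] VV m U := by
  obtain ⟨f0, h1, h2, h3⟩ := ana_zero m hm c U X h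
  obtain ⟨f1, g1, g2, g3⟩ := ana_one m hm c U X h hX1
  let w : ℝ → ℝ := fun x => if x ≤ 0 then f0 x else if x < 1 then VV m U x else f1 (1 - x)
  have hw : ∀ x ∈ Ioo (0:ℝ) 1, w x = VV m U x := fun x hx => by
    simp only [w]; rw [if_neg (not_le.2 hx.1), if_pos hx.2]
  have hev : ∀ x ∈ Ioo (0:ℝ) 1, w =ᶠ[𝓝 x] VV m U := fun x hx => by
    filter_upwards [Ioo_mem_nhds hx.1 hx.2] with y hy
    exact hw y hy
  refine ⟨w, fun x hx => ?_, hev⟩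
  rcases eq_or_lt_of_le hx.1 with hx0 | hx0
  · subst hx0
    refine h1.congr ?_
    have h3' := eventually_nhdsWithin_iff.1 h3
    filter_upwards [h3', gt_mem_nhds (zero_lt_one (α := ℝ))] with y hy hy1
    simp only [w]
    split_ifs with h
    · rfl
    · exact (hy (not_le.1 h)).symm
  rcases eq_or_lt_of_le hx.2 with hx1 | hx1
  · subst hx1
    have e1 : AnalyticAt ℝ (fun x : ℝ => f1 (1 - x)) 1 := by
      have : AnalyticAt ℝ (fun x : ℝ => 1 - x) 1 := analyticAt_const.sub analyticAt_id
      exact AnalyticAt.fun_comp (by simpa using g1) this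
    refine e1.congr ?_
    have g3' := eventually_nhdsWithin_iff.1 g3
    have ht : Tendsto (fun x : ℝ => 1 - x) (𝓝 1) (𝓝 0) := by
      have : Continuous fun x : ℝ => 1 - x := by fun_prop
      simpa using this.tendsto 1
    filter_upwards [ht.eventually g3', lt_mem_nhds (zero_lt_one (α := ℝ))] with y hy hy1
    simp only [w]
    rw [if_neg (not_le.2 hy1)]
    split_ifs with h
    · rw [← hy (by simp only [mem_Ioi]; linarith), sub_sub_cancel]
    · rfl
  · exact (ana_mid m hm c U X h x ⟨hx0, hx1⟩).congr (hev x ⟨hx0, hx1⟩).symm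

/-- everything, in terms of `m`. -/
theorem main_m (m : ℕ) (hm : 3 ≤ m) (n : ℕ) (b0 b : ℝ) (hb0 : 0 < b0)
    (hb0m : b0 ^ (2 * m) = al m * (al m + 1)) (hb : 0 < b) (hb1 : b ≤ 1)
    (hbm : b ^ (2 * m) = al m * (1 - al m)) :
    ∃ u : ℝ → ℝ, AnalyticOnNhd ℝ u (Icc 0 1) ∧
      (∀ r ∈ Ioo (0:ℝ) 1, (1 - r ^ 2) * deriv (deriv u) r + (2 / r - (2 + 2 * al m) * r) * deriv u r
        - al m * (al m + 1) * u r + u r ^ (2 * m + 1) = 0) ∧ deriv u 0 = 0 ∧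
      {r ∈ Ioo (0:ℝ) 1 | u r = b * r ^ (-(al m))}.encard = (n + 1 : ℕ∞) := by
  obtain ⟨c, U, X, h, hX1, hcard⟩ := shoot m hm n b0 b hb0 hb0m hb hb1 hbm
  obtain ⟨w, hw, hwV⟩ := build m hm c U X h hX1
  have hsq : ∀ r ∈ Ioo (0:ℝ) 1, r ^ 2 ∈ Ioo (0:ℝ) 1 := fun r hr =>
    ⟨by have := hr.1; positivity, by nlinarith [hr.1, hr.2]⟩
  refine ⟨fun r => w (r ^ 2), ?_, ?_, ?_, ?_⟩
  · intro r hr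
    have h1 := hw (r ^ 2) ⟨by positivity, by nlinarith [hr.1, hr.2]⟩
    exact AnalyticAt.fun_comp h1 (analyticAt_id.pow 2)
  · intro r hr
    have hder : ∀ y ∈ Ioo (0:ℝ) 1, HasDerivAt (fun r => w (r ^ 2)) (2 * y * qq m X (y ^ 2)) y := by
      intro y hy
      have h1 := (V_deriv m hm c U X h (y ^ 2) (hsq y hy)).congr_of_eventuallyEq (hwV _ (hsq y hy))
      have h2 := HasDerivAt.comp (h := fun x : ℝ => x ^ 2) y h1 (hasDerivAt_pow 2 y)
      refine HasDerivAt.congr_deriv h2 ?_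
      push_cast; ring
    obtain ⟨d, hd, hd2⟩ := q_deriv m hm c U X h (r ^ 2) (hsq r hr)
    have hev : deriv (fun r => w (r ^ 2)) =ᶠ[𝓝 r] fun y => 2 * y * qq m X (y ^ 2) := by
      filter_upwards [Ioo_mem_nhds hr.1 hr.2] with y hy
      exact (hder y hy).deriv
    have hd3 : HasDerivAt (fun y => 2 * y * qq m X (y ^ 2)) (2 * qq m X (r ^ 2) + 2 * r * (d * (2 * r))) r := by
      have h2 := HasDerivAt.comp (h := fun x : ℝ => x ^ 2) r hd (hasDerivAt_pow 2 r)
      have h3 := ((hasDerivAt_id r).const_mul 2).mul h2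
      refine HasDerivAt.congr_deriv h3 ?_
      simp
    rw [hev.deriv_eq, hd3.deriv, (hder r hr).deriv]
    have hwe : w (r ^ 2) = VV m U (r ^ 2) := (hwV _ (hsq r hr)).eq_of_nhds
    simp only [hwe]
    unfold gg at hd2
    have hr0 : r ≠ 0 := hr.1.ne'
    have : 2 / r * (2 * r * qq m X (r ^ 2)) = 4 * qq m X (r ^ 2) := by field_simp; ring
    linear_combination hd2 + this
  · have h1 := (hw 0 ⟨le_rfl, zero_le_one⟩).differentiableAt.hasDerivAt
    have h2 := HasDerivAt.comp (h := fun x : ℝ => x ^ 2) (h₂ := w) (h₂' := deriv w 0) (0:ℝ) (by simp only [ne_eq, two_ne_zero, not_false_eq_true, zero_pow]; exact h1) (hasDerivAt_pow 2 (0:ℝ))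
    have h3 := h2.deriv
    simp only [Function.comp_def] at h3
    rw [h3]; simp
  · rw [← hcard]
    have himg : {s ∈ Ioo (0:ℝ) 1 | WW m U s = b} = (fun r : ℝ => 1 - ta m (r ^ 2)) ''
        {r ∈ Ioo (0:ℝ) 1 | w (r ^ 2) = b * r ^ (-(al m))} := by
      have key : ∀ r ∈ Ioo (0:ℝ) 1, (w (r ^ 2) = b * r ^ (-(al m)) ↔ WW m U (1 - ta m (r ^ 2)) = b) := by
        intro r hr
        rw [(hwV _ (hsq r hr)).eq_of_nhds]
        have h1 : ee m (1 - ta m (r ^ 2)) = r ^ (al m) := by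
          unfold ee
          rw [xi_ta m hm _ (hsq r hr).2.le, ← Real.rpow_natCast, ← Real.rpow_mul hr.1.le]
          congr 1; push_cast; ring
        unfold WW VV
        rw [h1, Real.rpow_neg hr.1.le]
        have h2 : 0 < r ^ (al m) := Real.rpow_pos_of_pos hr.1 _
        rw [← div_eq_mul_inv, eq_div_iff h2.ne', mul_comm]
      ext s
      constructor
      · rintro ⟨hs, hsb⟩
        have hx1 := xi_pos m (by omega) s ⟨hs.1, hs.2.le⟩
        have hx2 : xi m s < 1 := by
          unfold xi
          have : 0 < (1 - s) ^ m := pow_pos (by linarith [hs.2]) m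
          linarith
        have hr : √(xi m s) ∈ Ioo (0:ℝ) 1 :=
          ⟨Real.sqrt_pos.2 hx1, by rw [Real.sqrt_lt' one_pos]; simpa using hx2⟩
        have hs' : 1 - ta m (√(xi m s) ^ 2) = s := by
          rw [Real.sq_sqrt hx1.le]
          unfold ta xi
          rw [sub_sub_cancel, ← Real.rpow_natCast, ← Real.rpow_mul (by linarith [hs.2]), al_mul m hm,
            Real.rpow_one, sub_sub_cancel]
        exact ⟨√(xi m s), ⟨hr, (key _ hr).2 (by rw [hs']; exact hsb)⟩, hs'⟩
      · rintro ⟨r, ⟨hr, hrb⟩, rfl⟩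
        have h1 := ta_pos m (r ^ 2) (hsq r hr).2
        have h2 := ta_lt m hm (r ^ 2) (hsq r hr)
        exact ⟨⟨by linarith, by linarith⟩, (key r hr).1 hrb⟩
    rw [himg]
    refine (InjOn.encard_image ?_).symm
    rintro r ⟨hr, -⟩ r' ⟨hr', -⟩ hrr
    have h1 := xi_ta m hm _ (hsq r hr).2.le
    have h2 := xi_ta m hm _ (hsq r' hr').2.le
    simp only at hrr
    rw [hrr, h2] at h1
    exact (pow_left_inj₀ hr.1.le hr'.1.le two_ne_zero).1 h1.symm

end SS

theorem SS.root_pow (m : ℕ) (hm : 3 ≤ m) (x : ℝ) (hx : 0 < x) :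
    (x ^ ((1:ℝ) / (((2 * m + 1 : ℕ) : ℝ) - 1))) ^ (2 * m) = x := by
  have hm0 : (0:ℝ) < m := by exact_mod_cast (by omega : 0 < m)
  rw [← Real.rpow_natCast, ← Real.rpow_mul hx.le]
  push_cast
  rw [show 1 / (2 * (m:ℝ) + 1 - 1) * (2 * m) = 1 by field_simp; ring, Real.rpow_one]

/-- For odd `p ≥ 7` and any `n ≥ 0` there is a solution of the
self-similar profile equation, real-analytic on a neighborhood of `[0,1]`, with
`u'(0) = 0`, whose graph meets the singular solution `u∞` exactly `n+1` times in `(0,1)`. -/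
theorem self_similar_solutions_exist (p : ℕ) (hp_odd : Odd p) (hp : 7 ≤ p) (n : ℕ) :
    ∃ u : ℝ → ℝ, AnalyticOnNhd ℝ u (Icc 0 1) ∧
      (∀ ρ ∈ Ioo (0 : ℝ) 1, ProfileEq p u ρ) ∧
      deriv u 0 = 0 ∧
      {ρ ∈ Ioo (0 : ℝ) 1 | u ρ = uInfty p ρ}.encard = (n + 1 : ℕ∞) := by
  obtain ⟨m, rfl⟩ := hp_odd
  have hm : 3 ≤ m := by omega
  have hm0 : (3:ℝ) ≤ m := by exact_mod_cast hm
  have hal : alphaP (2 * m + 1) = SS.al m := by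
    unfold alphaP SS.al; push_cast; field_simp; ring
  have ha := SS.al_pos m hm
  have ha3 := SS.al_le m hm
  have e1 : 2 * (((2 * m + 1 : ℕ) : ℝ) + 1) / (((2 * m + 1 : ℕ) : ℝ) - 1) ^ 2 = SS.al m * (SS.al m + 1) := by
    unfold SS.al; push_cast; field_simp; ring
  have e2 : 2 * (((2 * m + 1 : ℕ) : ℝ) - 3) / (((2 * m + 1 : ℕ) : ℝ) - 1) ^ 2 = SS.al m * (1 - SS.al m) := by
    unfold SS.al; push_cast; field_simp; ring
  have p1 : 0 < SS.al m * (SS.al m + 1) := by positivity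
  have p2 : 0 < SS.al m * (1 - SS.al m) := mul_pos ha (by linarith)
  have h0 : bZero (2 * m + 1) ^ (2 * m) = SS.al m * (SS.al m + 1) := by
    unfold bZero; rw [e1]; exact SS.root_pow m hm _ p1
  have h1 : bInfty (2 * m + 1) ^ (2 * m) = SS.al m * (1 - SS.al m) := by
    unfold bInfty; rw [e2]; exact SS.root_pow m hm _ p2
  have q0 : 0 < bZero (2 * m + 1) := by
    unfold bZero; rw [e1]; exact Real.rpow_pos_of_pos p1 _
  have q1 : 0 < bInfty (2 * m + 1) := by
    unfold bInfty; rw [e2]; exact Real.rpow_pos_of_pos p2 _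
  have q2 : bInfty (2 * m + 1) ≤ 1 := by
    by_contra hc
    have := one_lt_pow₀ (not_le.1 hc) (n := 2 * m) (by omega)
    rw [h1] at this
    nlinarith
  obtain ⟨u, u1, u2, u3, u4⟩ := SS.main_m m hm n _ _ q0 h0 q1 q2 h1
  refine ⟨u, u1, fun r hr => ?_, u3, ?_⟩
  · unfold ProfileEq; rw [hal]; exact u2 r hr
  · unfold uInfty; rw [hal]; exact u4
end

section
/- Let p ≥ 7 be an odd integer. If u : [0,1] → ℝ is real-analytic on a neighborhood of [0,1], satisfies the self-similar profile equation (1−ρ²)u''(ρ) + (2/ρ − (2+2α)ρ)u'(ρ) − α(α+1)u(ρ) + u(ρ)^p = 0 for all ρ ∈ (0,1), satisfies u'(0) = 0, and u(0) > b₀, then u(1) < b₀. -/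
open Set Real Filter

section helpers

variable {p : ℕ} {u : ℝ → ℝ} {a b : ℝ}

/-- Derivative of the (reduced) Pohozaev-type functional. -/
lemma aux_K {x u0 u1 u2 : ℝ} (hx : x ≠ 0) (hap : ((p : ℝ) - 1) * a = 2)
    (hode : (1 - x ^ 2) * u2 + (2 / x - (2 + 2 * a) * x) * u1 - a * (a + 1) * u0 + u0 ^ p = 0) :
    2 * a * ((1 - x ^ 2) * (x * u1 + a * u0) ^ 2 / 2 + x ^ 2 * (u0 ^ (p + 1) / (p + 1))
        - a * (1 - a) * u0 ^ 2 / 2)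
      + x * ((1 - x ^ 2) * (x * u1 + a * u0) * (x * u2 + (1 + a) * u1)
        - x * (x * u1 + a * u0) ^ 2 + 2 * x * (u0 ^ (p + 1) / (p + 1)) + x ^ 2 * (u0 ^ p * u1)
        - a * (1 - a) * u0 * u1) = -(1 - 2 * a) * (x * u1 + a * u0) ^ 2 := by
  have hp1 : ((p : ℝ) + 1) ≠ 0 := by positivity
  have hq : (2 * a + 2) * (u0 ^ (p + 1) / (p + 1)) = a * (u0 ^ p * u0) := by
    rw [pow_succ]; field_simp; linear_combination -u0 ^ p * u0 * hap
  have hode' : x * ((1 - x ^ 2) * u2) + (2 - (2 + 2 * a) * x ^ 2) * u1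
      + x * (- a * (a + 1) * u0 + u0 ^ p) = 0 := by
    have : x * (2 / x) = 2 := by field_simp
    linear_combination x * hode - u1 * this
  linear_combination x ^ 2 * hq + x * (x * u1 + a * u0) * hode'

lemma pos_on (ha0 : 0 < a) (ha1 : a ≤ 1 / 3) (hap : ((p : ℝ) - 1) * a = 2)
    (hu : AnalyticOnNhd ℝ u (Icc 0 1))
    (hode : ∀ x ∈ Ioo (0 : ℝ) 1, (1 - x ^ 2) * deriv (deriv u) x
      + (2 / x - (2 + 2 * a) * x) * deriv u x - a * (a + 1) * u x + u x ^ p = 0)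
    (h0 : 0 < u 0) : ∀ x ∈ Ioo (0 : ℝ) 1, 0 < u x := by
  have hd1 : ∀ x ∈ Icc (0 : ℝ) 1, HasDerivAt u (deriv u x) x :=
    fun x hx => (hu x hx).differentiableAt.hasDerivAt
  have hd2 : ∀ x ∈ Icc (0 : ℝ) 1, HasDerivAt (deriv u) (deriv (deriv u) x) x :=
    fun x hx => (hu x hx).deriv.differentiableAt.hasDerivAt
  set K : ℝ → ℝ := fun x => (1 - x ^ 2) * (x * deriv u x + a * u x) ^ 2 / 2
    + x ^ 2 * (u x ^ (p + 1) / (p + 1)) - a * (1 - a) * u x ^ 2 / 2 with hK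
  have hp1 : ((p : ℝ) + 1) ≠ 0 := by positivity
  have hKd : ∀ x ∈ Icc (0 : ℝ) 1, HasDerivAt K
      ((1 - x ^ 2) * (x * deriv u x + a * u x) * (x * deriv (deriv u) x + (1 + a) * deriv u x)
        - x * (x * deriv u x + a * u x) ^ 2 + 2 * x * (u x ^ (p + 1) / (p + 1))
        + x ^ 2 * (u x ^ p * deriv u x) - a * (1 - a) * u x * deriv u x) x := by
    intro x hx
    have e1 := hd1 x hx
    have e2 := hd2 x hx
    have i := hasDerivAt_id x
    have := ((((i.pow 2).const_sub 1).mul ((((i.mul e2).add (e1.const_mul a))).pow 2)).div_const 2).add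
      ((i.pow 2).mul ((e1.pow (p + 1)).div_const ((p : ℝ) + 1))) |>.sub
      (((e1.pow 2).const_mul (a * (1 - a))).div_const 2)
    refine this.congr_deriv ?_
    simp
    field_simp
    ring
  have hH : AntitoneOn (fun x => x ^ (2 * a) * K x) (Ioo 0 1) := by
    refine antitoneOn_of_hasDerivWithinAt_nonpos (f' := fun x => -(1 - 2 * a) * (x * deriv u x + a * u x) ^ 2 * x ^ (2 * a - 1)) (convex_Ioo 0 1) ?_ ?_ ?_
    · intro x hx
      exact ((Real.continuousAt_rpow_const _ _ (Or.inl hx.1.ne')).mul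
        (hKd x (Ioo_subset_Icc_self hx)).continuousAt).continuousWithinAt
    · intro x hx
      rw [interior_Ioo] at hx
      have := (Real.hasDerivAt_rpow_const (p := 2 * a) (Or.inl hx.1.ne')).mul
        (hKd x (Ioo_subset_Icc_self hx))
      refine (this.congr_deriv ?_).hasDerivWithinAt
      have hk := aux_K hx.1.ne' hap (hode x hx)
      have hr : x ^ (2 * a) = x ^ (2 * a - 1) * x := by
        rw [Real.rpow_sub_one hx.1.ne']; field_simp [hx.1.ne']
      rw [← hk, hr, hK]
      ring
    · intro x hx
      rw [interior_Ioo] at hx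
      have := Real.rpow_nonneg hx.1.le (2 * a - 1)
      have h3 : 0 ≤ (1 - 2 * a) := by linarith
      have := mul_nonneg (mul_nonneg h3 (sq_nonneg (x * deriv u x + a * u x))) this
      linarith
  have hK0 : K 0 < 0 := by
    have : K 0 = - (a * (1 - 2 * a) * u 0 ^ 2 / 2) := by simp [hK]; ring
    rw [this]
    have : 0 < 1 - 2 * a := by linarith
    have : 0 < a * (1 - 2 * a) * u 0 ^ 2 / 2 := by positivity
    linarith
  have hKneg : ∀ x ∈ Ioo (0 : ℝ) 1, K x < 0 := by
    intro x hx
    have hc : ContinuousAt K 0 := (hKd 0 (by simp)).continuousAt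
    have h1 : ∀ᶠ y in nhdsWithin 0 (Ioi 0), K y < 0 :=
      (hc.eventually (gt_mem_nhds hK0)).filter_mono nhdsWithin_le_nhds
    have h2 : ∀ᶠ y in nhdsWithin (0 : ℝ) (Ioi 0), y ∈ Ioo 0 x := Ioo_mem_nhdsGT hx.1
    obtain ⟨y, hy1, hy2⟩ := (h1.and h2).exists
    have h3 := hH ⟨hy2.1, hy2.2.trans hx.2⟩ hx hy2.2.le
    simp only at h3
    have h4 := mul_neg_of_pos_of_neg (Real.rpow_pos_of_pos hy2.1 (2 * a)) hy1
    have h5 := Real.rpow_pos_of_pos hx.1 (2 * a)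
    by_contra h6
    have := mul_nonneg h5.le (not_lt.mp h6)
    linarith
  have hne : ∀ x ∈ Ioo (0 : ℝ) 1, u x ≠ 0 := by
    intro x hx h
    have h1 := hKneg x hx
    have h2 : K x = (1 - x ^ 2) * (x * deriv u x) ^ 2 / 2 := by simp [hK, h]
    have h3 : 0 ≤ 1 - x ^ 2 := by nlinarith [hx.1, hx.2]
    have : 0 ≤ K x := by rw [h2]; positivity
    linarith
  intro x hx
  by_contra h
  have hcont : ContinuousOn u (Icc 0 x) := fun y hy =>
    (hd1 y ⟨hy.1, hy.2.trans hx.2.le⟩).continuousAt.continuousWithinAt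
  obtain ⟨y, hy, hy0⟩ := intermediate_value_Icc' hx.1.le hcont ⟨not_lt.mp h, h0.le⟩
  rcases hy.1.eq_or_lt with h' | h'
  · rw [← h'] at hy0; linarith
  · exact hne y ⟨h', hy.2.trans_lt hx.2⟩ hy0

/-- If `u` stays above `b` then contradiction. -/
lemma caseA (ha0 : 0 < a) (hb : 0 < b) (hp : 7 ≤ p)
    (hba : b ^ (p - 1) = a * (a + 1))
    (hu : AnalyticOnNhd ℝ u (Icc 0 1))
    (hode : ∀ x ∈ Ioo (0 : ℝ) 1, (1 - x ^ 2) * deriv (deriv u) x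
      + (2 / x - (2 + 2 * a) * x) * deriv u x - a * (a + 1) * u x + u x ^ p = 0)
    (h0 : b < u 0) (hge : ∀ x ∈ Ioo (0 : ℝ) 1, b ≤ u x) : False := by
  have hd1 : ∀ x ∈ Icc (0 : ℝ) 1, HasDerivAt u (deriv u x) x :=
    fun x hx => (hu x hx).differentiableAt.hasDerivAt
  have hd2 : ∀ x ∈ Icc (0 : ℝ) 1, HasDerivAt (deriv u) (deriv (deriv u) x) x :=
    fun x hx => (hu x hx).deriv.differentiableAt.hasDerivAt
  have hpow : ∀ t : ℝ, t ^ p = t ^ (p - 1) * t := by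
    intro t; rw [← pow_succ]; congr 1; omega
  have hQ : AntitoneOn (fun x : ℝ => x ^ 2 * (1 - x ^ 2) ^ a * deriv u x) (Icc 0 1) := by
    refine antitoneOn_of_hasDerivWithinAt_nonpos
      (f' := fun x => -(x ^ 2 * (1 - x ^ 2) ^ (a - 1) * (u x ^ p - a * (a + 1) * u x)))
      (convex_Icc 0 1) ?_ ?_ ?_
    · intro x hx
      refine ContinuousAt.continuousWithinAt ?_
      refine ContinuousAt.mul (ContinuousAt.mul (by fun_prop) ?_) (hd2 x hx).continuousAt
      exact ContinuousAt.rpow_const (by fun_prop) (Or.inr ha0.le)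
    · intro x hx
      rw [interior_Icc] at hx
      have hx1 : 0 < 1 - x ^ 2 := by nlinarith [hx.1, hx.2]
      have i := hasDerivAt_id x
      have := (((i.pow 2).mul (((i.pow 2).const_sub 1).rpow_const (p := a) (Or.inl hx1.ne'))).mul
        (hd2 x (Ioo_subset_Icc_self hx)))
      refine (this.congr_deriv ?_).hasDerivWithinAt
      have hr : (1 - x ^ 2) ^ a = (1 - x ^ 2) ^ (a - 1) * (1 - x ^ 2) := by
        rw [Real.rpow_sub_one hx1.ne']; field_simp
      have hode' : x * ((1 - x ^ 2) * deriv (deriv u) x) + (2 - (2 + 2 * a) * x ^ 2) * deriv u x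
          + x * (- a * (a + 1) * u x + u x ^ p) = 0 := by
        have h2 : x * (2 / x) = 2 := by field_simp [hx.1.ne']
        linear_combination x * hode x hx - deriv u x * h2
      simp
      rw [hr]
      linear_combination x * (1 - x ^ 2) ^ (a - 1) * hode'
    · intro x hx
      rw [interior_Icc] at hx
      have hx1 : 0 < 1 - x ^ 2 := by nlinarith [hx.1, hx.2]
      have h1 := hge x hx
      have h2 : b ^ (p - 1) ≤ u x ^ (p - 1) := pow_le_pow_left₀ hb.le h1 _
      have h3 : 0 ≤ u x ^ p - a * (a + 1) * u x := by
        rw [hpow, ← hba, ← sub_mul]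
        exact mul_nonneg (by linarith) (by linarith)
      have := Real.rpow_nonneg hx1.le (a - 1)
      have : 0 ≤ x ^ 2 * (1 - x ^ 2) ^ (a - 1) * (u x ^ p - a * (a + 1) * u x) := by positivity
      linarith
  have hz : ∀ x ∈ Ioo (0 : ℝ) 1, deriv u x = 0 := by
    intro x hx
    have hx1 : 0 < 1 - x ^ 2 := by nlinarith [hx.1, hx.2]
    have h1 := hQ (by simp) (Ioo_subset_Icc_self hx) hx.1.le
    have h2 := hQ (Ioo_subset_Icc_self hx) (by simp) hx.2.le
    simp [Real.zero_rpow ha0.ne'] at h1 h2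
    have h3 : 0 < x ^ 2 * (1 - x ^ 2) ^ a :=
      mul_pos (pow_pos hx.1 2) (Real.rpow_pos_of_pos hx1 a)
    exact (mul_eq_zero.mp (le_antisymm h1 h2)).resolve_left h3.ne'
  have hconst : u (1 / 2) = u 0 := by
    obtain ⟨c, hc, hc2⟩ := exists_deriv_eq_slope u (a := 0) (b := 1 / 2) (by norm_num)
      (fun y hy => (hd1 y ⟨hy.1, hy.2.trans (by norm_num)⟩).continuousAt.continuousWithinAt)
      (fun y hy => (hd1 y ⟨hy.1.le, hy.2.le.trans (by norm_num)⟩).differentiableAt.differentiableWithinAt)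
    rw [hz c ⟨hc.1, hc.2.trans (by norm_num)⟩] at hc2
    norm_num at hc2
    norm_num
    linarith
  have hmem : (1 / 2 : ℝ) ∈ Ioo (0 : ℝ) 1 := by norm_num
  have hdd : deriv (deriv u) (1 / 2) = 0 := by
    have : deriv u =ᶠ[nhds (1 / 2)] fun _ => 0 := by
      filter_upwards [Ioo_mem_nhds hmem.1 hmem.2] with y hy using hz y hy
    rw [this.deriv_eq]; simp
  have h1 := hode _ hmem
  rw [hz _ hmem, hdd, hconst, hpow, ← hba] at h1
  have h2 : b ^ (p - 1) < u 0 ^ (p - 1) := pow_lt_pow_left₀ h0 hb.le (by omega)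
  have h3 : 0 < (u 0 ^ (p - 1) - b ^ (p - 1)) * u 0 := mul_pos (by linarith) (by linarith)
  linarith

lemma caseB (ha0 : 0 < a) (ha1 : a ≤ 1 / 3) (hap : ((p : ℝ) - 1) * a = 2) (hb : 0 < b)
    (hp : 7 ≤ p) (hba : b ^ (p - 1) = a * (a + 1))
    (hu : AnalyticOnNhd ℝ u (Icc 0 1))
    (hode : ∀ x ∈ Ioo (0 : ℝ) 1, (1 - x ^ 2) * deriv (deriv u) x
      + (2 / x - (2 + 2 * a) * x) * deriv u x - a * (a + 1) * u x + u x ^ p = 0)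
    {r s : ℝ} (hr : 0 < r) (hrs : r < s) (hs : s ≤ 1) (hur : u r = b) (hus : u s = b)
    (hlt : ∀ x ∈ Ioo r s, 0 < u x ∧ u x < b) : False := by
  have hd1 : ∀ x ∈ Icc (0 : ℝ) 1, HasDerivAt u (deriv u x) x :=
    fun x hx => (hu x hx).differentiableAt.hasDerivAt
  have hd2 : ∀ x ∈ Icc (0 : ℝ) 1, HasDerivAt (deriv u) (deriv (deriv u) x) x :=
    fun x hx => (hu x hx).deriv.differentiableAt.hasDerivAt
  have hpow : ∀ t : ℝ, t ^ p = t ^ (p - 1) * t := by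
    intro t; rw [← pow_succ]; congr 1; omega
  have hbern : ∀ t : ℝ, 0 < t → 0 ≤ t ^ p - a * (a + 1) * t + 2 * (1 + a) * (b - t) := by
    intro t ht
    have h1 := one_add_mul_le_pow (a := t / b - 1) (by have := div_pos ht hb; linarith) p
    have h2 : (1 + (t / b - 1)) ^ p = t ^ p / b ^ p := by rw [← div_pow]; congr 1; ring
    rw [h2, le_div_iff₀ (pow_pos hb p)] at h1
    have h3 : (1 + (p : ℝ) * (t / b - 1)) * b ^ p
        = a * (a + 1) * (b + p * (t - b)) := by
      rw [hpow b, hba]; field_simp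
    rw [h3] at h1
    nlinarith [h1, congrArg (fun z => z * ((a + 1) * (t - b))) hap]
  set P : ℝ → ℝ := fun x => -(x ^ 2 * (2 * (1 - a) * x * (b - u x) - (1 - x ^ 2) * deriv u x)) with hP
  have hPd : ∀ x ∈ Icc (0 : ℝ) 1, HasDerivAt P
      (-(2 * x * (2 * (1 - a) * x * (b - u x) - (1 - x ^ 2) * deriv u x)
        + x ^ 2 * (2 * (1 - a) * (b - u x) - 2 * (1 - a) * x * deriv u x + 2 * x * deriv u x
          - (1 - x ^ 2) * deriv (deriv u) x))) x := by
    intro x hx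
    have e1 := hd1 x hx
    have e2 := hd2 x hx
    have i := hasDerivAt_id x
    have := ((i.pow 2).mul (((i.const_mul (2 * (1 - a))).mul (e1.const_sub b)).sub
      (((i.pow 2).const_sub 1).mul e2))).neg
    refine this.congr_deriv ?_
    simp only [Pi.mul_apply, Pi.sub_apply, Pi.pow_apply, id]
    push_cast
    ring
  have hanti : StrictAntiOn P (Icc r s) := by
    refine strictAntiOn_of_hasDerivWithinAt_neg (convex_Icc r s) ?_
      (fun x hx => (hPd x ?_).hasDerivWithinAt) ?_
    · intro x hx
      exact (hPd x ⟨hr.le.trans hx.1, hx.2.trans hs⟩).continuousAt.continuousWithinAt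
    · rw [interior_Icc] at hx
      exact ⟨hr.le.trans hx.1.le, hx.2.le.trans hs⟩
    · intro x hx
      rw [interior_Icc] at hx
      have hx01 : x ∈ Ioo (0 : ℝ) 1 := ⟨hr.trans hx.1, hx.2.trans_le hs⟩
      obtain ⟨l1, l2⟩ := hlt x hx
      have hB := hbern _ l1
      have hode' : x * ((1 - x ^ 2) * deriv (deriv u) x) + (2 - (2 + 2 * a) * x ^ 2) * deriv u x
          + x * (- a * (a + 1) * u x + u x ^ p) = 0 := by
        have h2 : x * (2 / x) = 2 := by field_simp [hx01.1.ne']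
        linear_combination x * hode x hx01 - deriv u x * h2
      have hx2 : 0 < x ^ 2 := pow_pos hx01.1 2
      have h4 : 0 < (4 - 8 * a) * (b - u x) := mul_pos (by linarith) (by linarith)
      have h5 : 0 < x ^ 2 * ((4 - 8 * a) * (b - u x)
        + (u x ^ p - a * (a + 1) * u x + 2 * (1 + a) * (b - u x))) := mul_pos hx2 (by linarith)
      refine lt_of_eq_of_lt ?_ (neg_neg_of_pos h5)
      linear_combination x * hode'
  have hlow : deriv u r ≤ 0 := by
    by_contra hneg
    have h1 := (hd1 r ⟨hr.le, hrs.le.trans hs⟩).tendsto_slope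
    have h2 : ∀ᶠ y in nhdsWithin r (Ioi r), 0 < slope u r y :=
      (h1.eventually (lt_mem_nhds (not_le.mp hneg))).filter_mono
        (nhdsWithin_mono _ (fun y hy => ne_of_gt hy))
    obtain ⟨y, hy1, hy2⟩ := (h2.and (Ioo_mem_nhdsGT hrs)).exists
    rw [slope_def_field, hur] at hy1
    have := div_neg_of_neg_of_pos (sub_neg.mpr (hlt y hy2).2) (sub_pos.mpr hy2.1)
    linarith
  have hhigh : 0 ≤ deriv u s := by
    by_contra hneg
    have h1 := (hd1 s ⟨hr.le.trans hrs.le, hs⟩).tendsto_slope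
    have h2 : ∀ᶠ y in nhdsWithin s (Iio s), slope u s y < 0 :=
      (h1.eventually (gt_mem_nhds (not_le.mp hneg))).filter_mono
        (nhdsWithin_mono _ (fun y hy => ne_of_lt hy))
    obtain ⟨y, hy1, hy2⟩ := (h2.and (Ioo_mem_nhdsLT hrs)).exists
    rw [slope_def_field, hus] at hy1
    have := div_pos_of_neg_of_neg (sub_neg.mpr (hlt y hy2).2) (sub_neg.mpr hy2.2)
    linarith
  have hlt' := hanti (left_mem_Icc.mpr hrs.le) (right_mem_Icc.mpr hrs.le) hrs
  have e1 : P r = r ^ 2 * (1 - r ^ 2) * deriv u r := by simp [hP, hur]; ring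
  have e2 : P s = s ^ 2 * (1 - s ^ 2) * deriv u s := by simp [hP, hus]; ring
  have hr1 : 0 ≤ 1 - r ^ 2 := by nlinarith
  have hs1 : 0 ≤ 1 - s ^ 2 := by nlinarith
  have f1 : P r ≤ 0 := by
    rw [e1]; exact mul_nonpos_of_nonneg_of_nonpos (by positivity) hlow
  have f2 : 0 ≤ P s := by rw [e2]; positivity
  linarith

end helpers

/-- If `u` is analytic on a neighborhood of `[0,1]`, solves the profile
equation on `(0,1)`, has `u'(0) = 0` and `u(0) > b₀`, then `u(1) < b₀`. -/
theorem value_at_one_lt_bZero (p : ℕ) (hp_odd : Odd p) (hp : 7 ≤ p) (u : ℝ → ℝ)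
    (hu : AnalyticOnNhd ℝ u (Icc 0 1))
    (heq : ∀ ρ ∈ Ioo (0 : ℝ) 1, ProfileEq p u ρ)
    (hd0 : deriv u 0 = 0)
    (h0 : bZero p < u 0) :
    u 1 < bZero p := by
  have hpR : (7 : ℝ) ≤ p := by exact_mod_cast hp
  have hp1 : (0 : ℝ) < (p : ℝ) - 1 := by linarith
  have ha0 : 0 < alphaP p := div_pos two_pos hp1
  have hap : ((p : ℝ) - 1) * alphaP p = 2 := by unfold alphaP; field_simp
  have ha1 : alphaP p ≤ 1 / 3 := by
    unfold alphaP; rw [div_le_div_iff₀ hp1 (by norm_num)]; linarith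
  have hbase : 0 < 2 * ((p : ℝ) + 1) / ((p : ℝ) - 1) ^ 2 := by positivity
  have hb : 0 < bZero p := Real.rpow_pos_of_pos hbase _
  have hba : bZero p ^ (p - 1) = alphaP p * (alphaP p + 1) := by
    have hc : ((p - 1 : ℕ) : ℝ) = (p : ℝ) - 1 := by
      rw [Nat.cast_sub (by omega)]; simp
    unfold bZero
    rw [← Real.rpow_natCast, ← Real.rpow_mul hbase.le, hc, one_div, inv_mul_cancel₀ hp1.ne',
      Real.rpow_one]
    unfold alphaP; field_simp; ring
  have hpos := pos_on ha0 ha1 hap hu heq (hb.trans h0)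
  by_contra hcon
  have hcon := not_lt.mp hcon
  have hcont : ∀ x ∈ Icc (0 : ℝ) 1, ContinuousAt u x := fun x hx => (hu x hx).continuousAt
  by_cases hge : ∀ x ∈ Ioo (0 : ℝ) 1, bZero p ≤ u x
  · exact caseA ha0 hb hp hba hu heq h0 hge
  push Not at hge
  obtain ⟨m, hm, hmb⟩ := hge
  have hcO : ContinuousOn u (Icc 0 1) := fun x hx => (hcont x hx).continuousWithinAt
  have k1 : IsCompact (Icc 0 m ∩ u ⁻¹' Ici (bZero p)) :=
    isCompact_Icc.of_isClosed_subset
      ((hcO.mono (Icc_subset_Icc_right hm.2.le)).preimage_isClosed_of_isClosed isClosed_Icc isClosed_Ici)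
      inter_subset_left
  have k2 : IsCompact (Icc m 1 ∩ u ⁻¹' Ici (bZero p)) :=
    isCompact_Icc.of_isClosed_subset
      ((hcO.mono (Icc_subset_Icc_left hm.1.le)).preimage_isClosed_of_isClosed isClosed_Icc isClosed_Ici)
      inter_subset_left
  obtain ⟨r, ⟨hr1, hr2⟩, hr3⟩ := k1.exists_isGreatest ⟨0, ⟨le_rfl, hm.1.le⟩, h0.le⟩
  obtain ⟨s, ⟨hs1, hs2⟩, hs3⟩ := k2.exists_isLeast ⟨1, ⟨hm.2.le, le_rfl⟩, hcon⟩
  simp only [mem_preimage, mem_Ici] at hr2 hs2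
  have hrm : r < m := lt_of_le_of_ne hr1.2 (by rintro rfl; linarith)
  have hms : m < s := lt_of_le_of_ne hs1.1 (by rintro rfl; linarith)
  have hlt : ∀ x ∈ Ioo r s, u x < bZero p := by
    intro x hx
    by_contra h
    have h := not_lt.mp h
    rcases le_total x m with h' | h'
    · have := hr3 ⟨⟨hr1.1.trans hx.1.le, h'⟩, h⟩
      linarith [hx.1]
    · have := hs3 ⟨⟨h', hx.2.le.trans hs1.2⟩, h⟩
      linarith [hx.2]
  have hur : u r = bZero p := by
    refine le_antisymm ?_ hr2
    refine le_of_tendsto ((hcont r ⟨hr1.1, hr1.2.trans hm.2.le⟩).mono_left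
      (nhdsWithin_le_nhds (s := Ioi r))) ?_
    filter_upwards [Ioo_mem_nhdsGT (hrm.trans hms)] with y hy using (hlt y hy).le
  have hus : u s = bZero p := by
    refine le_antisymm ?_ hs2
    refine le_of_tendsto ((hcont s ⟨hm.1.le.trans hs1.1, hs1.2⟩).mono_left
      (nhdsWithin_le_nhds (s := Iio s))) ?_
    filter_upwards [Ioo_mem_nhdsLT (hrm.trans hms)] with y hy using (hlt y hy).le
  have hr0 : 0 < r := lt_of_le_of_ne hr1.1 (by rintro rfl; linarith)
  exact caseB ha0 ha1 hap hb hp hba hu heq hr0 (hrm.trans hms) hs1.2 hur hus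
    (fun x hx => ⟨hpos x ⟨hr0.trans hx.1, hx.2.trans_le hs1.2⟩, hlt x hx⟩)
end
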